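/- arXiv:2207.06575 — 4 statements merged into one kernel-verified Lean document; each statement's English description precedes it below -/
import Mathlib

section
/- Let p be a prime with p ≠ 3, and let F be a finite extension of ℚ_p that contains a primitive cube root of unity. Then the number ν(F,S₃) of Galois extensions of F (inside a fixed algebraic closure of F) whose Galois group is isomorphic to the symmetric group S₃ equals 0. -/
/-- `nu F G` is the number of intermediate fields `K` of a fixed algebraic closure of `F`
such that `K/F` is a finite Galois extension with Galois group isomorphic to `G`. -/
noncomputable def nu (F : Type*) [Field F] (G : Type*) [Group G] : ℕ :=
  Nat.card {K : IntermediateField F (AlgebraicClosure F) //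
    FiniteDimensional F K ∧ IsGalois F K ∧ Nonempty ((K ≃ₐ[F] K) ≃* G)}


open scoped NormedField Valued in
lemma finite_residue_aux {E : Type*} [NontriviallyNormedField E] [IsUltrametricDist E]
    [ProperSpace E] : Finite 𝓀[E] := by
  have h1 : IsCompact ((𝒪[E] : Subring E) : Set E) := by
    convert isCompact_closedBall (0:E) 1 using 1
    ext x
    simp only [SetLike.mem_coe, Valued.integer.mem_iff, mem_closedBall_zero_iff]
  have h2 : CompactSpace 𝒪[E] := isCompact_iff_compactSpace.1 h1
  have h3 : IsOpen (((𝓂[E]).toAddSubgroup : AddSubgroup 𝒪[E]) : Set 𝒪[E]) := by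
    have : (((𝓂[E]).toAddSubgroup : AddSubgroup 𝒪[E]) : Set 𝒪[E]) = {x : 𝒪[E] | ‖(x:E)‖ < 1} := by
      ext x
      have hx := Valued.integer.norm_le_one x
      have : x ∈ 𝓂[E] ↔ ‖(x:E)‖ < 1 := by
        rw [IsLocalRing.mem_maximalIdeal, mem_nonunits_iff, Valued.integer.isUnit_iff_norm_eq_one]
        exact ⟨fun h => lt_of_le_of_ne hx h, fun h => ne_of_lt h⟩
      exact this
    rw [this]
    exact isOpen_lt (by fun_prop) (by fun_prop)
  exact AddSubgroup.quotient_finite_of_isOpen _ h3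

lemma pow_sub_one_aux {E : Type*} [NormedField E] [IsUltrametricDist E] (p : ℕ) (s : E)
    (c : ℝ) (hs : ‖s - 1‖ ≤ c) (hpc : ‖(p:E)‖ ≤ c) (hc : c ≤ 1) :
    ‖s ^ p - 1‖ ≤ c * ‖s - 1‖ := by
  have hc0 : 0 ≤ c := (norm_nonneg _).trans hs
  have hs1 : ‖s‖ ≤ 1 := by
    have : s = (s - 1) + 1 := by ring
    rw [this]
    exact (IsUltrametricDist.norm_add_le_max _ _).trans (max_le (hs.trans hc) (by simp))
  have hg : ∀ n : ℕ, ‖∑ i ∈ Finset.range n, s ^ i‖ ≤ 1 := fun n =>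
    IsUltrametricDist.norm_sum_le_of_forall_le_of_nonneg zero_le_one
      (fun i _ => by rw [norm_pow]; exact pow_le_one₀ (norm_nonneg _) hs1)
  have key : ‖∑ i ∈ Finset.range p, s ^ i‖ ≤ c := by
    have : ∑ i ∈ Finset.range p, s ^ i = (p : E) + ∑ i ∈ Finset.range p, (s ^ i - 1) := by
      simp
    rw [this]
    refine (IsUltrametricDist.norm_add_le_max _ _).trans (max_le hpc ?_)
    refine IsUltrametricDist.norm_sum_le_of_forall_le_of_nonneg hc0 (fun i _ => ?_)
    rw [← geom_sum_mul, norm_mul]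
    calc _ ≤ 1 * c := mul_le_mul (hg i) hs (norm_nonneg _) zero_le_one
      _ = c := one_mul c
  rw [← geom_sum_mul, norm_mul]
  exact mul_le_mul_of_nonneg_right key (norm_nonneg _)

lemma one_unit_cube {E : Type*} [NontriviallyNormedField E] [IsUltrametricDist E]
    [CompleteSpace E] (p : ℕ) (hp : p.Prime) (hp3 : p ≠ 3) (hpn : ‖(p:E)‖ < 1)
    (h3 : (3:E) ≠ 0) (t : E) (ht : ‖t - 1‖ < 1) : ∃ y : E, y ^ 3 = t := by
  set c := max ‖t - 1‖ ‖(p:E)‖ with hcdef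
  have hc : c < 1 := max_lt ht hpn
  have hc0 : 0 ≤ c := (norm_nonneg _).trans (le_max_left _ _)
  have hb : ∀ m : ℕ, ‖t ^ (p ^ m) - 1‖ ≤ c ^ (m + 1) := by
    intro m
    induction m with
    | zero => simp only [pow_zero, pow_one, zero_add]; exact le_max_left _ _
    | succ m ih =>
      rw [pow_succ, pow_mul]
      have h1 : ‖t ^ (p ^ m) - 1‖ ≤ c := ih.trans (pow_le_of_le_one hc0 hc.le (by simp))
      calc _ ≤ c * ‖t ^ (p ^ m) - 1‖ := pow_sub_one_aux p _ c h1 (le_max_right _ _) hc.le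
        _ ≤ c * c ^ (m + 1) := mul_le_mul_of_nonneg_left ih hc0
        _ = _ := by ring
  have hlim : Filter.Tendsto (fun m : ℕ => t ^ (p ^ m)) Filter.atTop (nhds 1) := by
    rw [tendsto_iff_norm_sub_tendsto_zero]
    exact squeeze_zero (fun _ => norm_nonneg _) hb
      ((tendsto_pow_atTop_nhds_zero_of_lt_one hc0 hc).comp (Filter.tendsto_add_atTop_nat 1))
  have hd : HasStrictDerivAt (fun x : E => x ^ 3) (3 : E) 1 := by
    simpa using hasStrictDerivAt_pow 3 (1 : E)
  have hn := hd.map_nhds_eq h3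
  have hr : Set.range (fun x : E => x ^ 3) ∈ nhds (1 : E) := by
    have : Set.range (fun x : E => x ^ 3) ∈ Filter.map (fun x : E => x ^ 3) (nhds 1) :=
      Filter.range_mem_map
    rw [hn] at this
    simpa using this
  obtain ⟨m, z, hz⟩ := (hlim.eventually hr).exists
  have ht0 : t ≠ 0 := by rintro rfl; simp at ht
  have hnd : ¬ 3 ∣ p ^ m := fun h => hp3
    ((Nat.prime_dvd_prime_iff_eq Nat.prime_three hp).1 (Nat.prime_three.dvd_of_dvd_pow h)).symm
  have hz : z ^ 3 = t ^ (p ^ m) := hz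
  obtain ⟨k, hk | hk⟩ : ∃ k, p ^ m = 3 * k + 1 ∨ p ^ m = 3 * k + 2 :=
    ⟨p ^ m / 3, by omega⟩
  · refine ⟨z / t ^ k, ?_⟩
    rw [div_pow, hz, hk]; field_simp; ring
  · have hz0 : z ≠ 0 := by
      rintro rfl
      exact pow_ne_zero (p ^ m) ht0 (by rw [← hz]; simp)
    refine ⟨t * t ^ k / z, ?_⟩
    rw [div_pow, hz, hk]; field_simp; ring

lemma cyclic_cube {G : Type*} [Group G] [IsCyclic G] [Finite G] (n : ℕ) (hn : Nat.card G = 3 * n)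
    (u : G) (hu : u ^ n = 1) : ∃ v : G, v ^ 3 = u := by
  obtain ⟨g, hg⟩ := IsCyclic.exists_generator (α := G)
  obtain ⟨i, rfl⟩ := hg u
  have ho : orderOf g = 3 * n := by rw [orderOf_eq_card_of_forall_mem_zpowers hg, hn]
  have hn0 : n ≠ 0 := by rintro rfl; exact Nat.card_pos.ne' (by simpa using hn)
  simp only [] at hu
  rw [← zpow_natCast, ← zpow_mul, ← orderOf_dvd_iff_zpow_eq_one, ho] at hu
  push_cast at hu
  obtain ⟨j, rfl⟩ := Int.dvd_of_mul_dvd_mul_right (by exact_mod_cast hn0) hu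
  exact ⟨g ^ j, by rw [← zpow_natCast, ← zpow_mul]; push_cast; rw [mul_comm]⟩

open scoped NormedField Valued in
lemma cube_normed {E : Type*} [NontriviallyNormedField E] [IsUltrametricDist E]
    [ProperSpace E] (p : ℕ) (hp : p.Prime) (hp3 : p ≠ 3) (hpn : ‖(p:E)‖ < 1)
    (h3 : ‖(3:E)‖ = 1) (ω : E) (hω : ω ^ 2 + ω + 1 = 0) (σ : E →+* E)
    (hσ : ∀ x, ‖σ x‖ = ‖x‖) (hσω : σ ω = ω) (x : E) (hx : x * σ x = 1) :
    ∃ y : E, y ^ 3 = x := by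
  have : Finite 𝓀[E] := finite_residue_aux
  have hω3 : ω ^ 3 = 1 := by linear_combination (ω - 1) * hω
  have hωn : ‖ω‖ = 1 := by
    have : ‖ω‖ ^ 3 = 1 := by rw [← norm_pow, hω3, norm_one]
    exact (pow_eq_one_iff_of_nonneg (norm_nonneg _) (by norm_num)).1 this
  have hxn : ‖x‖ = 1 := by
    have : ‖x‖ ^ 2 = 1 := by
      rw [pow_two]; nth_rewrite 2 [← hσ x]; rw [← norm_mul, hx, norm_one]
    exact (pow_eq_one_iff_of_nonneg (norm_nonneg _) (by norm_num)).1 this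
  let mk : (a : E) → ‖a‖ ≤ 1 → 𝒪[E] := fun a ha => ⟨a, Valued.integer.mem_iff.2 ha⟩
  set r : 𝒪[E] →+* 𝓀[E] := IsLocalRing.residue 𝒪[E] with hr
  have hr0 : ∀ a : 𝒪[E], r a = 0 ↔ ‖(a:E)‖ < 1 := by
    intro a
    have ha := Valued.integer.norm_le_one a
    rw [hr, IsLocalRing.residue_eq_zero_iff, IsLocalRing.mem_maximalIdeal, mem_nonunits_iff,
      Valued.integer.isUnit_iff_norm_eq_one]
    exact ⟨fun h => lt_of_le_of_ne ha h, fun h => ne_of_lt h⟩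
  have hreq : ∀ a b : 𝒪[E], r a = r b ↔ ‖(a:E) - b‖ < 1 := by
    intro a b
    rw [← sub_eq_zero, ← map_sub, hr0]; rfl
  let W := mk ω hωn.le
  let X := mk x hxn.le
  let X' := mk (σ x) (by rw [hσ, hxn])
  have hXX : X * X' = 1 := Subtype.ext hx
  have hW : W ^ 2 + W + 1 = 0 := Subtype.ext hω
  have hw : (r W) ^ 2 + r W + 1 = 0 := by
    have := congrArg r hW; simpa using this
  have h3k : (3 : 𝓀[E]) ≠ 0 := by
    have : (3 : 𝓀[E]) = r 3 := (map_ofNat r 3).symm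
    rw [this, Ne, hr0]
    have : ((3 : 𝒪[E]) : E) = 3 := rfl
    rw [this, h3]; simp
  have hw1 : r W ≠ 1 := by
    intro h; rw [h] at hw; apply h3k; linear_combination hw
  have hw3 : (r W) ^ 3 = 1 := by linear_combination (r W - 1) * hw
  have hw0 : r W ≠ 0 := by intro h; rw [h] at hw3; simp at hw3
  have hx0 : r X ≠ 0 := by rw [Ne, hr0]; change ¬ ‖x‖ < 1; rw [hxn]; simp
  let w : 𝓀[E]ˣ := Units.mk0 _ hw0
  let u : 𝓀[E]ˣ := Units.mk0 _ hx0
  have how : orderOf w = 3 := by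
    refine orderOf_eq_prime (Units.ext ?_) (fun h => hw1 ?_)
    · simpa [w] using hw3
    · simpa [w] using congrArg Units.val h
  obtain ⟨n, hn⟩ : 3 ∣ Nat.card 𝓀[E]ˣ := how ▸ orderOf_dvd_natCard w
  have hchi : (r X ^ n) ^ 3 = 1 := by
    have : (u ^ n) ^ 3 = 1 := by rw [← pow_mul, mul_comm, ← hn, pow_card_eq_one']
    simpa [u] using congrArg Units.val this
  have hprod : r X ^ n * r X' ^ n = 1 := by
    rw [← mul_pow, ← map_mul, hXX]; simp
  have key : ∀ i : ℕ, r X ^ n = r W ^ i → r W ^ (2 * i) = 1 := by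
    intro i hi
    have h1 : ‖x ^ n - ω ^ i‖ < 1 := by
      have := (hreq (X ^ n) (W ^ i)).1 (by simpa using hi)
      exact this
    have h2 : ‖(σ x) ^ n - ω ^ i‖ < 1 := by
      rw [← hσ] at h1; simpa [hσω] using h1
    have h4 : r X' ^ n = r W ^ i := by
      have := (hreq (X' ^ n) (W ^ i)).2 h2
      simpa using this
    rw [hi, h4] at hprod
    rw [← hprod]; ring
  have hone : r X ^ n = 1 := by
    have : (r X ^ n - 1) * ((r X ^ n - r W) * (r X ^ n - r W ^ 2)) = 0 := by
      generalize r X ^ n = c at *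
      linear_combination hchi + (c - 1) * (hw3 - c * hw)
    rcases mul_eq_zero.1 this with h | h
    · exact sub_eq_zero.1 h
    rcases mul_eq_zero.1 h with h | h
    · have := key 1 (by simpa using sub_eq_zero.1 h)
      exact absurd (by linear_combination hw3 - r W * this) hw1
    · have := key 2 (sub_eq_zero.1 h)
      exact absurd (by linear_combination this - r W * hw3) hw1
  obtain ⟨v, hv⟩ := cyclic_cube n hn u (Units.ext (by simpa [u] using hone))
  obtain ⟨Y, hY⟩ := IsLocalRing.residue_surjective (v : 𝓀[E])
  have hYX : r X = r (Y ^ 3) := by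
    rw [map_pow]
    have := congrArg Units.val hv
    rw [Units.val_pow_eq_pow_val, ← hY] at this
    exact this.symm
  have hlt : ‖x - (Y:E) ^ 3‖ < 1 := (hreq _ _).1 hYX
  have hYn : ‖(Y:E)‖ = 1 := by
    refine le_antisymm (Valued.integer.norm_le_one Y) (not_lt.1 fun h => ?_)
    exact v.ne_zero (by rw [← hY]; exact (hr0 Y).2 h)
  have hY0 : (Y:E) ≠ 0 := by rw [← norm_ne_zero_iff, hYn]; simp
  obtain ⟨z, hz⟩ := one_unit_cube p hp hp3 hpn (by rw [← norm_ne_zero_iff, h3]; simp)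
    (x / (Y:E) ^ 3) (by
      rw [div_sub_one (pow_ne_zero _ hY0), norm_div, norm_pow, hYn]; simpa using hlt)
  exact ⟨z * Y, by rw [mul_pow, hz]; field_simp⟩

lemma cube_padic (p : ℕ) [Fact p.Prime] (hp3 : p ≠ 3) (E : Type*) [Field E] [Algebra ℚ_[p] E]
    [FiniteDimensional ℚ_[p] E] (ω : E) (hω : ω ^ 2 + ω + 1 = 0) (σ : E →ₐ[ℚ_[p]] E)
    (hσω : σ ω = ω) (x : E) (hx : x * σ x = 1) :
    ∃ y : E, y ^ 3 = x := by
  let : NontriviallyNormedField E := spectralNorm.nontriviallyNormedField ℚ_[p] E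
  let : NormedSpace ℚ_[p] E := spectralNorm.normedSpace ℚ_[p] E
  have hnorm : ∀ a : E, ‖a‖ = spectralNorm ℚ_[p] E a := fun a => rfl
  have : IsUltrametricDist E := IsUltrametricDist.isUltrametricDist_of_isNonarchimedean_norm
    (isNonarchimedean_spectralNorm (K := ℚ_[p]) (L := E))
  have : ProperSpace E := FiniteDimensional.proper ℚ_[p] E
  have hnat : ∀ n : ℕ, ‖(n : E)‖ = ‖(n : ℚ_[p])‖ := by
    intro n
    rw [hnorm, ← spectralNorm_extends (L := E), map_natCast]
  refine cube_normed p Fact.out hp3 ?_ ?_ ω hω σ.toRingHom ?_ hσω x hx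
  · rw [hnat]; exact Padic.norm_p_lt_one
  · have := hnat 3
    push_cast at this
    rw [this]
    have h := (Padic.norm_natCast_eq_one_iff (p := p) (n := 3))
    push_cast at h
    rw [h]
    exact (Nat.coprime_primes Fact.out Nat.prime_three).2 hp3
  · intro a
    rw [hnorm, hnorm]
    change spectralValue (minpoly ℚ_[p] (σ a)) = spectralValue (minpoly ℚ_[p] a)
    rw [minpoly.algHom_eq σ σ.injective]

lemma no_S3 (p : ℕ) [Fact p.Prime] (hp3 : p ≠ 3) (F K : Type*) [Field F] [Field K]
    [Algebra ℚ_[p] F] [FiniteDimensional ℚ_[p] F] [Algebra F K] [FiniteDimensional F K]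
    (ω : F) (hω : ω ^ 2 + ω + 1 = 0) (τ σ : K ≃ₐ[F] K) (hτ1 : τ ≠ 1) (hτ : τ ^ 3 = 1)
    (hσ : σ ^ 2 = 1) (hc : τ * σ = σ * τ ^ 2) : False := by
  let : Algebra ℚ_[p] K := ((algebraMap F K).comp (algebraMap ℚ_[p] F)).toAlgebra
  have : IsScalarTower ℚ_[p] F K := IsScalarTower.of_algebraMap_eq fun _ => rfl
  have : FiniteDimensional ℚ_[p] K := FiniteDimensional.trans ℚ_[p] F K
  set w : K := algebraMap F K ω with hwdef
  have hw : w ^ 2 + w + 1 = 0 := by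
    have := congrArg (algebraMap F K) hω; simpa using this
  have hw3 : w ^ 3 = 1 := by linear_combination (w - 1) * hw
  have h3 : (3 : K) ≠ 0 := by
    have : CharZero K := charZero_of_injective_algebraMap (algebraMap ℚ_[p] K).injective
    norm_num
  have hw1 : w ≠ 1 := by
    intro h; rw [h] at hw; apply h3; linear_combination hw
  have hw0 : w ≠ 0 := by intro h; rw [h] at hw3; simp at hw3
  have hτw : τ w = w := τ.commutes ω
  have hσw : σ w = w := σ.commutes ω
  have hτ3 : ∀ a, τ (τ (τ a)) = a := fun a => by
    have := congrArg (fun f : K ≃ₐ[F] K => f a) hτ; simpa [pow_succ] using this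
  have hσ2 : ∀ a, σ (σ a) = a := fun a => by
    have := congrArg (fun f : K ≃ₐ[F] K => f a) hσ; simpa [pow_succ] using this
  have hcc : ∀ a, τ (σ a) = σ (τ (τ a)) := fun a => by
    have := congrArg (fun f : K ≃ₐ[F] K => f a) hc; simpa [pow_succ] using this
  -- Lagrange resolvent
  obtain ⟨α, hα0, hα⟩ : ∃ α : K, α ≠ 0 ∧ τ α = w * α := by
    by_contra! hcon
    obtain ⟨b, hb⟩ : ∃ b, τ b ≠ b := by
      by_contra! h; exact hτ1 (AlgEquiv.ext h)
    have hA : ∀ b, b + w ^ 2 * τ b + w * τ (τ b) = 0 := by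
      intro b
      by_contra h
      refine hcon _ h ?_
      simp only [map_add, map_mul, map_pow, hτw, hτ3]
      linear_combination (-τ b) * hw3
    have hB : ∀ b, b + w * τ b + w ^ 2 * τ (τ b) = 0 := by
      intro b
      by_contra h
      set d := b + w * τ b + w ^ 2 * τ (τ b) with hd
      have hd1 : τ d = w ^ 2 * d := by
        simp only [hd, map_add, map_mul, map_pow, hτw, hτ3]
        linear_combination (-τ b - w * τ (τ b)) * hw3
      refine hcon (d ^ 2) (pow_ne_zero _ h) ?_
      rw [map_pow, hd1]
      linear_combination (w * d ^ 2) * hw3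
    have h1 := hA b
    have h2 := hB b
    apply hb
    have e : (w ^ 2 - w) * (τ b - τ (τ b)) = 0 := by linear_combination h1 - h2
    rcases mul_eq_zero.1 e with e | e
    · exfalso
      have : w * (w - 1) = 0 := by linear_combination e
      rcases mul_eq_zero.1 this with h | h
      · exact hw0 h
      · exact hw1 (sub_eq_zero.1 h)
    · have e' : b = τ b := by
        apply τ.injective
        exact sub_eq_zero.1 e
      exact e'.symm
  set β := σ α with hβ
  have hβ0 : β ≠ 0 := by rw [hβ]; simpa using hα0
  have hτβ : τ β = w ^ 2 * β := by
    rw [hβ, hcc, hα, map_mul, hτw, hα]; simp [hσw]; ring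
  -- fixed field of τ
  let E : IntermediateField F K := IntermediateField.fixedField (Subgroup.zpowers τ)
  have hE : ∀ a, a ∈ E ↔ τ a = a := by
    intro a
    rw [IntermediateField.mem_fixedField_iff]
    constructor
    · intro h; exact h τ (Subgroup.mem_zpowers τ)
    · intro h f hf
      have : Subgroup.zpowers τ ≤ MulAction.stabilizer (K ≃ₐ[F] K) a := by
        rw [Subgroup.zpowers_le]; exact h
      exact this hf
  have hσE : ∀ a ∈ E, σ a ∈ E := by
    intro a ha
    rw [hE] at ha ⊢
    rw [hcc, ha, ha]
  let : Algebra ℚ_[p] E := ((algebraMap F E).comp (algebraMap ℚ_[p] F)).toAlgebra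
  have : IsScalarTower ℚ_[p] F E := IsScalarTower.of_algebraMap_eq fun _ => rfl
  have : FiniteDimensional ℚ_[p] E := FiniteDimensional.trans ℚ_[p] F E
  let s0 : E →+* E := (σ.toAlgHom.toRingHom.comp E.val.toRingHom).codRestrict E.toSubring
    (fun a => hσE a a.2)
  have hs0 : ∀ a : E, ((s0 a : E) : K) = σ a := fun a => rfl
  let s : E →ₐ[ℚ_[p]] E := { s0 with
    commutes' := fun q => Subtype.ext (by
      change σ (algebraMap F K (algebraMap ℚ_[p] F q)) = _
      rw [σ.commutes]; rfl) }
  have hs : ∀ a : E, ((s a : E) : K) = σ a := fun a => rfl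
  have hxE : (β / α) ^ 3 ∈ E := by
    rw [hE, map_pow, map_div₀, hτβ, hα]
    have : w ^ 2 * β / (w * α) = w * (β / α) := by field_simp
    rw [this, mul_pow, hw3, one_mul]
  obtain ⟨y, hy⟩ := cube_padic p hp3 E (algebraMap F E ω) (Subtype.ext hw) s
    (Subtype.ext (by rw [hs]; exact hσw)) ⟨(β / α) ^ 3, hxE⟩ (Subtype.ext (by
      change (β / α) ^ 3 * σ ((β / α) ^ 3) = 1
      rw [map_pow, map_div₀, ← hβ, hβ, hσ2, ← hβ]; field_simp))
  have hy' : (y : K) ^ 3 = (β / α) ^ 3 := congrArg Subtype.val hy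
  have hτy : τ (y : K) = y := (hE _).1 y.2
  have hγ0 : β / α ≠ 0 := div_ne_zero hβ0 hα0
  have hτγ : τ (β / α) = w * (β / α) := by
    rw [map_div₀, hτβ, hα]; field_simp
  have hfix : τ (β / α) = β / α := by
    have : (β / α - y) * ((β / α - w * y) * (β / α - w ^ 2 * y)) = 0 := by
      generalize β / α = c at *
      generalize (y : K) = y at *
      linear_combination -hy' + (c ^ 2 * -y + c * y ^ 2 * w) * hw + (y ^ 2 * c - y ^ 3) * hw3
        - (y ^ 2 * c * (w - 1)) * hw
    rcases mul_eq_zero.1 this with h | h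
    · rw [sub_eq_zero.1 h, hτy]
    rcases mul_eq_zero.1 h with h | h
    · rw [sub_eq_zero.1 h]; simp [hτy, hτw]
    · rw [sub_eq_zero.1 h]; simp [hτy, hτw]
  rw [hτγ] at hfix
  exact hw1 (mul_right_cancel₀ hγ0 (by rw [hfix, one_mul]))

theorem stmt0 (p : ℕ) [Fact p.Prime] (hp : p ≠ 3)
    (F : Type*) [Field F] [Algebra ℚ_[p] F] [FiniteDimensional ℚ_[p] F]
    (hμ3 : ∃ ζ : F, IsPrimitiveRoot ζ 3) :
    nu F (Equiv.Perm (Fin 3)) = 0 := by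
  obtain ⟨ζ, hζ⟩ := hμ3
  have hω : ζ ^ 2 + ζ + 1 = 0 := by
    have h := hζ.geom_sum_eq_zero (by norm_num)
    simp only [Finset.sum_range_succ, Finset.sum_range_zero] at h
    linear_combination h
  unfold nu
  have : IsEmpty {K : IntermediateField F (AlgebraicClosure F) //
    FiniteDimensional F K ∧ IsGalois F K ∧ Nonempty ((K ≃ₐ[F] K) ≃* Equiv.Perm (Fin 3))} := by
    refine ⟨fun ⟨K, hfd, _, ⟨e⟩⟩ => ?_⟩
    have h1 : finRotate 3 ≠ 1 := by decide
    have h2 : (finRotate 3) ^ 3 = 1 := by decide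
    have h3 : (Equiv.swap (0 : Fin 3) 1) ^ 2 = 1 := by decide
    have h4 : finRotate 3 * Equiv.swap (0 : Fin 3) 1 =
      Equiv.swap (0 : Fin 3) 1 * (finRotate 3) ^ 2 := by decide
    refine no_S3 p hp F K ζ hω (e.symm (finRotate 3)) (e.symm (Equiv.swap 0 1)) ?_ ?_ ?_ ?_
    · simpa using h1
    · rw [← map_pow, h2, map_one]
    · rw [← map_pow, h3, map_one]
    · rw [← map_mul, h4, map_mul, map_pow]
  exact Nat.card_of_isEmpty
end

section
/- Let p be a prime with p ≠ 3, and let F be a finite extension of ℚ_p that does not contain a primitive cube root of unity. Then the number ν(F,S₃) of Galois extensions of F (inside a fixed algebraic closure of F) whose Galois group is isomorphic to the symmetric group S₃ equals 1. -/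
/-- `a` is a cube. -/
def IsCube {L : Type*} [Field L] (a : L) : Prop := ∃ c : L, a = c ^ 3

section local_part
open scoped Valued Pointwise NormedField
open IsLocalRing

theorem hensel_cube (O : Type*) [CommRing O] [IsLocalRing O]
    [IsAdicComplete (maximalIdeal O) O] (h3 : IsUnit (3 : O)) (u : O) (x : O) (hx : IsUnit x)
    (h : x ^ 3 - u ∈ maximalIdeal O) : ∃ w : O, w ^ 3 = u ∧ w - x ∈ maximalIdeal O := by
  have H := HenselianRing.is_henselian (R := O) (I := maximalIdeal O)
    (Polynomial.X ^ 3 - Polynomial.C u)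
    (Polynomial.monic_X_pow_sub_C _ (by norm_num)) x (by simpa using h) (by
      apply IsUnit.map
      have : Polynomial.eval x (Polynomial.derivative
        (Polynomial.X ^ 3 - Polynomial.C u : Polynomial O)) = 3 * x ^ 2 := by
        simp; norm_num
      rw [this]
      exact h3.mul (hx.pow 2))
  obtain ⟨w, hw, hwx⟩ := H
  refine ⟨w, ?_, hwx⟩
  simpa [sub_eq_zero] using hw

theorem cubes_of_dvr (O L : Type*) [CommRing O] [IsDomain O] [IsDiscreteValuationRing O]
    [Finite (ResidueField O)] [IsAdicComplete (maximalIdeal O) O] (h3 : IsUnit (3 : O))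
    [Field L] [Algebra O L] [IsFractionRing O L]
    (hμ : ∀ z : L, z ^ 3 = 1 → z = 1) :
    (∃ π : L, ¬ IsCube π) ∧
      ∀ a b : L, IsCube a ∨ IsCube b ∨ IsCube (a * b) ∨ IsCube (a * b ^ 2) := by
  have hinj := IsFractionRing.injective O L
  have hμO : ∀ z : O, z ^ 3 = 1 → z = 1 := fun z hz => hinj (by
    rw [map_one]; exact hμ _ (by rw [← map_pow, hz, map_one]))
  -- cubing is injective on units of the residue field
  have hk : Function.Injective (fun z : (ResidueField O)ˣ => z ^ 3) := by
    have key : ∀ z : (ResidueField O)ˣ, z ^ 3 = 1 → z = 1 := by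
      intro z hz
      obtain ⟨x, hx⟩ := residue_surjective (z : ResidueField O)
      have hxu : IsUnit x := by
        by_contra hn
        have : x ∈ maximalIdeal O := hn
        rw [← residue_eq_zero_iff, hx] at this
        exact z.ne_zero this
      obtain ⟨w, hw, hwx⟩ := hensel_cube O h3 1 x hxu (by
        rw [← residue_eq_zero_iff, map_sub, map_pow, hx, map_one, ← Units.val_pow_eq_pow_val, hz]
        simp)
      have hw1 := hμO w hw
      rw [hw1, ← residue_eq_zero_iff, map_sub, hx, map_one, sub_eq_zero] at hwx
      exact Units.ext hwx.symm
    intro a b hab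
    have : (a / b) ^ 3 = 1 := by rw [div_pow]; simpa [div_eq_one] using hab
    exact div_eq_one.1 (key _ this)
  have hks := Finite.surjective_of_injective hk
  have hunit : ∀ u : Oˣ, ∃ w : O, w ^ 3 = u := by
    intro u
    obtain ⟨z, hz⟩ := hks (Units.map (residue O).toMonoidHom u)
    obtain ⟨x, hx⟩ := residue_surjective (z : ResidueField O)
    have hxu : IsUnit x := by
      by_contra hn
      have : x ∈ maximalIdeal O := hn
      rw [← residue_eq_zero_iff, hx] at this
      exact z.ne_zero this
    obtain ⟨w, hw, -⟩ := hensel_cube O h3 u x hxu (by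
      rw [← residue_eq_zero_iff, map_sub, map_pow, hx, sub_eq_zero]
      simpa using congrArg Units.val hz)
    exact ⟨w, hw⟩
  obtain ⟨ϖ, hϖ⟩ := IsDiscreteValuationRing.exists_irreducible O
  have hϖ0 : algebraMap O L ϖ ≠ 0 := by
    simpa using (map_ne_zero_iff (algebraMap O L) hinj).2 hϖ.ne_zero
  have hrep : ∀ a : L, a ≠ 0 → ∃ (n : ℤ) (c : L), a = (algebraMap O L ϖ) ^ n * c ^ 3 := by
    intro a ha
    obtain ⟨x, y, hy, rfl⟩ := IsFractionRing.div_surjective (A := O) a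
    have hy0 : y ≠ 0 := nonZeroDivisors.ne_zero hy
    have hx0 : x ≠ 0 := by rintro rfl; simp at ha
    obtain ⟨n, u, rfl⟩ := IsDiscreteValuationRing.eq_unit_mul_pow_irreducible hx0 hϖ
    obtain ⟨m, v, rfl⟩ := IsDiscreteValuationRing.eq_unit_mul_pow_irreducible hy0 hϖ
    obtain ⟨c, hc⟩ := hunit u
    obtain ⟨d, hd⟩ := hunit v
    refine ⟨n - m, algebraMap O L c / algebraMap O L d, ?_⟩
    rw [zpow_sub₀ hϖ0, ← hc, ← hd, zpow_natCast, zpow_natCast]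
    simp only [map_mul, map_pow]
    rw [div_pow]
    ring
  have hcube : ∀ (n : ℤ) (c : L), 3 ∣ n → IsCube ((algebraMap O L ϖ) ^ n * c ^ 3) := by
    rintro _ c ⟨k, rfl⟩
    refine ⟨(algebraMap O L ϖ) ^ k * c, ?_⟩
    rw [mul_pow, mul_comm 3 k, zpow_mul]
    norm_cast
  constructor
  · refine ⟨algebraMap O L ϖ, ?_⟩
    rintro ⟨c, hc⟩
    obtain ⟨w, rfl⟩ := (IsIntegrallyClosed.exists_algebraMap_eq_of_isIntegral_pow
      (R := O) (K := L) (x := c) (n := 3) (by norm_num) (hc ▸ isIntegral_algebraMap))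
    rw [← map_pow] at hc
    have := hinj hc
    rw [this] at hϖ
    exact not_irreducible_pow (by norm_num) hϖ
  · intro a b
    by_cases ha : a = 0
    · left; exact ⟨0, by simp [ha]⟩
    by_cases hb : b = 0
    · right; left; exact ⟨0, by simp [hb]⟩
    obtain ⟨n, c, rfl⟩ := hrep a ha
    obtain ⟨m, d, rfl⟩ := hrep b hb
    have : 3 ∣ n ∨ 3 ∣ m ∨ 3 ∣ n + m ∨ 3 ∣ n + (m + m) := by
      have h1 : n % 3 = 0 ∨ n % 3 = 1 ∨ n % 3 = 2 := by omega
      have h2 : m % 3 = 0 ∨ m % 3 = 1 ∨ m % 3 = 2 := by omega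
      rcases h1 with h1 | h1 | h1 <;> rcases h2 with h2 | h2 | h2 <;> omega
    rcases this with h | h | h | h
    · exact Or.inl (hcube _ _ h)
    · exact Or.inr (Or.inl (hcube _ _ h))
    · right; right; left
      convert hcube _ (c * d) h using 1
      rw [zpow_add₀ hϖ0]; ring
    · right; right; right
      convert hcube _ (c * d ^ 2) h using 1
      rw [zpow_add₀ hϖ0, zpow_add₀ hϖ0]; ring

theorem cubes_normed (L : Type*) [NontriviallyNormedField L] [IsUltrametricDist L] [ProperSpace L]
    (h3 : ‖(3:L)‖ = 1) (hμ : ∀ z : L, z ^ 3 = 1 → z = 1) :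
    (∃ π : L, ¬ IsCube π) ∧
      ∀ a b : L, IsCube a ∨ IsCube b ∨ IsCube (a * b) ∨ IsCube (a * b ^ 2) := by
  have hc : CompactSpace 𝒪[L] := by
    have : ((𝒪[L] : Subring L) : Set L) = Metric.closedBall 0 1 := by
      ext x
      simp [Valued.integer.mem_iff]
    have h2 : IsCompact ((𝒪[L] : Subring L) : Set L) := this ▸ isCompact_closedBall 0 1
    exact isCompact_iff_compactSpace.mp h2
  letI : (Valued.v : Valuation L NNReal).RankOne :=
    inferInstanceAs (Valuation.RankOne (NormedField.valuation (K := L)))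
  obtain ⟨hcs, hd, hf⟩ := Valued.integer.compactSpace_iff_completeSpace_and_isDiscreteValuationRing_and_finite_residueField.mp hc
  have hA : IsAdicComplete 𝓂[L] 𝒪[L] :=
   { prec' := by
      intro f hf
      let S n : Set 𝒪[L] := f n +ᵥ ((𝓂[L] ^ n : Ideal 𝒪[L]) : Set 𝒪[L])
      have hS n : S (n + 1) ⊆ S n := by
        apply (Set.vadd_set_subset_vadd_set_iff.mpr (Ideal.pow_le_pow_right n.le_succ)).trans
        simpa [S] using (hf n.le_succ).symm
      have h n : IsClosed (S n) := (IsNoetherianRing.isClosed_ideal (𝓂[L] ^ n)).vadd (f n)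
      obtain ⟨L, hL⟩ := (h 0).isCompact.nonempty_iInter_of_sequence_nonempty_isCompact_isClosed S hS
        (by simp [S]) h
      refine ⟨L, fun n ↦ ?_⟩
      obtain ⟨y, hy, rfl⟩ := Set.mem_iInter.mp hL n
      simpa [SModEq.sub_mem] using hy }
  have hF : IsFractionRing 𝒪[L] L := by infer_instance
  refine cubes_of_dvr 𝒪[L] L ?_ hμ
  rw [Valued.integer.isUnit_iff_norm_eq_one]
  exact h3

theorem cubes_padic (p : ℕ) [Fact p.Prime] (hp : p ≠ 3)
    (F : Type*) [Field F] [Algebra ℚ_[p] F] [FiniteDimensional ℚ_[p] F]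
    (hμ : ∀ z : F, z ^ 3 = 1 → z = 1) :
    (∃ π : F, ¬ IsCube π) ∧
      ∀ a b : F, IsCube a ∨ IsCube b ∨ IsCube (a * b) ∨ IsCube (a * b ^ 2) := by
  letI : NontriviallyNormedField F := spectralNorm.nontriviallyNormedField ℚ_[p] F
  letI : NormedAlgebra ℚ_[p] F := spectralNorm.normedAlgebra ℚ_[p] F
  haveI : IsUltrametricDist F :=
    IsUltrametricDist.isUltrametricDist_of_isNonarchimedean_norm isNonarchimedean_spectralNorm
  haveI : ProperSpace F := FiniteDimensional.proper ℚ_[p] F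
  refine cubes_normed F ?_ hμ
  have h : ‖(3 : ℚ_[p])‖ = 1 := by
    have := (Padic.norm_natCast_eq_one_iff (p := p) (n := 3)).2
      ((Nat.coprime_primes Fact.out Nat.prime_three).2 hp)
    simpa using this
  rw [← h, ← norm_algebraMap' F (3 : ℚ_[p]), map_ofNat]

end local_part

section field_part
open IntermediateField Polynomial

theorem mem_adjoin_sqrt {F Ω : Type*} [Field F] [Field Ω] [Algebra F Ω] (t : Ω) (D : F)
    (ht : t ^ 2 = algebraMap F Ω D) (x : Ω) (hx : x ∈ F⟮t⟯) :
    ∃ y z : F, x = algebraMap F Ω y + algebraMap F Ω z * t := by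
  have hint : IsIntegral F t := IsIntegral.of_pow (n := 2) (by norm_num) (ht ▸ isIntegral_algebraMap)
  have hx' : x ∈ Algebra.adjoin F {t} := by
    rw [← IntermediateField.adjoin_simple_toSubalgebra_of_isAlgebraic hint.isAlgebraic]
    exact hx
  clear hx
  induction hx' using Algebra.adjoin_induction with
  | mem x hx => 
    rw [Set.mem_singleton_iff] at hx
    exact ⟨0, 1, by simp [hx]⟩
  | algebraMap r => exact ⟨r, 0, by simp⟩
  | add x y hx hy h1 h2 =>
    obtain ⟨a, b, rfl⟩ := h1
    obtain ⟨c, d, rfl⟩ := h2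
    exact ⟨a + c, b + d, by simp only [map_add]; ring⟩
  | mul x y hx hy h1 h2 =>
    obtain ⟨a, b, rfl⟩ := h1
    obtain ⟨c, d, rfl⟩ := h2
    exact ⟨a * c + b * d * D, a * d + b * c, by
      simp only [map_add, map_mul]; linear_combination (algebraMap F Ω b * algebraMap F Ω d) * ht⟩

theorem lin_indep {F Ω : Type*} [Field F] [Field Ω] [Algebra F Ω] (t : Ω)
    (ht : ∀ y : F, algebraMap F Ω y ≠ t) (a b : F)
    (h : algebraMap F Ω a + algebraMap F Ω b * t = 0) : a = 0 ∧ b = 0 := by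
  have hb : b = 0 := by
    by_contra hb
    apply ht (-a / b)
    have : algebraMap F Ω b ≠ 0 := by simpa using hb
    rw [map_div₀, map_neg]
    field_simp
    linear_combination -h
  subst hb
  simpa using h

theorem cube_eq {Ω : Type*} [Field Ω] {ζ : Ω} (hζ : ζ ^ 2 + ζ + 1 = 0) (u c : Ω)
    (h : u ^ 3 = c ^ 3) : u = c ∨ u = ζ * c ∨ u = ζ ^ 2 * c := by
  have : (u - c) * ((u - ζ * c) * (u - ζ ^ 2 * c)) = 0 := by
    linear_combination h + (-u ^ 2 * c + u * c ^ 2 * ζ+ (1-ζ) * c ^ 3) * hζ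
  rcases mul_eq_zero.1 this with h | h
  · left; linear_combination h
  rcases mul_eq_zero.1 h with h | h
  · right; left; linear_combination h
  · right; right; linear_combination h

/-- norm computation: if `(x+3t)/2 * b` is a cube in `F(t)`, then `n^3 b^2` is a cube in `F`. -/
theorem norm_cube {F Ω : Type*} [Field F] [Field Ω] [Algebra F Ω] (t : Ω) (D : F)
    (htD : t ^ 2 = algebraMap F Ω D) (ht : ∀ y : F, algebraMap F Ω y ≠ t) (a b : F)
    (c : Ω) (hc : c ∈ F⟮t⟯) (h : algebraMap F Ω a + algebraMap F Ω b * t = c ^ 3) :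
    IsCube (a ^ 2 - b ^ 2 * D) := by
  obtain ⟨y, z, rfl⟩ := mem_adjoin_sqrt t D htD c hc
  obtain ⟨h1, h2⟩ := lin_indep t ht (a - (y ^ 3 + 3 * y * z ^ 2 * D))
    (b - (3 * y ^ 2 * z + z ^ 3 * D)) (by
      simp only [map_sub, map_add, map_mul, map_pow, map_ofNat]
      linear_combination h + (3 * algebraMap F Ω y * algebraMap F Ω z ^ 2
        + algebraMap F Ω z ^ 3 * t) * htD)
  refine ⟨y ^ 2 - z ^ 2 * D, ?_⟩
  rw [sub_eq_zero] at h1 h2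
  rw [h1, h2]; ring

theorem core {F Ω : Type*} [Field F] [CharZero F] [Field Ω] [Algebra F Ω] 
    (hX : ∀ X : IntermediateField F Ω, FiniteDimensional F X → (∀ z : X, z ^ 3 = 1 → z = 1) →
      ∀ a b : X, IsCube a ∨ IsCube b ∨ IsCube (a * b) ∨ IsCube (a * b ^ 2))
    (hF : ∀ a b : F, IsCube a ∨ IsCube b ∨ IsCube (a * b) ∨ IsCube (a * b ^ 2))
    (π : F) (hπ : ¬ IsCube π)
    (ζ : Ω) (hζ : ζ ^ 2 + ζ + 1 = 0) (hζF : ∀ y : F, algebraMap F Ω y ≠ ζ)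
    (r : Ω) (hr : r ^ 3 = algebraMap F Ω π)
    (M : IntermediateField F Ω) (hζM : ζ ∈ M) (hrM : r ∈ M)
    (a₁ a₂ a₃ : Ω) (e₁ e₂ e₃ : F) (h₁ : a₁ + a₂ + a₃ = algebraMap F Ω e₁)
    (h₂ : a₁ * a₂ + a₂ * a₃ + a₃ * a₁ = algebraMap F Ω e₂)
    (h₃ : a₁ * a₂ * a₃ = algebraMap F Ω e₃)
    (hδ : ∀ y : F, algebraMap F Ω y ≠ a₁ ^ 2 * a₂ + a₂ ^ 2 * a₃ + a₃ ^ 2 * a₁ 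
      - (a₁ * a₂ ^ 2 + a₂ * a₃ ^ 2 + a₃ * a₁ ^ 2))
    (hq₁ : ∀ y z : F, a₁ ^ 2 + algebraMap F Ω y * a₁ + algebraMap F Ω z ≠ 0)
    (hq₂ : ∀ y z : F, a₂ ^ 2 + algebraMap F Ω y * a₂ + algebraMap F Ω z ≠ 0)
    (hq₃ : ∀ y z : F, a₃ ^ 2 + algebraMap F Ω y * a₃ + algebraMap F Ω z ≠ 0) :
    a₁ ∈ M ∧ a₂ ∈ M ∧ a₃ ∈ M := by
  have hcz : CharZero Ω := charZero_of_injective_algebraMap (algebraMap F Ω).injective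
  have hπ0 : π ≠ 0 := by rintro rfl; exact hπ ⟨0, by simp⟩
  have hπ2 : ¬ IsCube (π ^ 2) := by
    rintro ⟨c, hc⟩
    refine hπ ⟨c ^ 2 / π, ?_⟩
    field_simp
    linear_combination (π ^ 2 + c ^ 3) * hc
  have hπ4 : ¬ IsCube (π ^ 4) := by
    rintro ⟨c, hc⟩
    refine hπ ⟨c / π, ?_⟩
    field_simp
    linear_combination hc
  have hφ := (algebraMap F Ω).injective
  set φ := algebraMap F Ω with hφdef
  set δ := a₁ ^ 2 * a₂ + a₂ ^ 2 * a₃ + a₃ ^ 2 * a₁ 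
      - (a₁ * a₂ ^ 2 + a₂ * a₃ ^ 2 + a₃ * a₁ ^ 2) with hδdef
  obtain ⟨t, ht⟩ : ∃ t, t = (2 * ζ + 1) * δ := ⟨_, rfl⟩
  obtain ⟨u, hu⟩ : ∃ u, u = a₁ + ζ * a₂ + ζ ^ 2 * a₃ := ⟨_, rfl⟩
  obtain ⟨v, hv⟩ : ∃ v, v = a₁ + ζ ^ 2 * a₂ + ζ * a₃ := ⟨_, rfl⟩
  obtain ⟨n, hn⟩ : ∃ n, n = e₁ ^ 2 - 3 * e₂ := ⟨_, rfl⟩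
  obtain ⟨x, hx⟩ : ∃ x, x = 2 * e₁ ^ 3 - 9 * e₁ * e₂ + 27 * e₃ := ⟨_, rfl⟩
  obtain ⟨D, hD⟩ : ∃ D, D = -3 * (e₁ ^ 2 * e₂ ^ 2 - 4 * e₂ ^ 3 - 4 * e₁ ^ 3 * e₃
    + 18 * e₁ * e₂ * e₃ - 27 * e₃ ^ 2) := ⟨_, rfl⟩
  have hζ2 : ζ ^ 2 = - ζ - 1 := by linear_combination hζ
  have hζ3 : ζ ^ 3 = 1 := by linear_combination (ζ - 1) * hζ
  have huv : u * v = φ n := by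
    rw [hn, hu, hv, map_sub, map_pow, map_mul, map_ofNat, ← h₁, ← h₂]
    grind
  have htD : t ^ 2 = φ D := by
    have : φ D = -3 * δ ^ 2 := by
      rw [hD, hδdef]
      simp only [map_mul, map_add, map_sub, map_neg, map_pow, map_ofNat, ← h₁, ← h₂, ← h₃]
      ring
    rw [this, ht]
    linear_combination 4 * δ ^ 2 * hζ
  have hu3 : 2 * u ^ 3 = φ x + 3 * t := by
    rw [hx, ht, hδdef, hu]
    simp only [map_mul, map_add, map_sub, map_neg, map_pow, map_ofNat, ← h₁, ← h₂, ← h₃]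
    grind
  have hv3 : 2 * v ^ 3 = φ x - 3 * t := by
    rw [hx, ht, hδdef, hv]
    simp only [map_mul, map_add, map_sub, map_neg, map_pow, map_ofNat, ← h₁, ← h₂, ← h₃]
    grind
  have ha₁ : a₁ = (φ e₁ + u + v) / 3 := by rw [← h₁, hu, hv]; grind
  have ha₂ : a₂ = (φ e₁ + ζ ^ 2 * u + ζ * v) / 3 := by rw [← h₁, hu, hv]; grind
  have ha₃ : a₃ = (φ e₁ + ζ * u + ζ ^ 2 * v) / 3 := by rw [← h₁, hu, hv]; grind
  have hr0 : r ≠ 0 := by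
    rintro rfl
    apply hπ0
    apply hφ
    rw [← hr]; simp
  have hFM : ∀ y : F, φ y ∈ M := fun y => M.algebraMap_mem y
  by_cases htF : ∃ y : F, φ y = t
  · obtain ⟨y, hy⟩ := htF
    have hroot : ∀ (w : Ω) (c : F), w ^ 3 = φ c ^ 3 → w ∈ M := by
      intro w c h
      rcases cube_eq hζ w _ h with h | h | h <;> rw [h]
      · exact hFM c
      · exact M.mul_mem hζM (hFM c)
      · exact M.mul_mem (pow_mem hζM 2) (hFM c)
    have hw : ∀ (w : Ω) (a : F), w ^ 3 = φ a → w ∈ M := by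
      intro w a h
      rcases hF a π with ⟨c, hc⟩ | hc | ⟨c, hc⟩ | ⟨c, hc⟩
      · exact hroot w c (by rw [h, hc, map_pow])
      · exact absurd hc hπ
      · have := hroot (w * r) c (by rw [mul_pow, h, hr, ← map_mul, hc, map_pow])
        have h2 := M.div_mem this hrM
        rwa [mul_div_cancel_right₀ _ hr0] at h2
      · have := hroot (w * r ^ 2) c (by
          rw [mul_pow, h, ← pow_mul, mul_comm 2 3, pow_mul, hr, ← map_pow, ← map_mul, hc, map_pow])
        have h2 := M.div_mem this (pow_mem hrM 2)
        rwa [mul_div_cancel_right₀ _ (pow_ne_zero 2 hr0)] at h2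
    have huM : u ∈ M := hw u ((x + 3 * y) / 2) (by
      simp only [map_div₀, map_add, map_mul, map_ofNat, hy]; linear_combination hu3 / 2)
    have hvM : v ∈ M := hw v ((x - 3 * y) / 2) (by
      simp only [map_div₀, map_sub, map_mul, map_ofNat, hy]; linear_combination hv3 / 2)
    have h3M : (3 : Ω) ∈ M := by simpa using hFM 3
    rw [ha₁, ha₂, ha₃]
    refine ⟨M.div_mem (M.add_mem (M.add_mem (hFM _) huM) hvM) h3M,
      M.div_mem (M.add_mem (M.add_mem (hFM _) (M.mul_mem (pow_mem hζM 2) huM)) 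
        (M.mul_mem hζM hvM)) h3M,
      M.div_mem (M.add_mem (M.add_mem (hFM _) (M.mul_mem hζM huM)) 
        (M.mul_mem (pow_mem hζM 2) hvM)) h3M⟩
  · exfalso
    push Not at htF
    have hint : IsIntegral F t :=
      IsIntegral.of_pow (n := 2) (by norm_num) (htD ▸ isIntegral_algebraMap)
    have hfd : FiniteDimensional F F⟮t⟯ := adjoin.finiteDimensional hint
    have htX : t ∈ F⟮t⟯ := mem_adjoin_simple_self F t
    have hζX : ζ ∉ F⟮t⟯ := by
      intro h
      obtain ⟨y, z, hyz⟩ := mem_adjoin_sqrt t D htD ζ h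
      have hyz' : 2 * ζ + 1 = φ (2 * y + 1) + φ (2 * z) * t := by
        simp only [map_add, map_mul, map_ofNat, map_one]
        linear_combination 2 * hyz
      obtain ⟨-, h2⟩ := lin_indep t htF (3 + (2 * y + 1) ^ 2 + (2 * z) ^ 2 * D)
        (2 * (2 * y + 1) * (2 * z)) (by
          rw [← hφdef]
          simp only [map_add φ 3, map_add φ _ (_ * D), map_mul φ _ D, map_mul φ _ (2 * z),
            map_mul φ 2 (2 * y + 1), map_pow, map_ofNat, ← htD]
          linear_combination 4 * hζ - ((2 * ζ + 1) + φ (2 * y + 1) + φ (2 * z) * t) * hyz')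
      have h2' : (2 * y + 1) * z = 0 := by linear_combination h2 / 4
      rcases mul_eq_zero.1 h2' with h0 | h0
      · have hs : 2 * ζ + 1 ≠ 0 := by
          intro h
          apply hζF (-1 / 2)
          simp only [map_div₀, map_neg, map_one, map_ofNat]
          linear_combination -h / 2
        rw [h0, ht] at hyz'
        have h5 : φ (2 * z) * δ = 1 := by
          apply mul_left_cancel₀ hs
          rw [map_zero] at hyz'
          linear_combination -hyz'
        apply hδ (1 / (2 * z))
        have hz : φ (2 * z) ≠ 0 := left_ne_zero_of_mul_eq_one h5
        rw [map_div₀, map_one, div_eq_iff hz]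
        linear_combination -h5
      · subst h0
        exact hζF y (by rw [hyz, hφdef]; simp)
    have hXμ : ∀ z : F⟮t⟯, z ^ 3 = 1 → z = 1 := by
      intro z hz
      have hz' : (z : Ω) ^ 3 = 1 ^ 3 := by
        have := congrArg (algebraMap F⟮t⟯ Ω) hz
        simpa using this
      rcases cube_eq hζ _ _ hz' with h | h | h
      · exact Subtype.ext h
      · rw [mul_one] at h
        exact absurd (h ▸ z.2) hζX
      · rw [mul_one, hζ2] at h
        refine absurd ?_ hζX
        have h6 : ζ = - (z : Ω) - 1 := by rw [h]; ring
        rw [h6]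
        exact F⟮t⟯.sub_mem (F⟮t⟯.neg_mem z.2) F⟮t⟯.one_mem
    have hn3 : (x / 2) ^ 2 - (3 / 2) ^ 2 * D = n ^ 3 := by
      apply hφ
      simp only [map_sub, map_mul, map_pow, map_div₀, map_ofNat, ← huv, ← htD]
      linear_combination (-(φ x - 3 * t) / 4) * hu3 - u ^ 3 / 2 * hv3
    have hn0 : n ≠ 0 := by
      rintro rfl
      rw [map_zero] at huv
      rcases mul_eq_zero.1 huv with h | h
      · apply htF (-x / 3)
        simp only [map_div₀, map_neg, map_ofNat]
        rw [h] at hu3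
        linear_combination hu3 / 3
      · apply htF (x / 3)
        simp only [map_div₀, map_ofNat]
        rw [h] at hv3
        linear_combination -hv3 / 3
    have hA : φ (x / 2) + φ (3 / 2) * t = u ^ 3 := by
      simp only [map_div₀, map_ofNat]
      linear_combination -hu3 / 2
    have huX : u ^ 3 ∈ F⟮t⟯ := by
      rw [← hA]
      exact F⟮t⟯.add_mem (F⟮t⟯.algebraMap_mem _) (F⟮t⟯.mul_mem (F⟮t⟯.algebraMap_mem _) htX)
    have hno : ∀ (b : F) (c : F⟮t⟯), ¬ IsCube (b ^ 2) →
        (u ^ 3 * φ b = (c : Ω) ^ 3) → False := by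
      intro b c hb h
      apply hb
      obtain ⟨d, hd⟩ := norm_cube t D htD htF (x / 2 * b) (3 / 2 * b) c c.2 (by
        rw [← h, ← hA, ← hφdef, map_mul, map_mul]; ring)
      refine ⟨d / n, ?_⟩
      field_simp
      linear_combination hd - b ^ 2 * hn3
    have hcube : ∃ c : F⟮t⟯, u ^ 3 = (c : Ω) ^ 3 := by
      rcases hX F⟮t⟯ hfd hXμ ⟨u ^ 3, huX⟩ ⟨φ π, F⟮t⟯.algebraMap_mem _⟩ with
        ⟨c, hc⟩ | ⟨c, hc⟩ | ⟨c, hc⟩ | ⟨c, hc⟩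
      · exact ⟨c, congrArg Subtype.val hc⟩
      · exfalso
        apply hπ2
        have := norm_cube t D htD htF π 0 c c.2 (by
          simpa using congrArg Subtype.val hc)
        simpa using this
      · exact (hno π c hπ2 (congrArg Subtype.val hc)).elim
      · exact (hno (π ^ 2) c (by rwa [← pow_mul]) (by
          rw [map_pow]; exact congrArg Subtype.val hc)).elim
    obtain ⟨c, hc⟩ := hcube
    have hfin : ∀ u' v' : Ω, u' = c → u' * v' = φ n → 
        ∃ y z : F, ((φ e₁ + u' + v') / 3) ^ 2 + φ y * ((φ e₁ + u' + v') / 3) + φ z = 0 := by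
      intro u' v' hu' hn'
      have hu'0 : u' ≠ 0 := by
        intro h
        rw [h, zero_mul] at hn'
        exact hn0 (hφ (by rw [← hn', map_zero]))
      have hv' : v' = φ n / u' := by field_simp; linear_combination hn'
      have hmem : (φ e₁ + u' + v') / 3 ∈ F⟮t⟯ := by
        have hum : u' ∈ F⟮t⟯ := hu' ▸ c.2
        have h3m : (3 : Ω) ∈ F⟮t⟯ := by simpa using F⟮t⟯.algebraMap_mem 3
        rw [hv']
        exact F⟮t⟯.div_mem (F⟮t⟯.add_mem (F⟮t⟯.add_mem (F⟮t⟯.algebraMap_mem _) hum)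
          (F⟮t⟯.div_mem (F⟮t⟯.algebraMap_mem _) hum)) h3m
      obtain ⟨y, z, hyz⟩ := mem_adjoin_sqrt t D htD _ hmem
      refine ⟨-2 * y, y ^ 2 - z ^ 2 * D, ?_⟩
      rw [hyz, ← hφdef]
      simp only [map_mul, map_sub, map_pow, map_neg, map_ofNat, ← htD]
      ring
    rcases cube_eq hζ _ _ hc with h | h | h
    · obtain ⟨y, z, hyz⟩ := hfin u v h huv
      exact hq₁ y z (by rw [ha₁]; exact hyz)
    · obtain ⟨y, z, hyz⟩ := hfin (ζ ^ 2 * u) (ζ * v) (by rw [h]; linear_combination c * hζ3)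
        (by linear_combination huv + u * v * hζ3)
      exact hq₂ y z (by rw [ha₂]; exact hyz)
    · obtain ⟨y, z, hyz⟩ := hfin (ζ * u) (ζ ^ 2 * v) (by rw [h]; linear_combination c * hζ3)
        (by linear_combination huv + u * v * hζ3)
      exact hq₃ y z (by rw [ha₃]; exact hyz)

theorem exists_S3 {F Ω : Type*} [Field F] [CharZero F] [Field Ω] [Algebra F Ω] [IsAlgClosed Ω]
    (π : F) (hπ : ¬ IsCube π)
    (ζ : Ω) (hζ : ζ ^ 2 + ζ + 1 = 0) (hζF : ∀ y : F, algebraMap F Ω y ≠ ζ)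
    (r : Ω) (hr : r ^ 3 = algebraMap F Ω π) :
    ∃ M : IntermediateField F Ω, ζ ∈ M ∧ r ∈ M ∧ FiniteDimensional F M ∧ IsGalois F M ∧
      Module.finrank F M = 6 ∧ Nonempty ((M ≃ₐ[F] M) ≃* Equiv.Perm (Fin 3)) := by
  have hπ0 : π ≠ 0 := by rintro rfl; exact hπ ⟨0, by simp⟩
  have hφ := (algebraMap F Ω).injective
  have hr0 : r ≠ 0 := by
    rintro rfl
    apply hπ0
    apply hφ
    rw [← hr]; simp
  have hζ3 : ζ ^ 3 = 1 := by linear_combination (ζ - 1) * hζ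
  obtain ⟨f, hf⟩ : ∃ f : F[X], f = X ^ 3 - C π := ⟨_, rfl⟩
  have hmon : f.Monic := hf ▸ monic_X_pow_sub_C _ (by norm_num)
  have hf0 : f ≠ 0 := hmon.ne_zero
  have hdeg : f.natDegree = 3 := hf ▸ natDegree_X_pow_sub_C
  have hirr : Irreducible f := by
    rw [hf]
    refine X_pow_sub_C_irreducible_of_prime Nat.prime_three ?_
    intro b hb
    exact hπ ⟨b, hb.symm⟩
  have hsep : f.Separable := hirr.separable
  let M := adjoin F (f.rootSet Ω)
  have hsplit : IsSplittingField F M f := adjoin_rootSet_isSplittingField (IsAlgClosed.splits _)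
  have hrM : r ∈ M := by
    apply subset_adjoin
    rw [mem_rootSet]
    exact ⟨hf0, by simp [hf, hr]⟩
  have hζrM : ζ * r ∈ M := by
    apply subset_adjoin
    rw [mem_rootSet]
    exact ⟨hf0, by simp [hf, hr, mul_pow, hζ3]⟩
  have hζM : ζ ∈ M := by
    have := M.div_mem hζrM hrM
    rwa [mul_div_cancel_right₀ _ hr0] at this
  have hfd : FiniteDimensional F M := IsSplittingField.finiteDimensional M f
  have hgal : IsGalois F M := IsGalois.of_separable_splitting_field (p := f) hsep
  have eG : f.Gal ≃* (M ≃ₐ[F] M) := (AlgEquiv.autCongr (IsSplittingField.algEquiv M f)).symm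
  have hcard : Nat.card f.Gal = Module.finrank F M := by
    rw [Nat.card_congr eG.toEquiv]
    exact IsGalois.card_aut_eq_finrank F M
  have h3 : 3 ∣ Module.finrank F M := by
    rw [← hcard]
    have := Gal.prime_degree_dvd_card hirr (hdeg ▸ Nat.prime_three)
    rwa [hdeg] at this
  have h2 : 2 ∣ Module.finrank F M := by
    have hint : IsIntegral F ζ :=
      IsIntegral.of_pow (n := 3) (by norm_num) (hζ3 ▸ isIntegral_one)
    have hle : F⟮ζ⟯ ≤ M := adjoin_simple_le_iff.2 hζM
    have hd : Module.finrank F F⟮ζ⟯ = 2 := by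
      rw [adjoin.finrank hint]
      apply le_antisymm
      · have := natDegree_le_of_dvd (minpoly.dvd F ζ (p := X ^ 2 + X + 1) (by simp [hζ])) (by
          apply Monic.ne_zero; monicity!)
        refine this.trans ?_
        compute_degree
      · rw [minpoly.two_le_natDegree_iff hint]
        rintro ⟨y, hy⟩
        exact hζF y hy
    rw [← hd]
    exact IntermediateField.finrank_dvd_of_le_right hle
  have hcR : Fintype.card (f.rootSet M) = 3 := by
    rw [card_rootSet_eq_natDegree hsep hsplit.splits, hdeg]
  have hFa : Fact ((f.map (algebraMap F M)).Splits) := ⟨hsplit.splits⟩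
  have hinj := Gal.galActionHom_injective f M
  have hcP : Nat.card (Equiv.Perm (f.rootSet M)) = 6 := by
    classical
    rw [Nat.card_eq_fintype_card, Fintype.card_perm, hcR]; rfl
  have hle6 : Nat.card f.Gal ≤ 6 := hcP ▸ Nat.card_le_card_of_injective _ hinj
  have hpos : 0 < Module.finrank F M := Module.finrank_pos
  have h6 : Module.finrank F M = 6 := by omega
  have hbij : Function.Bijective (Gal.galActionHom f M) := by
    rw [Nat.bijective_iff_injective_and_card]
    exact ⟨hinj, by rw [hcP, hcard, h6]⟩
  refine ⟨M, hζM, hrM, hfd, hgal, h6, ⟨?_⟩⟩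
  exact eG.symm.trans ((MulEquiv.ofBijective _ hbij).trans
    (Equiv.permCongrHom (Fintype.equivFinOfCardEq hcR)))

theorem perm_facts : ∃ g c : Equiv.Perm (Fin 3), g * g = 1 ∧ c * c * c = 1 ∧ g * c = c * c * g ∧
    c * g ≠ g * c ∧ 
    ∀ s, s = 1 ∨ s = c ∨ s = c * c ∨ s = g ∨ s = c * g ∨ s = c * c * g := by
  refine ⟨Equiv.swap 1 2, finRotate 3, ?_⟩
  decide

theorem roots_data {F K : Type*} [Field F] [CharZero F] [Field K] [Algebra F K] [FiniteDimensional F K]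
    [IsGalois F K] (e : (K ≃ₐ[F] K) ≃* Equiv.Perm (Fin 3)) :
    ∃ (a₁ a₂ a₃ : K) (e₁ e₂ e₃ : F), a₁ + a₂ + a₃ = algebraMap F K e₁ ∧
    a₁ * a₂ + a₂ * a₃ + a₃ * a₁ = algebraMap F K e₂ ∧
    a₁ * a₂ * a₃ = algebraMap F K e₃ ∧
    (∀ y : F, algebraMap F K y ≠ a₁ ^ 2 * a₂ + a₂ ^ 2 * a₃ + a₃ ^ 2 * a₁ 
      - (a₁ * a₂ ^ 2 + a₂ * a₃ ^ 2 + a₃ * a₁ ^ 2)) ∧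
    (∀ y z : F, a₁ ^ 2 + algebraMap F K y * a₁ + algebraMap F K z ≠ 0) ∧
    (∀ y z : F, a₂ ^ 2 + algebraMap F K y * a₂ + algebraMap F K z ≠ 0) ∧
    (∀ y z : F, a₃ ^ 2 + algebraMap F K y * a₃ + algebraMap F K z ≠ 0) ∧
    ∀ N : IntermediateField F K, a₁ ∈ N → a₂ ∈ N → a₃ ∈ N → N = ⊤ := by
  obtain ⟨g, c, hgg, hccc, hgc, hne, hall⟩ : ∃ g c : K ≃ₐ[F] K, g * g = 1 ∧ c * c * c = 1 ∧
      g * c = c * c * g ∧ c * g ≠ g * c ∧ 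
      ∀ s, s = 1 ∨ s = c ∨ s = c * c ∨ s = g ∨ s = c * g ∨ s = c * c * g := by
    obtain ⟨g, c, h1, h2, h3, h4, h5⟩ := perm_facts
    refine ⟨e.symm g, e.symm c, by rw [← map_mul, h1, map_one], by
      rw [← map_mul, ← map_mul, h2, map_one], by simp only [← map_mul, h3],
      by simpa only [← map_mul, ne_eq, EmbeddingLike.apply_eq_iff_eq] using h4, fun s => ?_⟩
    have := h5 (e s)
    simpa only [← map_mul, ← MulEquiv.eq_symm_apply, map_one] using this
  obtain ⟨a, hga, hca⟩ : ∃ a : K, g a = a ∧ c a ≠ a := by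
    by_contra hcon
    push Not at hcon
    have hle : fixedField (Subgroup.zpowers g) ≤ fixedField (Subgroup.zpowers c) := by
      intro x hx
      have h1 : c x = x := hcon x (hx ⟨g, Subgroup.mem_zpowers g⟩)
      rintro ⟨s, hs⟩
      have hs' : Subgroup.zpowers c ≤ MulAction.stabilizer (K ≃ₐ[F] K) x := by
        rw [Subgroup.zpowers_le]; exact h1
      exact hs' hs
    have h2 := fixingSubgroup_antitone hle
    rw [fixingSubgroup_fixedField, fixingSubgroup_fixedField, Subgroup.zpowers_le] at h2
    obtain ⟨k, hk⟩ := Subgroup.mem_zpowers_iff.1 h2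
    apply hne
    rw [← hk]
    exact ((Commute.refl g).zpow_left k).eq
  obtain ⟨b, hb⟩ : ∃ b, b = c a := ⟨_, rfl⟩
  obtain ⟨d, hd⟩ : ∃ d, d = c b := ⟨_, rfl⟩
  have hcd : c d = a := by
    rw [hd, hb]; exact DFunLike.congr_fun hccc a
  have hgb : g b = d := by
    have := DFunLike.congr_fun hgc a
    simp only [AlgEquiv.mul_apply, hga] at this
    rw [hb, hd, hb]; exact this
  have hgd : g d = b := by
    rw [← hgb]; exact DFunLike.congr_fun hgg b
  have hba : b ≠ a := by rw [hb]; exact hca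
  have hdb : d ≠ b := fun h => hba (c.injective (by rw [← hd, ← hb, h]))
  have had : a ≠ d := fun h => hdb (c.injective (by rw [hcd, ← hd, h]))
  have hfix : ∀ x : K, g x = x → c x = x → ∃ y : F, x = algebraMap F K y := by
    intro x hg hc
    have : x ∈ (⊥ : IntermediateField F K) := by
      rw [IsGalois.mem_bot_iff_fixed]
      intro s
      rcases hall s with rfl | rfl | rfl | rfl | rfl | rfl <;> simp [hg, hc]
    obtain ⟨y, hy⟩ := IntermediateField.mem_bot.1 this
    exact ⟨y, hy.symm⟩
  obtain ⟨e₁, h₁⟩ := hfix (a + b + d) (by simp only [map_add, hga, hgb, hgd]; ring)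
    (by simp only [map_add, ← hb, ← hd, hcd]; ring)
  obtain ⟨e₂, h₂⟩ := hfix (a * b + b * d + d * a)
    (by simp only [map_add, map_mul, hga, hgb, hgd]; ring)
    (by simp only [map_add, map_mul, ← hb, ← hd, hcd]; ring)
  obtain ⟨e₃, h₃⟩ := hfix (a * b * d)
    (by simp only [map_mul, hga, hgb, hgd]; ring)
    (by simp only [map_mul, ← hb, ← hd, hcd]; ring)
  have hcz : CharZero K := charZero_of_injective_algebraMap (algebraMap F K).injective
  have hq : ∀ y z : F, a ^ 2 + algebraMap F K y * a + algebraMap F K z ≠ 0 := by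
    intro y z h
    have h' : b ^ 2 + algebraMap F K y * b + algebraMap F K z = 0 := by
      have := congrArg c h
      simpa only [map_add, map_mul, map_pow, AlgEquiv.commutes, map_zero, ← hb] using this
    have h'' : d ^ 2 + algebraMap F K y * d + algebraMap F K z = 0 := by
      have := congrArg c h'
      simpa only [map_add, map_mul, map_pow, AlgEquiv.commutes, map_zero, ← hd] using this
    have k1 : (b - a) * (b + a + algebraMap F K y) = 0 := by linear_combination h' - h
    have k2 : (d - b) * (d + b + algebraMap F K y) = 0 := by linear_combination h'' - h'
    have k3 := (mul_eq_zero.1 k1).resolve_left (sub_ne_zero.2 hba)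
    have k4 := (mul_eq_zero.1 k2).resolve_left (sub_ne_zero.2 hdb)
    exact had (by linear_combination k3 - k4)
  refine ⟨a, b, d, e₁, e₂, e₃, h₁, h₂, h₃, ?_, hq, ?_, ?_, ?_⟩
  · intro y hy
    have h' := congrArg g hy
    simp only [map_add, map_sub, map_mul, map_pow, AlgEquiv.commutes, hga, hgb, hgd] at h'
    rw [hy] at h'
    have : (b - a) * ((d - b) * (a - d)) = 0 := by
      linear_combination h' / 2
    simp [sub_eq_zero, hba, hdb, had] at this
  · intro y z h
    apply hq y z
    have := congrArg c (congrArg c h)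
    simpa only [map_add, map_mul, map_pow, AlgEquiv.commutes, map_zero, ← hd, hcd] using this
  · intro y z h
    apply hq y z
    have := congrArg c h
    simpa only [map_add, map_mul, map_pow, AlgEquiv.commutes, map_zero, ← hd, hcd] using this
  · intro N ha hb' hd'
    have hN : N.fixingSubgroup = ⊥ := by
      rw [eq_bot_iff]
      intro s hs
      have fa : s a = a := hs ⟨a, ha⟩
      have fb : s b = b := hs ⟨b, hb'⟩
      have fd : s d = d := hs ⟨d, hd'⟩
      rcases hall s with rfl | rfl | rfl | rfl | rfl | rfl
      · exact one_mem _
      · exact absurd (hb.trans fa) hba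
      · simp only [AlgEquiv.mul_apply, ← hb, ← hd] at fa
        exact absurd fa.symm had
      · exact absurd (hgb.symm.trans fb) hdb
      · simp only [AlgEquiv.mul_apply, hga, ← hb] at fa
        exact absurd fa hba
      · simp only [AlgEquiv.mul_apply, hga, ← hb, ← hd] at fa
        exact absurd fa.symm had
    rw [← IsGalois.fixedField_fixingSubgroup N, hN]
    exact fixedField_bot

end field_part

theorem stmt1 (p : ℕ) [Fact p.Prime] (hp : p ≠ 3)
    (F : Type*) [Field F] [Algebra ℚ_[p] F] [FiniteDimensional ℚ_[p] F]
    (hμ3 : ¬ ∃ ζ : F, IsPrimitiveRoot ζ 3) :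
    nu F (Equiv.Perm (Fin 3)) = 1 := by
  have hinjp := (algebraMap ℚ_[p] F).injective
  have hcz : CharZero F := charZero_of_injective_algebraMap hinjp
  have hμ : ∀ z : F, z ^ 3 = 1 → z = 1 := by
    intro z hz
    by_contra hne
    apply hμ3
    refine ⟨z, ?_⟩
    have := orderOf_eq_prime hz hne
    rw [← this]
    exact IsPrimitiveRoot.orderOf z
  obtain ⟨⟨π, hπ⟩, hF⟩ := cubes_padic p hp F hμ
  let Ω := AlgebraicClosure F
  have hczΩ : CharZero Ω := charZero_of_injective_algebraMap (algebraMap F Ω).injective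
  obtain ⟨r, hr⟩ := IsAlgClosed.exists_pow_nat_eq (algebraMap F Ω π) (n := 3) (by norm_num)
  obtain ⟨s, hs⟩ := IsAlgClosed.exists_pow_nat_eq (-3 : Ω) (n := 2) (by norm_num)
  obtain ⟨ζ, hζdef⟩ : ∃ ζ : Ω, ζ = (s - 1) / 2 := ⟨_, rfl⟩
  have hζ : ζ ^ 2 + ζ + 1 = 0 := by
    rw [hζdef]; linear_combination hs / 4
  have hζF : ∀ y : F, algebraMap F Ω y ≠ ζ := by
    intro y hy
    have h0 : y ^ 2 + y + 1 = 0 := by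
      apply (algebraMap F Ω).injective
      simp only [map_add, map_pow, map_one, map_zero, hy, hζ]
    have h1 := hμ y (by linear_combination (y - 1) * h0)
    rw [h1] at h0
    norm_num at h0
  obtain ⟨M, hζM, hrM, hfd, hgal, h6, hiso⟩ := exists_S3 π hπ ζ hζ hζF r hr
  have hX : ∀ X : IntermediateField F Ω, FiniteDimensional F X → (∀ z : X, z ^ 3 = 1 → z = 1) →
      ∀ a b : X, IsCube a ∨ IsCube b ∨ IsCube (a * b) ∨ IsCube (a * b ^ 2) := by
    intro X hXf hXμ
    have : FiniteDimensional ℚ_[p] X := FiniteDimensional.trans ℚ_[p] F X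
    exact (cubes_padic p hp X hXμ).2
  unfold nu
  rw [Nat.card_eq_one_iff_exists]
  refine ⟨⟨M, hfd, hgal, hiso⟩, ?_⟩
  rintro ⟨K, hKfd, hKgal, ⟨e⟩⟩
  apply Subtype.ext
  change K = M
  have hK6 : Module.finrank F K = 6 := by
    rw [← IsGalois.card_aut_eq_finrank F K, Nat.card_congr e.toEquiv, Nat.card_eq_fintype_card,
      Fintype.card_perm]
    rfl
  refine IntermediateField.eq_of_le_of_finrank_eq ?_ (hK6.trans h6.symm)
  obtain ⟨a₁, a₂, a₃, e₁, e₂, e₃, h₁, h₂, h₃, hδ, hq₁, hq₂, hq₃, hN⟩ := roots_data e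
  have hinj : Function.Injective (algebraMap K Ω) := (algebraMap K Ω).injective
  have hφ : ∀ y : F, algebraMap F Ω y = algebraMap K Ω (algebraMap F K y) :=
    fun y => IsScalarTower.algebraMap_apply F K Ω y
  obtain ⟨m1, m2, m3⟩ := core hX hF π hπ ζ hζ hζF r hr M hζM hrM
    (algebraMap K Ω a₁) (algebraMap K Ω a₂) (algebraMap K Ω a₃) e₁ e₂ e₃
    (by rw [hφ, ← h₁]; simp only [map_add, map_mul])
    (by rw [hφ, ← h₂]; simp only [map_add, map_mul])
    (by rw [hφ, ← h₃]; simp only [map_mul])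
    (fun y hy => hδ y (hinj (by
      rw [← hφ, hy]; simp only [map_add, map_sub, map_mul, map_pow])))
    (fun y z h => hq₁ y z (hinj (by
      simp only [map_add, map_mul, map_pow, map_zero, ← hφ]; exact h)))
    (fun y z h => hq₂ y z (hinj (by
      simp only [map_add, map_mul, map_pow, map_zero, ← hφ]; exact h)))
    (fun y z h => hq₃ y z (hinj (by
      simp only [map_add, map_mul, map_pow, map_zero, ← hφ]; exact h)))
  have htop := hN (M.comap K.val) m1 m2 m3
  intro x hx
  have : (⟨x, hx⟩ : K) ∈ M.comap K.val := by rw [htop]; trivial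
  exact this
end

section
/- Let F be a finite extension of ℚ₃ of degree m that does not contain a primitive cube root of unity. Then ν(F,S₃) = (5·3^m − 3)/2, i.e. ν(F,S₃) = 3^m + (3^{m+1} − 3)/2. -/
open Polynomial
section local_field
set_option linter.unusedSectionVars false
variable {E : Type*} [NormedField E] [NormedAlgebra ℚ_[3] E] [FiniteDimensional ℚ_[3] E]

lemma norm_three' : ‖(3 : E)‖ = 1/3 := by
  have h : ‖algebraMap ℚ_[3] E 3‖ = ‖(3 : ℚ_[3])‖ := norm_algebraMap' E _
  have h2 := Padic.norm_p (p := 3)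
  simp only [map_ofNat] at h
  rw [h]
  simpa using h2

lemma reduction_map [IsUltrametricDist E] : ∃ c : E → (Fin (Module.finrank ℚ_[3] E) → ZMod 3),
    (∀ x y, ‖x‖ ≤ 1 → ‖y‖ ≤ 1 → c (x + y) = c x + c y) ∧
    (∀ v, ∃ x, ‖x‖ ≤ 1 ∧ c x = v) ∧ ∀ x, ‖x‖ ≤ 1 → (c x = 0 ↔ ‖x‖ ≤ 1/3) := by
  classical
  let : Algebra ℤ_[3] E := ((algebraMap ℚ_[3] E).comp (algebraMap ℤ_[3] ℚ_[3])).toAlgebra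
  have : IsScalarTower ℤ_[3] ℚ_[3] E := IsScalarTower.of_algebraMap_eq (fun _ => rfl)
  have hIntg : ∀ x : E, IsIntegral ℤ_[3] x ↔ ‖x‖ ≤ 1 := by
    intro x
    rw [NormedAlgebra.norm_eq_spectralNorm ℚ_[3], spectralNorm,
      spectralValue_le_one_iff (minpoly.monic (Algebra.IsIntegral.isIntegral x))]
    constructor
    · intro h n
      rw [minpoly.isIntegrallyClosed_eq_field_fractions' ℚ_[3] h, coeff_map]
      exact PadicInt.norm_le_one _
    · intro h
      have : minpoly ℚ_[3] x ∈ Polynomial.lifts (algebraMap ℤ_[3] ℚ_[3]) := by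
        rw [Polynomial.lifts_iff_coeff_lifts]
        intro n
        exact ⟨⟨_, h n⟩, rfl⟩
      obtain ⟨q, hq, -, hqm⟩ := Polynomial.lifts_and_natDegree_eq_and_monic this
        (minpoly.monic (Algebra.IsIntegral.isIntegral x))
      refine ⟨q, hqm, ?_⟩
      have : aeval x (q.map (algebraMap ℤ_[3] ℚ_[3])) = 0 := by rw [hq, minpoly.aeval]
      rwa [aeval_map_algebraMap] at this
  let C := integralClosure ℤ_[3] E
  have : Module.IsTorsionFree ℤ_[3] E := by
    rw [Module.isTorsionFree_iff_algebraMap_injective]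
    exact (algebraMap ℚ_[3] E).injective.comp (IsFractionRing.injective ℤ_[3] ℚ_[3])
  have : Module.Free ℤ_[3] C := IsIntegralClosure.module_free ℤ_[3] ℚ_[3] E C
  have : IsNoetherian ℤ_[3] C := IsIntegralClosure.isNoetherian ℤ_[3] ℚ_[3] E C
  have hr : Module.finrank ℤ_[3] C = Module.finrank ℚ_[3] E := IsIntegralClosure.rank ℤ_[3] ℚ_[3] E C
  let b := Module.finBasisOfFinrankEq ℤ_[3] C hr
  have hm : ∀ {x : E}, ‖x‖ ≤ 1 → x ∈ C := fun {x} h => (hIntg x).2 h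
  refine ⟨fun x => if h : ‖x‖ ≤ 1 then fun i => PadicInt.toZMod (b.repr ⟨x, hm h⟩ i) else 0, ?_, ?_, ?_⟩
  · intro x y hx hy
    have hxy : ‖x + y‖ ≤ 1 := (IsUltrametricDist.norm_add_le_max x y).trans (max_le hx hy)
    simp only [dif_pos hx, dif_pos hy, dif_pos hxy]
    have : (⟨x + y, hm hxy⟩ : C) = ⟨x, hm hx⟩ + ⟨y, hm hy⟩ := rfl
    funext i
    rw [this, map_add]
    exact map_add PadicInt.toZMod _ _
  · intro v
    let z : C := b.equivFun.symm (fun i => ((v i).val : ℤ_[3]))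
    have hz : ‖(z : E)‖ ≤ 1 := (hIntg _).1 z.2
    refine ⟨z, hz, ?_⟩
    simp only [dif_pos hz]
    ext i
    have : b.repr z i = ((v i).val : ℤ_[3]) := by
      rw [← Module.Basis.equivFun_apply, LinearEquiv.apply_symm_apply]
    change PadicInt.toZMod (b.repr z i) = _
    rw [this]; simp
  · intro x hx
    simp only [dif_pos hx]
    have h3 : ‖(3:E)‖ = 1/3 := norm_three'
    have h30 : (3:E) ≠ 0 := by intro h; rw [h] at h3; norm_num at h3
    have hker : ∀ a : ℤ_[3], PadicInt.toZMod a = 0 ↔ ∃ t, a = 3 * t := by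
      intro a
      rw [← RingHom.mem_ker, PadicInt.ker_toZMod, PadicInt.maximalIdeal_eq_span_p,
        Ideal.mem_span_singleton]
      rfl
    constructor
    · intro h
      have h' : ∀ i, ∃ t, b.repr ⟨x, hm hx⟩ i = 3 * t := fun i => (hker _).1 (congrFun h i)
      choose t ht using h'
      have : (⟨x, hm hx⟩ : C) = (3 : ℤ_[3]) • b.equivFun.symm t := by
        apply b.equivFun.injective
        ext i
        rw [map_smul, LinearEquiv.apply_symm_apply, Module.Basis.equivFun_apply, ht]
        rfl
      have h2 : x = 3 * (b.equivFun.symm t : C) := by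
        have := congrArg (Subtype.val) this
        rw [Algebra.smul_def] at this
        change x = algebraMap ℤ_[3] E 3 * _ at this
        rwa [map_ofNat] at this
      rw [h2, norm_mul, h3]
      have := (hIntg _).1 (b.equivFun.symm t : C).2
      linarith
    · intro h
      have hy : ‖x / 3‖ ≤ 1 := by rw [norm_div, h3]; linarith
      have : (⟨x, hm hx⟩ : C) = (3 : ℤ_[3]) • ⟨x/3, hm hy⟩ := by
        apply Subtype.ext
        rw [Algebra.smul_def]
        change x = algebraMap ℤ_[3] E 3 * (x/3)
        rw [map_ofNat]; field_simp
      ext i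
      rw [this, map_smul]
      simp only [Finsupp.smul_apply, smul_eq_mul, Pi.zero_apply]
      exact (hker _).2 ⟨_, rfl⟩


lemma contraction [CompleteSpace E] (g : E → E) (hg : ∀ x, ‖x‖ ≤ 1 → ‖g x‖ ≤ 1)
    (hc : ∀ x y, ‖x‖ ≤ 1 → ‖y‖ ≤ 1 → ‖g x - g y‖ ≤ 1/3 * ‖x - y‖) :
    ∃ x, ‖x‖ ≤ 1 ∧ g x = x := by
  have hs : IsComplete {x : E | ‖x‖ ≤ 1} := by
    apply IsClosed.isComplete
    exact isClosed_le continuous_norm continuous_const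
  have hm : Set.MapsTo g {x : E | ‖x‖ ≤ 1} {x : E | ‖x‖ ≤ 1} := fun x hx => hg x hx
  have hK : ContractingWith (1/3 : NNReal) (hm.restrict g _ _) := by
    refine ⟨by rw [← NNReal.coe_lt_coe]; norm_num, ?_⟩
    apply LipschitzWith.of_dist_le_mul
    rintro ⟨x, hx⟩ ⟨y, hy⟩
    change dist (g x) (g y) ≤ _ * dist x y
    rw [dist_eq_norm, dist_eq_norm]
    simpa using hc x y hx hy
  obtain ⟨y, hy, hf, -⟩ := hK.exists_fixedPoint' hs hm (x := 0) (by simp) (edist_ne_top _ _)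
  exact ⟨y, hy, hf⟩

/-- the k-th unit group with respect to 3. -/
def UU (E : Type*) [NormedField E] [IsUltrametricDist E] (k : ℕ) : Subgroup Eˣ where
  carrier := {u | ‖(u : E)‖ = 1 ∧ ‖(u : E) - 1‖ ≤ (1/3)^k}
  one_mem' := by simp
  mul_mem' := by
    rintro a b ⟨ha, ha'⟩ ⟨hb, hb'⟩
    refine ⟨by simp [ha, hb], ?_⟩
    have : ((a * b : Eˣ) : E) - 1 = a * (b - 1) + (a - 1) := by push_cast; ring
    rw [this]
    refine (IsUltrametricDist.norm_add_le_max _ _).trans (max_le ?_ ha')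
    rw [norm_mul, ha, one_mul]; exact hb'
  inv_mem' := by
    rintro a ⟨ha, ha'⟩
    refine ⟨by simp [ha], ?_⟩
    have : ((a⁻¹ : Eˣ) : E) - 1 = -(a⁻¹ : Eˣ) * (a - 1) := by
      simp [mul_sub]; ring
    rw [this, norm_mul]
    simpa [ha] using ha'

variable [IsUltrametricDist E]

lemma three_ne : (3 : E) ≠ 0 := by
  intro h; have := norm_three' (E := E); rw [h] at this; norm_num at this

lemma norm_one_of_near {x : E} (h : ‖x - 1‖ < 1) : ‖x‖ = 1 := by
  have : x = (x - 1) + 1 := by ring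
  rw [this, IsUltrametricDist.norm_add_eq_max_of_norm_ne_norm (by simpa using h.ne)]
  simpa using h.le

lemma mem_UU {k : ℕ} (hk : 1 ≤ k) (u : Eˣ) : u ∈ UU E k ↔ ∃ y : E, ‖y‖ ≤ 1 ∧ (u : E) = 1 + 3 ^ k * y := by
  have h3 := norm_three' (E := E)
  constructor
  · rintro ⟨-, h⟩
    refine ⟨(u - 1) / 3 ^ k, ?_, ?_⟩
    · rw [norm_div, norm_pow, h3]
      exact div_le_one_of_le₀ h (by positivity)
    · have := three_ne (E := E)
      field_simp; ring
  · rintro ⟨y, hy, hu⟩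
    have h1 : ‖(u : E) - 1‖ ≤ (1/3)^k := by
      rw [hu, add_sub_cancel_left, norm_mul, norm_pow, h3]
      exact mul_le_of_le_one_right (by positivity) hy
    refine ⟨norm_one_of_near (h1.trans_lt ?_), h1⟩
    exact pow_lt_one₀ (by norm_num) (by norm_num) (by omega)

lemma nle {x y : E} {r : ℝ} (hx : ‖x‖ ≤ r) (hy : ‖y‖ ≤ r) : ‖x + y‖ ≤ r :=
  (IsUltrametricDist.norm_add_le_max _ _).trans (max_le hx hy)
lemma nle' {x y : E} {r : ℝ} (hx : ‖x‖ ≤ r) (hy : ‖y‖ ≤ r) : ‖x - y‖ ≤ r := by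
  rw [sub_eq_add_neg]; exact nle hx (by simpa using hy)

lemma sq_surj [CompleteSpace E] (u : Eˣ) (hu : u ∈ UU E 1) : ∃ v ∈ UU E 1, v ^ 2 = u := by
  obtain ⟨z, hz, hu⟩ := (mem_UU le_rfl u).1 hu
  have h3 := norm_three' (E := E)
  have h2 : ‖(2 : E)‖ = 1 := by
    rw [← norm_neg]
    apply norm_one_of_near
    rw [show (-2 - 1 : E) = -3 by norm_num, norm_neg, h3]
    norm_num
  have h20 : (2 : E) ≠ 0 := by intro h; rw [h] at h2; norm_num at h2
  obtain ⟨y, hy, hfix⟩ := contraction (fun y : E => z / 2 - 3 * (y ^ 2 / 2)) (by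
    intro x hx
    refine nle' (by rw [norm_div, h2]; simpa using hz) ?_
    rw [norm_mul, norm_div, h2, h3, norm_pow]
    nlinarith [norm_nonneg x]) (by
    intro x y hx hy
    have : (z / 2 - 3 * (x ^ 2 / 2)) - (z / 2 - 3 * (y ^ 2 / 2)) = 3 * ((y + x) * (y - x) / 2) := by
      ring
    simp only [this]
    rw [norm_mul, norm_div, h2, h3, norm_mul, norm_sub_rev x y]
    have := nle hy hx
    nlinarith [norm_nonneg (y - x)])
  have hv : (1 + 3 * y) ^ 2 = (u : E) := by
    rw [hu]
    have : 2 * y = z - 3 * y ^ 2 := by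
      nth_rw 1 [← hfix]; field_simp
    linear_combination 3 * this
  have hne : (1 + 3 * y) ≠ 0 := by
    intro h; rw [h] at hv; exact u.ne_zero (by rw [← hv]; simp)
  refine ⟨Units.mk0 _ hne, (mem_UU le_rfl _).2 ⟨y, hy, by simp⟩, Units.ext (by simpa using hv)⟩

lemma cube_surj [CompleteSpace E] (u : Eˣ) (hu : u ∈ UU E 2) : ∃ v ∈ UU E 1, v ^ 3 = u := by
  obtain ⟨z, hz, hu⟩ := (mem_UU (by norm_num) u).1 hu
  have h3 := norm_three' (E := E)
  obtain ⟨y, hy, hfix⟩ := contraction (fun y : E => z - 3 * (y ^ 2 + y ^ 3)) (by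
    intro x hx
    refine nle' hz ?_
    have : ‖x ^ 2 + x ^ 3‖ ≤ 1 := nle (by rw [norm_pow]; exact pow_le_one₀ (norm_nonneg _) hx)
      (by rw [norm_pow]; exact pow_le_one₀ (norm_nonneg _) hx)
    rw [norm_mul, h3]
    linarith) (by
    intro x y hx hy
    have : (z - 3 * (x ^ 2 + x ^ 3)) - (z - 3 * (y ^ 2 + y ^ 3)) =
      3 * ((y + x + (y * y + x * y + x * x)) * (y - x)) := by
      ring
    simp only [this]
    rw [norm_mul, h3, norm_mul, norm_sub_rev x y]
    have h2 : ∀ a b : E, ‖a‖ ≤ 1 → ‖b‖ ≤ 1 → ‖a * b‖ ≤ 1 := fun a b ha hb => by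
      rw [norm_mul]; exact mul_le_one₀ ha (norm_nonneg _) hb
    have := nle (nle hy hx) (nle (nle (h2 _ _ hy hy) (h2 _ _ hx hy)) (h2 _ _ hx hx))
    nlinarith [norm_nonneg (y - x)])
  have hv : (1 + 3 * y) ^ 3 = (u : E) := by
    rw [hu]
    have : y = z - 3 * (y ^ 2 + y ^ 3) := hfix.symm
    linear_combination 9 * this
  have hne : (1 + 3 * y) ≠ 0 := by
    intro h; rw [h] at hv; exact u.ne_zero (by rw [← hv]; simp)
  refine ⟨Units.mk0 _ hne, (mem_UU le_rfl _).2 ⟨y, hy, by simp⟩, Units.ext (by simpa using hv)⟩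

lemma cube_mem (u : Eˣ) (hu : u ∈ UU E 1) : u ^ 3 ∈ UU E 2 := by
  obtain ⟨y, hy, hu⟩ := (mem_UU le_rfl u).1 hu
  refine (mem_UU (by norm_num) _).2 ⟨y + 3 * (y ^ 2 + y ^ 3), ?_, ?_⟩
  · refine nle hy ?_
    have : ‖y ^ 2 + y ^ 3‖ ≤ 1 := nle (by rw [norm_pow]; exact pow_le_one₀ (norm_nonneg _) hy)
      (by rw [norm_pow]; exact pow_le_one₀ (norm_nonneg _) hy)
    rw [norm_mul, norm_three']
    linarith
  · push_cast; rw [hu]; ring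

lemma relIndex_UU : (UU E 2).relIndex (UU E 1) = 3 ^ (Module.finrank ℚ_[3] E) := by
  obtain ⟨c, hadd, hsurj, hker⟩ := reduction_map (E := E)
  have h3 := norm_three' (E := E)
  have h30 := three_ne (E := E)
  have hb : ∀ u : UU E 1, ‖(((u : Eˣ) : E) - 1) / 3‖ ≤ 1 := by
    rintro ⟨u, h1, h2⟩
    rw [norm_div, h3]
    norm_num at h2 ⊢
    linarith
  let f : UU E 1 →* Multiplicative (Fin (Module.finrank ℚ_[3] E) → ZMod 3) :=
    MonoidHom.mk' (fun u => Multiplicative.ofAdd (c ((((u : Eˣ) : E) - 1) / 3))) (by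
      intro a b
      rw [← ofAdd_add]
      congr 1
      have e : ((((a * b : UU E 1) : Eˣ) : E) - 1) / 3 =
        ((((a : Eˣ) : E) - 1) / 3 + (((b : Eˣ) : E) - 1) / 3) +
          3 * (((((a : Eˣ) : E) - 1) / 3) * ((((b : Eˣ) : E) - 1) / 3)) := by
        push_cast; field_simp; ring
      have h5 : ‖3 * (((((a : Eˣ) : E) - 1) / 3) * ((((b : Eˣ) : E) - 1) / 3))‖ ≤ 1/3 := by
        rw [norm_mul, h3, norm_mul]
        have := mul_le_one₀ (hb a) (norm_nonneg _) (hb b)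
        linarith
      have h6 := h5.trans (by norm_num : (1/3:ℝ) ≤ 1)
      rw [e, hadd _ _ (nle (hb a) (hb b)) h6, hadd _ _ (hb a) (hb b), (hker _ h6).2 h5, add_zero])
  have hf : f.ker = (UU E 2).subgroupOf (UU E 1) := by
    ext u
    rw [MonoidHom.mem_ker, Subgroup.mem_subgroupOf]
    change c ((((u : Eˣ) : E) - 1) / 3) = 0 ↔ _
    rw [hker _ (hb u), norm_div, h3]
    constructor
    · intro h
      refine ⟨u.2.1, ?_⟩
      have := (div_le_iff₀ (by norm_num)).1 h
      norm_num at this ⊢; linarith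
    · rintro ⟨-, h⟩
      rw [div_le_iff₀ (by norm_num)]
      norm_num at h ⊢; linarith
  have hs : Function.Surjective f := by
    intro v
    obtain ⟨x, hx, hv⟩ := hsurj v.toAdd
    have hne : (1 + 3 * x) ≠ 0 := by
      intro h
      have : (3 : E) * x = -1 := by linear_combination h
      have := congrArg norm this
      rw [norm_mul, h3, norm_neg, norm_one] at this
      linarith
    refine ⟨⟨Units.mk0 _ hne, (mem_UU le_rfl _).2 ⟨x, hx, by simp⟩⟩, ?_⟩
    change Multiplicative.ofAdd (c _) = v
    simp only [Units.val_mk0, add_sub_cancel_left, mul_div_cancel_left₀ x h30, hv]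
    rfl
  rw [Subgroup.relIndex, ← hf, Subgroup.index_ker, MonoidHom.range_eq_top.2 hs, Subgroup.card_top]
  rw [Nat.card_congr Multiplicative.toAdd]
  simp

end local_field

section local_field2
set_option linter.unusedSectionVars false

lemma pow_range_index {A : Type*} [CommGroup A] (B : Subgroup A) (n : ℕ) (hB : B.index ≠ 0)
    (hk : B ⊓ (powMonoidHom n : A →* A).ker = ⊥) :
    (powMonoidHom n : A →* A).range.index =
      (B.map (powMonoidHom n)).relIndex B * Nat.card (powMonoidHom n : A →* A).ker := by
  set f : A →* A := powMonoidHom n with hf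
  have h1 := Subgroup.index_map B f
  have hle : B.map f ≤ B := by
    rintro _ ⟨b, hb, rfl⟩
    exact B.pow_mem hb n
  have h2 := Subgroup.relIndex_mul_index hle
  have h3 : B.relIndex (B ⊔ f.ker) = Nat.card f.ker := by
    rw [Subgroup.relIndex_sup_left, ← Subgroup.inf_relIndex_right, hk, Subgroup.relIndex_bot_left]
  have h4 := Subgroup.relIndex_mul_index (le_sup_left : B ≤ B ⊔ f.ker)
  rw [h3] at h4
  have h5 : (B ⊔ f.ker).index ≠ 0 := fun h => hB (by rw [← h4, h, mul_zero])
  apply Nat.eq_of_mul_eq_mul_left (Nat.pos_of_ne_zero h5)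
  rw [← h1, ← h2, ← h4]; ring

lemma relIndex_map_pow {A C : Type*} [CommGroup A] [CommGroup C] (g : C →* A)
    (hg : Function.Injective g) (n : ℕ) :
    (g.range.map (powMonoidHom n)).relIndex g.range = (powMonoidHom n : C →* C).range.index := by
  have : g.range.map (powMonoidHom n) = (powMonoidHom n : C →* C).range.map g := by
    rw [MonoidHom.map_range, MonoidHom.map_range]
    congr 1
    ext x; simp
  rw [this, MonoidHom.range_eq_map g, Subgroup.relIndex_map_map_of_injective _ _ hg,
    Subgroup.relIndex_top_right]

lemma pow_prod_range {A C : Type*} [CommGroup A] [CommGroup C] (n : ℕ) :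
    (powMonoidHom n : A × C →* A × C).range =
      Subgroup.prod (powMonoidHom n : A →* A).range (powMonoidHom n : C →* C).range := by
  ext ⟨a, c⟩
  constructor
  · rintro ⟨⟨x, y⟩, h⟩
    exact ⟨⟨x, congrArg Prod.fst h⟩, ⟨y, congrArg Prod.snd h⟩⟩
  · rintro ⟨⟨x, hx⟩, ⟨y, hy⟩⟩
    exact ⟨(x, y), Prod.ext hx hy⟩

lemma index_pow_int (n : ℕ) : (powMonoidHom n : Multiplicative ℤ →* Multiplicative ℤ).range.index = n := by
  have h := Int.index_zmultiples (n : ℤ)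
  rw [Int.natAbs_natCast] at h
  rw [← h, ← AddSubgroup.index_toSubgroup]
  congr 1
  ext x
  simp only [MonoidHom.mem_range, powMonoidHom_apply]
  change _ ↔ x.toAdd ∈ AddSubgroup.zmultiples (n : ℤ)
  rw [Int.mem_zmultiples_iff]
  constructor
  · rintro ⟨y, rfl⟩
    exact ⟨y.toAdd, by simp⟩
  · rintro ⟨y, hy⟩
    exact ⟨Multiplicative.ofAdd y, by apply Multiplicative.toAdd.injective; simp [hy]⟩

variable {E : Type*} [NormedField E] [NormedAlgebra ℚ_[3] E] [FiniteDimensional ℚ_[3] E]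
 [IsUltrametricDist E]

variable (E) in
/-- parametrization of the subgroup generated by 3 and U_1. -/
noncomputable def BB : Multiplicative ℤ × UU E 1 →* Eˣ :=
  MonoidHom.coprod (zpowersHom _ (Units.mk0 (3 : E) three_ne)) (UU E 1).subtype

lemma BB_apply (n : ℤ) (u : UU E 1) :
   BB E (Multiplicative.ofAdd n, u) = (Units.mk0 (3 : E) three_ne) ^ n * u := by
  simp [BB]

lemma BB_norm (n : ℤ) (u : UU E 1) : ‖(BB E (Multiplicative.ofAdd n, u) : E)‖ = (1/3 : ℝ) ^ n := by
  rw [BB_apply]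
  push_cast
  rw [norm_mul, norm_zpow, Units.val_mk0, norm_three', u.2.1, mul_one]

lemma zpow_third {n : ℤ} (h : (1/3 : ℝ) ^ n = 1) : n = 0 :=
  (zpow_eq_one_iff_right₀ (by norm_num) (by norm_num)).1 h

lemma BB_inj : Function.Injective (BB E) := by
  rw [injective_iff_map_eq_one]
  rintro ⟨n, u⟩ h
  have h1 := BB_norm n.toAdd u
  rw [ofAdd_toAdd, h] at h1
  simp only [Units.val_one, norm_one] at h1
  have h2 := zpow_third h1.symm
  obtain rfl : n = 1 := h2
  have h3 := BB_apply 0 u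
  rw [ofAdd_zero, h, zpow_zero, one_mul] at h3
  exact Prod.ext rfl (Subtype.ext h3.symm)

lemma BB_index : (BB E).range.index ≠ 0 := by
  have : ProperSpace E := FiniteDimensional.proper ℚ_[3] E
  have hc : IsCompact (Metric.closedBall (0 : E) 1) := isCompact_closedBall 0 1
  obtain ⟨t, ht, hcov⟩ := Metric.totallyBounded_iff.1 hc.totallyBounded (1/9) (by norm_num)
  have h3 := norm_three' (E := E)
  have key : ∀ q : Eˣ ⧸ (BB E).range, ∃ x : Eˣ, (x : Eˣ ⧸ (BB E).range) = q ∧ 1/3 < ‖(x:E)‖ ∧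
      ∃ y ∈ t, dist (x : E) y < 1/9 := by
    intro q
    obtain ⟨x, rfl⟩ := QuotientGroup.mk_surjective q
    obtain ⟨n, hn1, hn2⟩ := exists_mem_Ioc_zpow (x := ‖(x : E)‖) (y := 3) (by simp) (by norm_num)
    have hb : ‖((x * BB E (Multiplicative.ofAdd (n + 1), 1) : Eˣ) : E)‖ = ‖(x : E)‖ / 3 ^ (n + 1) := by
      rw [Units.val_mul, norm_mul, BB_norm, one_div, inv_zpow, div_eq_mul_inv]
    have hp : (0:ℝ) < 3 ^ (n + 1) := by positivity
    have hle : ‖((x * BB E (Multiplicative.ofAdd (n + 1), 1) : Eˣ) : E)‖ ≤ 1 := by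
      rw [hb, div_le_one hp]; exact hn2
    have hmem := hcov (mem_closedBall_zero_iff.2 hle)
    simp only [Set.mem_iUnion, Metric.mem_ball, exists_prop] at hmem
    refine ⟨_, ?_, ?_, hmem⟩
    · rw [QuotientGroup.eq]
      exact ⟨(Multiplicative.ofAdd (n + 1), 1)⁻¹, by rw [map_inv]; simp⟩
    · rw [hb, lt_div_iff₀ hp, zpow_add₀ (by norm_num)]
      norm_num; linarith
  choose r hr1 hr2 y hy hd using key
  have hfin : Finite t := ht
  have : Finite (Eˣ ⧸ (BB E).range) := by
    refine Finite.of_injective (fun q => (⟨y q, hy q⟩ : t)) ?_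
    intro q q' h
    have h : y q = y q' := congrArg Subtype.val h
    rw [← hr1 q, ← hr1 q', QuotientGroup.eq]
    have h1 : ‖(r q' : E) - r q‖ ≤ 1/9 := by
      have : (r q' : E) - r q = (r q' - y q') - (r q - y q) := by rw [h]; ring
      rw [this]
      apply nle'
      · rw [← dist_eq_norm]; exact (hd q').le
      · rw [← dist_eq_norm]; exact (hd q).le
    have h2 : ‖(((r q)⁻¹ * r q' : Eˣ) : E) - 1‖ ≤ (1/3) ^ 1 := by
      have : (((r q)⁻¹ * r q' : Eˣ) : E) - 1 = ((r q' : E) - r q) / r q := by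
        push_cast; field_simp
      rw [this, norm_div, div_le_iff₀ (by linarith [hr2 q])]
      linarith [hr2 q]
    have h4 : ((r q)⁻¹ * r q') ∈ UU E 1 := ⟨norm_one_of_near (by linarith), h2⟩
    exact ⟨(Multiplicative.ofAdd 0, ⟨_, h4⟩), by rw [BB_apply]; simp⟩
  exact Nat.card_pos.ne'

lemma sq_index' [CompleteSpace E] : (powMonoidHom 2 : Eˣ →* Eˣ).range.index = 4 := by
  have h3 := norm_three' (E := E)
  have hker : ∀ x : Eˣ, x ∈ (powMonoidHom 2 : Eˣ →* Eˣ).ker ↔ x = 1 ∨ x = -1 := by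
    intro x
    rw [MonoidHom.mem_ker, powMonoidHom_apply, Units.ext_iff, Units.ext_iff, Units.ext_iff]
    push_cast
    exact sq_eq_one_iff
  have hne : (1 : Eˣ) ≠ -1 := by
    intro h
    rw [Units.ext_iff] at h
    push_cast at h
    have h2 : (3 : E) = 1 := by linear_combination h
    rw [h2, norm_one] at h3
    norm_num at h3
  have hcard : Nat.card (powMonoidHom 2 : Eˣ →* Eˣ).ker = 2 := by
    have : ((powMonoidHom 2 : Eˣ →* Eˣ).ker : Set Eˣ) = {1, -1} := by
      ext x; exact hker x
    rw [← SetLike.coe_sort_coe, this, Nat.card_coe_set_eq, Set.ncard_pair hne]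
  have hinf : (BB E).range ⊓ (powMonoidHom 2 : Eˣ →* Eˣ).ker = ⊥ := by
    rw [eq_bot_iff]
    rintro x ⟨⟨⟨n, u⟩, hx⟩, hk⟩
    rcases (hker x).1 hk with h | h
    · exact h
    · exfalso
      have h1 := BB_norm n.toAdd u
      rw [ofAdd_toAdd, hx, h] at h1
      simp only [Units.val_neg, Units.val_one, norm_neg, norm_one] at h1
      obtain rfl : n = 1 := zpow_third h1.symm
      have h4 := BB_apply 0 u
      rw [ofAdd_zero, hx, zpow_zero, one_mul, h] at h4
      have h5 := u.2.2
      rw [← h4] at h5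
      push_cast at h5
      rw [show (-1 - 1 : E) = 1 - 3 by norm_num] at h5
      have h6 : ‖(1 : E)‖ ≤ 1/3 := by
        have : (1 : E) = (1 - 3) + 3 := by ring
        rw [this]
        exact nle (by simpa using h5) h3.le
      rw [norm_one] at h6
      norm_num at h6
  have hU : (powMonoidHom 2 : UU E 1 →* UU E 1).range = ⊤ := by
    rw [MonoidHom.range_eq_top]
    rintro ⟨u, hu⟩
    obtain ⟨v, hv, h⟩ := sq_surj _ hu
    exact ⟨⟨v, hv⟩, Subtype.ext h⟩
  rw [pow_range_index (BB E).range 2 BB_index hinf, relIndex_map_pow _ BB_inj,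
    hcard, pow_prod_range, Subgroup.index_prod, index_pow_int, hU]
  simp

lemma cube_index' [CompleteSpace E] (hμ : ∀ x : E, x ^ 3 = 1 → x = 1) :
    (powMonoidHom 3 : Eˣ →* Eˣ).range.index = 3 ^ (Module.finrank ℚ_[3] E + 1) := by
  have hker : (powMonoidHom 3 : Eˣ →* Eˣ).ker = ⊥ := by
    rw [eq_bot_iff]
    intro x hx
    rw [MonoidHom.mem_ker, powMonoidHom_apply, Units.ext_iff] at hx
    exact Units.ext (hμ _ (by simpa using hx))
  have hU : (powMonoidHom 3 : UU E 1 →* UU E 1).range = (UU E 2).subgroupOf (UU E 1) := by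
    ext u
    rw [Subgroup.mem_subgroupOf]
    constructor
    · rintro ⟨v, rfl⟩
      exact cube_mem _ v.2
    · intro h
      obtain ⟨v, hv, h⟩ := cube_surj _ h
      exact ⟨⟨v, hv⟩, Subtype.ext h⟩
  rw [pow_range_index (BB E).range 3 BB_index (by rw [hker, inf_bot_eq]), relIndex_map_pow _ BB_inj,
    hker, pow_prod_range, Subgroup.index_prod, index_pow_int, hU]
  change 3 * (UU E 2).relIndex (UU E 1) * _ = _
  rw [relIndex_UU]
  simp [pow_succ, mul_comm]

end local_field2

section final
variable (E : Type*) [Field E] [Algebra ℚ_[3] E] [FiniteDimensional ℚ_[3] E]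

theorem sq_index : (powMonoidHom 2 : Eˣ →* Eˣ).range.index = 4 := by
  let := spectralNorm.normedField ℚ_[3] E
  let := spectralNorm.normedAlgebra ℚ_[3] E
  have : CompleteSpace E := spectralNorm.completeSpace ℚ_[3] E
  have : IsUltrametricDist E :=
    IsUltrametricDist.isUltrametricDist_of_isNonarchimedean_norm isNonarchimedean_spectralNorm
  exact sq_index'

theorem cube_index (hμ : ∀ x : E, x ^ 3 = 1 → x = 1) :
    (powMonoidHom 3 : Eˣ →* Eˣ).range.index = 3 ^ (Module.finrank ℚ_[3] E + 1) := by
  let := spectralNorm.normedField ℚ_[3] E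
  let := spectralNorm.normedAlgebra ℚ_[3] E
  have : CompleteSpace E := spectralNorm.completeSpace ℚ_[3] E
  have : IsUltrametricDist E :=
    IsUltrametricDist.isUltrametricDist_of_isNonarchimedean_norm isNonarchimedean_spectralNorm
  exact cube_index' hμ
end final

section galois_side
set_option linter.unusedSectionVars false
set_option linter.style.longLine false

variable {F Ω : Type*} [Field F] [Field Ω] [Algebra F Ω] [IsGalois F Ω]

/-- `K/F` is an `S₃`-extension. -/
def IsS3 (K : IntermediateField F Ω) : Prop :=
  FiniteDimensional F K ∧ IsGalois F K ∧ Nonempty ((K ≃ₐ[F] K) ≃* Equiv.Perm (Fin 3))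

lemma mem_of_fixed (K : IntermediateField F Ω) (y : Ω)
    (h : ∀ g : Ω ≃ₐ[F] Ω, (∀ x ∈ K, g x = x) → g y = y) : y ∈ K := by
  rw [← InfiniteGalois.fixedField_fixingSubgroup K]
  intro ⟨g, hg⟩
  exact h g (fun x hx => hg ⟨x, hx⟩)

lemma mem_range_of_fixed (y : Ω) (h : ∀ g : Ω ≃ₐ[F] Ω, g y = y) : ∃ a : F, algebraMap F Ω a = y := by
  have := mem_of_fixed (⊥ : IntermediateField F Ω) y (fun g _ => h g)
  exact IntermediateField.mem_bot.1 this

lemma IsS3.rho {K : IntermediateField F Ω} (hK : IsS3 K) :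
    ∃ ρ : (Ω ≃ₐ[F] Ω) →* Equiv.Perm (Fin 3), Function.Surjective ρ ∧
      (∀ g, ρ g = 1 ↔ ∀ x ∈ K, g x = x) ∧
      (∀ (A : Subgroup (Equiv.Perm (Fin 3))) (g), ρ g ∉ A →
        ∃ y ∈ K, (∀ h, ρ h ∈ A → h y = y) ∧ g y ≠ y) := by
  obtain ⟨h1, h2, ⟨e⟩⟩ := hK
  have hr : ∀ (g : Ω ≃ₐ[F] Ω) (x : K), ((AlgEquiv.restrictNormalHom K g x : K) : Ω) = g x :=
    fun g x => AlgEquiv.restrictNormal_commutes g K x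
  refine ⟨e.toMonoidHom.comp (AlgEquiv.restrictNormalHom K), ?_, ?_, ?_⟩
  · exact e.surjective.comp (AlgEquiv.restrictNormalHom_surjective Ω)
  · intro g
    simp only [MulEquiv.toMonoidHom_eq_coe, MonoidHom.coe_comp, MonoidHom.coe_coe,
      Function.comp_apply, EmbeddingLike.map_eq_one_iff]
    constructor
    · intro h x hx
      rw [← hr g ⟨x, hx⟩, h]; rfl
    · intro h
      ext x
      rw [hr, h x x.2]; rfl
  · intro A g hg
    have h3 : AlgEquiv.restrictNormalHom K g ∉ A.comap e.toMonoidHom := hg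
    rw [← IntermediateField.fixingSubgroup_fixedField (A.comap e.toMonoidHom)] at h3
    rw [IntermediateField.mem_fixingSubgroup_iff] at h3
    push Not at h3
    obtain ⟨y, hy, hne⟩ := h3
    refine ⟨y, y.2, ?_, ?_⟩
    · intro h hh
      have := hy ⟨AlgEquiv.restrictNormalHom K h, hh⟩
      rw [← hr h y]
      exact congrArg Subtype.val this
    · intro h
      apply hne
      apply Subtype.ext
      rw [hr, h]

lemma isS3_of_rho {K : IntermediateField F Ω} (hfin : FiniteDimensional F K)
    (hn : ∀ g : Ω ≃ₐ[F] Ω, ∀ x ∈ K, g x ∈ K)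
    (ρ : (Ω ≃ₐ[F] Ω) →* Equiv.Perm (Fin 3)) (hs : Function.Surjective ρ)
    (hk : ∀ g, ρ g = 1 ↔ ∀ x ∈ K, g x = x) : IsS3 K := by
  have hN : Normal F K := by
    rw [IntermediateField.normal_iff_forall_map_le']
    rintro σ _ ⟨x, hx, rfl⟩
    exact hn σ x hx
  have hr : ∀ (g : Ω ≃ₐ[F] Ω) (x : K), ((AlgEquiv.restrictNormalHom K g x : K) : Ω) = g x :=
    fun g x => AlgEquiv.restrictNormal_commutes g K x
  refine ⟨hfin, ⟨⟩, ⟨?_⟩⟩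
  have hker : (AlgEquiv.restrictNormalHom (F := F) (K₁ := Ω) K).ker = ρ.ker := by
    ext g
    rw [MonoidHom.mem_ker, MonoidHom.mem_ker, hk]
    constructor
    · intro h x hx
      rw [← hr g ⟨x, hx⟩, h]; rfl
    · intro h
      ext x
      rw [hr, h x x.2]; rfl
  exact (QuotientGroup.quotientKerEquivOfSurjective _ (AlgEquiv.restrictNormalHom_surjective Ω)).symm.trans
    ((QuotientGroup.quotientMulEquivOfEq hker).trans (QuotientGroup.quotientKerEquivOfSurjective ρ hs))

lemma IsS3.finrank {K : IntermediateField F Ω} (hK : IsS3 K) : Module.finrank F K = 6 := by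
  obtain ⟨h1, h2, ⟨e⟩⟩ := hK
  rw [← IsGalois.card_aut_eq_finrank, Nat.card_congr e.toEquiv, Nat.card_eq_fintype_card, Fintype.card_perm]
  rfl

lemma perm_cube : ∀ σ : Equiv.Perm (Fin 3), Equiv.Perm.sign σ = 1 → σ ^ 3 = 1 := by decide

lemma perm_gen : ∀ σ τ π : Equiv.Perm (Fin 3), Equiv.Perm.sign σ = -1 → Equiv.Perm.sign τ = 1 → τ ≠ 1 →
    π = 1 ∨ π = τ ∨ π = τ ^ 2 ∨ π = σ ∨ π = τ * σ ∨ π = τ ^ 2 * σ := by decide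

lemma perm_even : ∀ τ π : Equiv.Perm (Fin 3), Equiv.Perm.sign τ = 1 → τ ≠ 1 → Equiv.Perm.sign π = 1 →
    π = 1 ∨ π = τ ∨ π = τ ^ 2 := by decide

lemma sq_cases [CharZero F] (δ : Ω) (hδ : ∃ a : F, algebraMap F Ω a = δ ^ 2) (g : Ω ≃ₐ[F] Ω) :
    g δ = δ ∨ g δ = -δ := by
  obtain ⟨a, ha⟩ := hδ
  have : (g δ) ^ 2 = δ ^ 2 := by rw [← map_pow, ← ha, AlgEquiv.commutes]
  exact sq_eq_sq_iff_eq_or_eq_neg.1 this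

lemma sign_iff [CharZero F] {K : IntermediateField F Ω} (ρ : (Ω ≃ₐ[F] Ω) →* Equiv.Perm (Fin 3))
    (hk : ∀ g, ρ g = 1 ↔ ∀ x ∈ K, g x = x) (δ : Ω) (hδ : ∃ a : F, algebraMap F Ω a = δ ^ 2)
    (hδF : ¬ ∃ a : F, algebraMap F Ω a = δ) (hδK : δ ∈ K) (g : Ω ≃ₐ[F] Ω) :
    g δ = δ ↔ Equiv.Perm.sign (ρ g) = 1 := by
  have : CharZero Ω := charZero_of_injective_algebraMap (algebraMap F Ω).injective
  have h0 : δ ≠ 0 := by rintro rfl; exact hδF ⟨0, map_zero _⟩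
  have h1 : δ ≠ -δ := fun h => h0 (by
    have : 2 * δ = 0 := by linear_combination h
    simpa using this)
  have key : ∀ g : Ω ≃ₐ[F] Ω, Equiv.Perm.sign (ρ g) = 1 → g δ = δ := by
    intro g hg
    have h3 : ρ (g ^ 3) = 1 := by rw [map_pow]; exact perm_cube _ hg
    have h4 := (hk _).1 h3 δ hδK
    rcases sq_cases δ hδ g with h | h
    · exact h
    · exfalso
      have : (g ^ 3) δ = g (g (g δ)) := rfl
      rw [this, h, map_neg, h, neg_neg, h] at h4
      exact h1 h4.symm
  refine ⟨?_, key g⟩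
  intro hg
  by_contra hne
  have hne : Equiv.Perm.sign (ρ g) = -1 := (Int.units_eq_one_or _).resolve_left hne
  apply hδF
  apply mem_range_of_fixed
  intro h
  rcases Int.units_eq_one_or (Equiv.Perm.sign (ρ h)) with hh | hh
  · exact key h hh
  · have := key (g * h) (by rw [map_mul, map_mul, hne, hh]; rfl)
    have h5 : g (h δ) = δ := this
    apply g.injective
    rw [h5, hg]

lemma exists_quadratic [CharZero F] {K : IntermediateField F Ω} (hK : IsS3 K) :
    ∃ δ ∈ K, (∃ a : F, algebraMap F Ω a = δ ^ 2) ∧ ¬ ∃ a : F, algebraMap F Ω a = δ := by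
  have : CharZero Ω := charZero_of_injective_algebraMap (algebraMap F Ω).injective
  obtain ⟨ρ, hs, hk, hy⟩ := hK.rho
  obtain ⟨h, hh⟩ := hs (Equiv.swap 0 1)
  have hsg : Equiv.Perm.sign (ρ h) = -1 := by rw [hh]; decide
  obtain ⟨y, hyK, hfix, hne⟩ := hy (alternatingGroup (Fin 3)) h (by
    rw [Equiv.Perm.mem_alternatingGroup, hsg]; decide)
  have he : ∀ g, Equiv.Perm.sign (ρ g) = 1 → g y = y := fun g hg =>
    hfix g (Equiv.Perm.mem_alternatingGroup.2 hg)
  have hodd : ∀ g, Equiv.Perm.sign (ρ g) = -1 → g y = h y ∧ g (h y) = y := by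
    intro g hg
    have h1 : (h⁻¹ * g) y = y := he _ (by simp [hg, hsg])
    have h2 : (g * h) y = y := he _ (by simp [hg, hsg])
    refine ⟨?_, h2⟩
    nth_rw 2 [← h1]
    exact (AlgEquiv.apply_symm_apply h (g y)).symm
  have heven : ∀ g, Equiv.Perm.sign (ρ g) = 1 → g y = y ∧ g (h y) = h y := by
    intro g hg
    exact ⟨he g hg, (hodd (g * h) (by simp [hg, hsg])).1⟩
  refine ⟨y - h y, ?_, ?_, ?_⟩
  · apply mem_of_fixed
    intro g hg
    have := heven g (by rw [(hk g).2 hg]; simp)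
    rw [map_sub, this.1, this.2]
  · apply mem_range_of_fixed
    intro g
    rcases Int.units_eq_one_or (Equiv.Perm.sign (ρ g)) with hg | hg
    · rw [map_pow, map_sub, (heven g hg).1, (heven g hg).2]
    · rw [map_pow, map_sub, (hodd g hg).1, (hodd g hg).2]; ring
  · rintro ⟨a, ha⟩
    have h1 : h (y - h y) = y - h y := by rw [← ha, AlgEquiv.commutes]
    rw [map_sub, (hodd h hsg).2] at h1
    apply hne
    have : 2 * (h y - y) = 0 := by linear_combination h1
    simpa [sub_eq_zero] using this

end galois_side

section galois_side2
set_option linter.unusedSectionVars false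
set_option linter.style.longLine false

variable {F Ω : Type*} [Field F] [Field Ω] [Algebra F Ω] [IsGalois F Ω] [CharZero F]

/-- The basic data: a primitive cube root of unity `ω`, a square root `δ`, and `γ = √-3 δ`. -/
structure Dat (F : Type*) {Ω : Type*} [Field F] [Field Ω] [Algebra F Ω] (ω δ γ : Ω) : Prop where
  hω : ω ^ 2 + ω + 1 = 0
  hδ : ∃ a : F, algebraMap F Ω a = δ ^ 2
  hδF : ¬ ∃ a : F, algebraMap F Ω a = δ
  hγ : γ = (ω - ω ^ 2) * δ

/-- powers of `ω` -/
def Wp (ω : Ω) (i : ZMod 3) : Ω := ω ^ i.val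

namespace Dat
variable {ω δ γ : Ω}

lemma chz (D : Dat F ω δ γ) : CharZero Ω := charZero_of_injective_algebraMap (algebraMap F Ω).injective

lemma w3 (D : Dat F ω δ γ) : ω ^ 3 = 1 := by linear_combination (ω - 1) * D.hω
lemma w0 (D : Dat F ω δ γ) : ω ≠ 0 := by rintro rfl; simpa using D.hω
lemma w1 (D : Dat F ω δ γ) : ω ≠ 1 := by
  have := D.chz
  rintro rfl
  have := D.hω
  norm_num at this
lemma w12 (D : Dat F ω δ γ) : ω ≠ ω ^ 2 := by
  intro h
  have h1 : ω * (1 - ω) = 0 := by linear_combination h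
  rcases mul_eq_zero.1 h1 with h2 | h2
  · exact D.w0 h2
  · exact D.w1 (by linear_combination -h2)
lemma d0 (D : Dat F ω δ γ) : δ ≠ 0 := by rintro rfl; exact D.hδF ⟨0, map_zero _⟩
lemma g0 (D : Dat F ω δ γ) : γ ≠ 0 := by
  rw [D.hγ]; exact mul_ne_zero (sub_ne_zero.2 D.w12) D.d0
lemma gne (D : Dat F ω δ γ) : γ ≠ -γ := by
  have := D.chz
  intro h
  have : 2 * γ = 0 := by linear_combination h
  exact D.g0 (by simpa using this)
lemma dne (D : Dat F ω δ γ) : δ ≠ -δ := by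
  have := D.chz
  intro h
  have : 2 * δ = 0 := by linear_combination h
  exact D.d0 (by simpa using this)
lemma gsq (D : Dat F ω δ γ) : ∃ a : F, algebraMap F Ω a = γ ^ 2 := by
  obtain ⟨a, ha⟩ := D.hδ
  refine ⟨-3 * a, ?_⟩
  rw [D.hγ, map_mul, ha]
  simp only [map_neg, map_ofNat]
  linear_combination -δ ^ 2 * (ω ^ 2 - 3 * ω + 3) * D.hω
lemma gw (D : Dat F ω δ γ) (g : Ω ≃ₐ[F] Ω) : g ω = ω ∨ g ω = ω ^ 2 := by
  have h : (g ω) ^ 2 + g ω + 1 = 0 := by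
    have := congrArg g D.hω
    simpa using this
  have h2 : (g ω - ω) * (g ω - ω ^ 2) = 0 := by
    linear_combination h - (g ω - ω + 1) * D.hω
  rcases mul_eq_zero.1 h2 with h3 | h3
  · exact Or.inl (sub_eq_zero.1 h3)
  · exact Or.inr (sub_eq_zero.1 h3)
lemma gg (D : Dat F ω δ γ) (g : Ω ≃ₐ[F] Ω) : g γ = γ ∨ g γ = -γ := sq_cases γ D.gsq g
lemma gd (D : Dat F ω δ γ) (g : Ω ≃ₐ[F] Ω) : g δ = δ ∨ g δ = -δ := sq_cases δ D.hδ g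

lemma tab1 (D : Dat F ω δ γ) (g : Ω ≃ₐ[F] Ω) (h : g ω = ω) (h' : g γ = γ) : g δ = δ := by
  rcases D.gd g with h1 | h1
  · exact h1
  · exfalso
    rw [D.hγ] at h'
    simp only [map_mul, map_sub, map_pow, h, h1] at h'
    rw [← D.hγ, mul_neg, ← D.hγ] at h'
    exact D.gne h'.symm
lemma tab2 (D : Dat F ω δ γ) (g : Ω ≃ₐ[F] Ω) (h : g ω = ω) (h' : g γ = -γ) : g δ = -δ := by
  rcases D.gd g with h1 | h1
  · exfalso
    rw [D.hγ] at h'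
    simp only [map_mul, map_sub, map_pow, h, h1] at h'
    rw [← D.hγ] at h'
    exact D.gne h'
  · exact h1
lemma w4 (D : Dat F ω δ γ) : (ω ^ 2) ^ 2 = ω := by linear_combination ω * D.w3
lemma tab3 (D : Dat F ω δ γ) (g : Ω ≃ₐ[F] Ω) (h : g ω = ω ^ 2) (h' : g γ = γ) : g δ = -δ := by
  rcases D.gd g with h1 | h1
  · exfalso
    rw [D.hγ] at h'
    simp only [map_mul, map_sub, map_pow, h, h1, D.w4] at h'
    rw [← neg_sub, neg_mul, ← D.hγ] at h'
    exact D.gne h'.symm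
  · exact h1
lemma tab4 (D : Dat F ω δ γ) (g : Ω ≃ₐ[F] Ω) (h : g ω = ω ^ 2) (h' : g γ = -γ) : g δ = δ := by
  rcases D.gd g with h1 | h1
  · exact h1
  · exfalso
    rw [D.hγ] at h'
    simp only [map_mul, map_sub, map_pow, h, h1, D.w4] at h'
    rw [← neg_sub, neg_mul_neg, ← D.hγ] at h'
    exact D.gne h'

lemma tabd1 (D : Dat F ω δ γ) (g : Ω ≃ₐ[F] Ω) (h : g δ = δ) (h' : g ω = ω) : g γ = γ := by
  rcases D.gg g with h1 | h1
  · exact h1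
  · exact absurd (h.symm.trans (D.tab2 g h' h1)) D.dne
lemma exists_neg (D : Dat F ω δ γ) : ∃ g : Ω ≃ₐ[F] Ω, g δ = -δ := by
  by_contra h
  push Not at h
  exact D.hδF (mem_range_of_fixed δ fun g => (D.gd g).resolve_right (h g))

lemma Wadd (D : Dat F ω δ γ) (i j : ZMod 3) : Wp ω (i + j) = Wp ω i * Wp ω j := by
  have h3 := D.w3
  unfold Wp
  rw [ZMod.val_add, ← pow_add, ← Nat.mod_add_div (i.val + j.val) 3]
  rw [pow_add _ _ (3 * _), pow_mul, h3, one_pow, mul_one, Nat.mod_add_div]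
lemma Wz (D : Dat F ω δ γ) : Wp ω 0 = 1 := by simp [Wp]
lemma W1 (D : Dat F ω δ γ) : Wp ω 1 = ω := by simp [Wp, ZMod.val_one]
lemma Wneg1 (D : Dat F ω δ γ) : Wp ω (-1) = ω ^ 2 := by
  have := D.Wadd 1 1
  rw [D.W1] at this
  rw [show (-1 : ZMod 3) = 1 + 1 by decide, this, sq]
lemma Wne (D : Dat F ω δ γ) (i : ZMod 3) : Wp ω i ≠ 0 := pow_ne_zero _ D.w0
lemma Wneg (D : Dat F ω δ γ) (i : ZMod 3) : Wp ω (-i) * Wp ω i = 1 := by rw [← D.Wadd, neg_add_cancel, D.Wz]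
lemma W3 (D : Dat F ω δ γ) (i : ZMod 3) : Wp ω i ^ 3 = 1 := by
  unfold Wp; rw [← pow_mul, mul_comm, pow_mul, D.w3, one_pow]
lemma Winj (D : Dat F ω δ γ) : Function.Injective (Wp ω) := by
  have key : ∀ i : ZMod 3, Wp ω i = 1 → i = 0 := by
    intro i
    have : i = 0 ∨ i = 1 ∨ i = -1 := by revert i; decide
    rcases this with rfl | rfl | rfl
    · simp
    · rw [D.W1]; exact fun h => absurd h D.w1
    · rw [D.Wneg1]; intro h; exact absurd (show ω = 1 by rw [← D.w4, h, one_pow]) D.w1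
  intro i j h
  have : Wp ω (-j + i) = 1 := by rw [D.Wadd, h, D.Wneg]
  have := key _ this
  linear_combination this
lemma gW1 (D : Dat F ω δ γ) (g : Ω ≃ₐ[F] Ω) (h : g ω = ω) (i : ZMod 3) : g (Wp ω i) = Wp ω i := by
  unfold Wp; rw [map_pow, h]
lemma gW2 (D : Dat F ω δ γ) (g : Ω ≃ₐ[F] Ω) (h : g ω = ω ^ 2) (i : ZMod 3) : g (Wp ω i) = Wp ω (-i) := by
  have : g (Wp ω i) = Wp ω i * Wp ω i := by
    unfold Wp; rw [map_pow, h, ← pow_mul, two_mul, pow_add]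
  rw [this, ← D.Wadd]; congr 1; clear this; revert i; decide
lemma cube_eq (D : Dat F ω δ γ) {x y : Ω} (h : x ^ 3 = y ^ 3) : ∃ i : ZMod 3, x = Wp ω i * y := by
  have h2 : (x - y) * ((x - ω * y) * (x - ω ^ 2 * y)) = 0 := by
    linear_combination h - (x^2*y - x*y^2*ω) * D.hω - y ^ 3 * D.w3
  rcases mul_eq_zero.1 h2 with h3 | h3
  · exact ⟨0, by rw [D.Wz]; linear_combination h3⟩
  rcases mul_eq_zero.1 h3 with h3 | h3
  · exact ⟨1, by rw [D.W1]; linear_combination h3⟩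
  · exact ⟨-1, by rw [D.Wneg1]; linear_combination h3⟩
end Dat
end galois_side2

section galois_side3
set_option linter.unusedSectionVars false
set_option linter.style.longLine false

variable {F Ω : Type*} [Field F] [Field Ω] [Algebra F Ω] [IsGalois F Ω] [CharZero F]

/-- `α` lies in `F(γ)` -/
def FixE (F : Type*) {Ω : Type*} [Field F] [Field Ω] [Algebra F Ω] (γ α : Ω) : Prop :=
  ∀ g : Ω ≃ₐ[F] Ω, g γ = γ → g α = α

/-- elements of `F(γ)` whose norm is a cube -/
def InP (F : Type*) {Ω : Type*} [Field F] [Field Ω] [Algebra F Ω] (γ α : Ω) : Prop :=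
  α ≠ 0 ∧ FixE F γ α ∧ ∃ p : F, p ≠ 0 ∧ ∀ g : Ω ≃ₐ[F] Ω, g γ = -γ → α * g α = algebraMap F Ω p ^ 3

/-- cubes of `F(γ)` -/
def InH (F : Type*) {Ω : Type*} [Field F] [Field Ω] [Algebra F Ω] (γ α : Ω) : Prop :=
  ∃ β : Ω, β ≠ 0 ∧ FixE F γ β ∧ β ^ 3 = α

/-- cube roots of `α` lie in `K(ω)` -/
def InL (ω : Ω) (K : IntermediateField F Ω) (α : Ω) : Prop :=
  ∃ u : Ω, u ^ 3 = α ∧ ∀ g : Ω ≃ₐ[F] Ω, (∀ x ∈ K, g x = x) → g ω = ω → g u = u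

lemma inv_app (g : Ω ≃ₐ[F] Ω) {x y : Ω} (h : g x = y) : g⁻¹ y = x := by
  rw [← h]; exact AlgEquiv.symm_apply_apply g x

lemma fix_of_inv_mul (g h : Ω ≃ₐ[F] Ω) {x : Ω} (H : (h⁻¹ * g) x = x) : g x = h x := by
  have := congrArg h H
  rw [← this]
  exact (AlgEquiv.apply_symm_apply h (g x)).symm

namespace Dat
variable {ω δ γ : Ω}

lemma conj1 (D : Dat F ω δ γ) {β : Ω} (hβ : FixE F γ β) {g h : Ω ≃ₐ[F] Ω} (hg : g γ = -γ) (hh : h γ = -γ) :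
    h β = g β ∧ h (g β) = β := by
  constructor
  · apply fix_of_inv_mul
    apply hβ
    change g⁻¹ (h γ) = γ
    rw [hh]; exact inv_app _ hg
  · apply hβ (h * g)
    change h (g γ) = γ
    rw [hg, map_neg, hh, neg_neg]

lemma conj2 (D : Dat F ω δ γ) {β : Ω} (hβ : FixE F γ β) {g h : Ω ≃ₐ[F] Ω} (hg : g γ = -γ) (hh : h γ = γ) :
    h (g β) = g β := by
  have : (g⁻¹ * (h * g)) β = β := by
    apply hβ
    change g⁻¹ (h (g γ)) = γ
    rw [hg, map_neg, hh]; exact inv_app _ hg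
  exact fix_of_inv_mul (h * g) g this

lemma norm_mem (D : Dat F ω δ γ) {β : Ω} (hβ : FixE F γ β) (h0 : β ≠ 0) :
    ∃ p : F, p ≠ 0 ∧ ∀ g : Ω ≃ₐ[F] Ω, g γ = -γ → β * g β = algebraMap F Ω p := by
  by_cases hex : ∃ g : Ω ≃ₐ[F] Ω, g γ = -γ
  · obtain ⟨g, hg⟩ := hex
    obtain ⟨p, hp⟩ := mem_range_of_fixed (F := F) (β * g β) (by
      intro h
      rw [map_mul]
      rcases D.gg h with hh | hh
      · rw [hβ h hh, D.conj2 hβ hg hh]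
      · rw [(D.conj1 hβ hg hh).1, (D.conj1 hβ hg hh).2, mul_comm])
    refine ⟨p, ?_, ?_⟩
    · rintro rfl
      rw [map_zero] at hp
      rcases mul_eq_zero.1 hp.symm with h | h
      · exact h0 h
      · exact h0 (by simpa using h)
    · intro h hh
      rw [(D.conj1 hβ hg hh).1, hp]
  · exact ⟨1, one_ne_zero, fun g hg => absurd ⟨g, hg⟩ hex⟩

lemma H_le_P (D : Dat F ω δ γ) {α : Ω} (h : InH F γ α) : InP F γ α := by
  obtain ⟨β, h0, hf, rfl⟩ := h
  refine ⟨pow_ne_zero _ h0, fun g hg => by rw [map_pow, hf g hg], ?_⟩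
  obtain ⟨p, hp0, hp⟩ := D.norm_mem hf h0
  exact ⟨p, hp0, fun g hg => by rw [map_pow, ← mul_pow, hp g hg]⟩

lemma descent (D : Dat F ω δ γ) {α u : Ω} (h0 : α ≠ 0) (hα : FixE F γ α) (hu : u ^ 3 = α)
    (hfix : ∀ g : Ω ≃ₐ[F] Ω, g ω = ω → g γ = γ → g u = u) : InH F γ α := by
  have hu0 : u ≠ 0 := by rintro rfl; simp at hu; exact h0 hu.symm
  by_cases hex : ∃ h : Ω ≃ₐ[F] Ω, h γ = γ ∧ h ω = ω ^ 2
  · obtain ⟨h, hγ, hω⟩ := hex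
    have hu' : (h u) ^ 3 = α := by rw [← map_pow, hu, hα h hγ]
    have hu1 : h u ≠ 0 := by simpa using hu0
    refine ⟨α / (u * h u), ?_, ?_, ?_⟩
    · exact div_ne_zero h0 (mul_ne_zero hu0 hu1)
    · intro g hg
      rw [map_div₀, map_mul, hα g hg]
      rcases D.gw g with hw | hw
      · have : (h⁻¹ * (g * h)) u = u := by
          apply hfix
          · change h⁻¹ (g (h ω)) = ω
            rw [hω, map_pow, hw]; exact inv_app _ hω
          · change h⁻¹ (g (h γ)) = γ
            rw [hγ, hg]; exact inv_app _ hγ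
        have h2 : g (h u) = h u := fix_of_inv_mul (g * h) h this
        rw [hfix g hw hg, h2]
      · have h1 : g u = h u := by
          apply fix_of_inv_mul
          apply hfix
          · change h⁻¹ (g ω) = ω
            rw [hw]; exact inv_app _ hω
          · change h⁻¹ (g γ) = γ
            rw [hg]; exact inv_app _ hγ
        have h2 : (g * h) u = u := by
          apply hfix
          · change g (h ω) = ω
            rw [hω, map_pow, hw, D.w4]
          · change g (h γ) = γ
            rw [hγ, hg]
        have h3 : g (h u) = u := h2
        rw [h3, h1, mul_comm]
    · rw [div_pow, mul_pow, hu, hu']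
      field_simp
  · refine ⟨u, hu0, ?_, hu⟩
    intro g hg
    rcases D.gw g with hw | hw
    · exact hfix g hw hg
    · exact absurd ⟨g, hg, hw⟩ hex

/-- the conjugates -/
def X (ω u v : Ω) (i : ZMod 3) : Ω := Wp ω i * u + Wp ω (-i) * v

lemma act (D : Dat F ω δ γ) {α u v : Ω} {p : F} (h0 : α ≠ 0) (hα : FixE F γ α)
    (hp : ∀ g : Ω ≃ₐ[F] Ω, g γ = -γ → α * g α = algebraMap F Ω p ^ 3)
    (hu : u ^ 3 = α) (huv : u * v = algebraMap F Ω p) (g : Ω ≃ₐ[F] Ω) :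
    ∃ a : ZMod 3, (g δ = δ → ∀ i, g (X ω u v i) = X ω u v (i + a)) ∧
      (g δ = -δ → ∀ i, g (X ω u v i) = X ω u v (-i + a)) ∧
      (g γ = γ → g u = Wp ω a * u) := by
  have hu0 : u ≠ 0 := by rintro rfl; simp at hu; exact h0 hu.symm
  have hguv : g u * g v = u * v := by rw [← map_mul, huv, AlgEquiv.commutes]
  have hinv : ∀ a x y, g u = Wp ω a * x → x * y = u * v → x ≠ 0 → g v = Wp ω (-a) * y := by
    intro a x y h1 h2 hx
    have h3 := D.Wneg a
    rw [h1, ← h2] at hguv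
    have h4 : Wp ω a * x ≠ 0 := mul_ne_zero (D.Wne a) hx
    apply mul_left_cancel₀ h4
    rw [hguv]
    linear_combination (- x * y) * h3
  rcases D.gg g with hg | hg
  · obtain ⟨a, ha⟩ := D.cube_eq (x := g u) (y := u) (by rw [← map_pow, hu, hα g hg])
    have hv := hinv a u v ha rfl hu0
    refine ⟨a, ?_, ?_, fun _ => ha⟩
    · intro hd i
      have hw : g ω = ω := (D.gw g).resolve_right fun h => D.dne (hd.symm.trans (D.tab3 g h hg))
      unfold X
      rw [map_add, map_mul, map_mul, D.gW1 g hw, D.gW1 g hw, ha, hv, neg_add, D.Wadd, D.Wadd]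
      ring
    · intro hd i
      have hw : g ω = ω ^ 2 := (D.gw g).resolve_left fun h => D.dne ((D.tab1 g h hg).symm.trans hd)
      unfold X
      rw [map_add, map_mul, map_mul, D.gW2 g hw, D.gW2 g hw, ha, hv, neg_add, D.Wadd, D.Wadd]
      ring
  · have hv3 : α * v ^ 3 = algebraMap F Ω p ^ 3 := by rw [← hu, ← huv]; ring
    obtain ⟨a, ha⟩ := D.cube_eq (x := g u) (y := v) (by
      rw [← map_pow, hu]
      apply mul_left_cancel₀ h0
      rw [hp g hg, hv3])
    have hv0 : v ≠ 0 := by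
      rintro rfl
      rw [mul_zero] at ha
      exact hu0 (by simpa using ha)
    have hv := hinv a v u ha (mul_comm _ _) hv0
    refine ⟨-a, ?_, ?_, fun h => absurd (h.symm.trans hg) D.gne⟩
    · intro hd i
      have hw : g ω = ω ^ 2 := (D.gw g).resolve_left fun h => D.dne (hd.symm.trans (D.tab2 g h hg))
      unfold X
      rw [map_add, map_mul, map_mul, D.gW2 g hw, D.gW2 g hw, ha, hv, neg_add, D.Wadd, D.Wadd, neg_neg, neg_neg]
      ring
    · intro hd i
      have hw : g ω = ω := (D.gw g).resolve_right fun h => D.dne ((D.tab4 g h hg).symm.trans hd)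
      unfold X
      rw [map_add, map_mul, map_mul, D.gW1 g hw, D.gW1 g hw, ha, hv, neg_add, D.Wadd, D.Wadd, neg_neg, neg_neg]
      ring

lemma Xinj (D : Dat F ω δ γ) {α u v : Ω} {p : F} (h0 : α ≠ 0) (hα : FixE F γ α) (hp0 : p ≠ 0)
    (hu : u ^ 3 = α) (huv : u * v = algebraMap F Ω p) (hH : ¬ InH F γ α) :
    Function.Injective (X ω u v) := by
  intro i j hij
  by_contra hne
  apply hH
  have hp1 : algebraMap F Ω p ≠ 0 := by simpa using hp0
  have hi := D.Wneg i
  have hj := D.Wneg j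
  have hW : Wp ω i - Wp ω j ≠ 0 := sub_ne_zero.2 fun h => hne (D.Winj h)
  have h1 : u = Wp ω (-i) * Wp ω (-j) * v := by
    apply mul_left_cancel₀ hW
    unfold X at hij
    linear_combination hij - Wp ω (-j) * v * hi + Wp ω (-i) * v * hj
  have h2 : u ^ 3 = v ^ 3 := by
    rw [h1, mul_pow, mul_pow, D.W3, D.W3]
    ring
  have h3 : α ^ 2 = algebraMap F Ω p ^ 3 := by
    rw [← huv, mul_pow, ← h2, hu]; ring
  refine ⟨α / algebraMap F Ω p, div_ne_zero h0 hp1, ?_, ?_⟩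
  · intro g hg
    rw [map_div₀, hα g hg, AlgEquiv.commutes]
  · rw [div_pow, ← h3]; field_simp

end Dat
end galois_side3

section galois_side4
set_option linter.unusedSectionVars false
set_option linter.unusedVariables false
set_option linter.style.longLine false

variable {F Ω : Type*} [Field F] [Field Ω] [Algebra F Ω] [IsGalois F Ω] [CharZero F]

lemma fin3_dbl : ∀ b : Fin 3, 0 + b + b = 0 → b = 0 := by decide
lemma perm_aff1 : ∀ (a : Fin 3) (π : Equiv.Perm (Fin 3)), (∀ i, π i = i + a) → Equiv.Perm.sign π = 1 := by
  decide
lemma perm_aff2 : ∀ (a : Fin 3) (π : Equiv.Perm (Fin 3)), (∀ i, π i = -i + a) → Equiv.Perm.sign π = -1 := by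
  decide

lemma adjoin_fix (S : Set Ω) (g : Ω ≃ₐ[F] Ω) (h : ∀ x ∈ S, g x = x) :
    ∀ x ∈ IntermediateField.adjoin F S, g x = x := by
  intro x hx
  induction hx using IntermediateField.adjoin_induction with
  | mem x hx => exact h x hx
  | algebraMap x => exact AlgEquiv.commutes g x
  | add x y hx hy h1 h2 => rw [map_add, h1, h2]
  | inv x hx h1 => rw [map_inv₀, h1]
  | mul x y hx hy h1 h2 => rw [map_mul, h1, h2]

lemma adjoin_stable (S : Set Ω) (g : Ω ≃ₐ[F] Ω) (h : ∀ x ∈ S, g x ∈ IntermediateField.adjoin F S) :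
    ∀ x ∈ IntermediateField.adjoin F S, g x ∈ IntermediateField.adjoin F S := by
  intro x hx
  induction hx using IntermediateField.adjoin_induction with
  | mem x hx => exact h x hx
  | algebraMap x => rw [AlgEquiv.commutes]; exact IntermediateField.algebraMap_mem _ x
  | add x y hx hy h1 h2 => rw [map_add]; exact add_mem h1 h2
  | inv x hx h1 => rw [map_inv₀]; exact inv_mem h1
  | mul x y hx hy h1 h2 => rw [map_mul]; exact mul_mem h1 h2

/-- If the automorphisms permute three distinct elements, we get a permutation representation. -/
lemma exists_rho (X : Fin 3 → Ω) (hX : Function.Injective X)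
    (h : ∀ g : Ω ≃ₐ[F] Ω, ∀ i, ∃ j, g (X i) = X j) :
    ∃ ρ : (Ω ≃ₐ[F] Ω) →* Equiv.Perm (Fin 3), ∀ g i, g (X i) = X (ρ g i) := by
  choose π hπ using h
  have h1 : ∀ i, π 1 i = i := fun i => hX (by rw [← hπ]; rfl)
  have hm : ∀ g h i, π (g * h) i = π g (π h i) := fun g h i => hX (by
    rw [← hπ, ← hπ, ← hπ]; rfl)
  refine ⟨{ toFun := fun g => ⟨π g, π g⁻¹, fun i => ?_, fun i => ?_⟩, map_one' := ?_, map_mul' := ?_ }, ?_⟩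
  · rw [← hm, inv_mul_cancel, h1]
  · rw [← hm, mul_inv_cancel, h1]
  · ext i; simp [h1]
  · intro g h; ext i; simp [hm]
  · intro g i; exact hπ g i

namespace Dat
variable {ω δ γ : Ω}

lemma InL_all (D : Dat F ω δ γ) {K : IntermediateField F Ω} {α u : Ω} (h : InL ω K α) (hu : u ^ 3 = α) :
    ∀ g : Ω ≃ₐ[F] Ω, (∀ x ∈ K, g x = x) → g ω = ω → g u = u := by
  obtain ⟨u', hu', hfix⟩ := h
  obtain ⟨i, hi⟩ := D.cube_eq (hu.trans hu'.symm)
  intro g hg hw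
  rw [hi, map_mul, D.gW1 g hw, hfix g hg hw]

lemma exists_S3 [IsAlgClosed Ω] (D : Dat F ω δ γ) {α : Ω} (hP : InP F γ α) (hH : ¬ InH F γ α) :
    ∃ K0 : IntermediateField F Ω, IsS3 K0 ∧ δ ∈ K0 ∧ InL ω K0 α ∧
      ∀ K : IntermediateField F Ω, IsS3 K → δ ∈ K → InL ω K α → K = K0 := by
  obtain ⟨h0, hα, p, hp0, hp⟩ := hP
  obtain ⟨u, hu⟩ := IsAlgClosed.exists_pow_nat_eq α (n := 3) (by norm_num)
  have hu0 : u ≠ 0 := by rintro rfl; simp at hu; exact h0 hu.symm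
  obtain ⟨v, huv⟩ : ∃ v, u * v = algebraMap F Ω p := ⟨algebraMap F Ω p / u, by field_simp⟩
  have hact := D.act h0 hα hp hu huv
  have hinj := D.Xinj h0 hα hp0 hu huv hH
  set Y : Fin 3 → Ω := X ω u v with hY
  obtain ⟨ρ, hρ⟩ := exists_rho (F := F) Y hinj (by
    intro g i
    obtain ⟨a, h1, h2, -⟩ := hact g
    rcases D.gd g with hd | hd
    · exact ⟨_, h1 hd i⟩
    · exact ⟨_, h2 hd i⟩)
  have hρ1 : ∀ g, g δ = δ → ∃ a : Fin 3, (∀ i, ρ g i = i + a) ∧ (g γ = γ → g u = Wp ω a * u) := by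
    intro g hd
    obtain ⟨a, h1, h2, h3⟩ := hact g
    exact ⟨a, fun i => hinj (by rw [← hρ]; exact h1 hd i), h3⟩
  have hρ2 : ∀ g, g δ = -δ → ∃ a : Fin 3, (∀ i, ρ g i = -i + a) := by
    intro g hd
    obtain ⟨a, h1, h2, h3⟩ := hact g
    exact ⟨a, fun i => hinj (by rw [← hρ]; exact h2 hd i)⟩
  have hk : ∀ g, ρ g = 1 ↔ ∀ x ∈ IntermediateField.adjoin F (Set.range Y), g x = x := by
    intro g
    constructor
    · intro h
      apply adjoin_fix
      rintro _ ⟨i, rfl⟩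
      rw [hρ, h]; rfl
    · intro h
      ext i
      rw [hinj ((hρ g i).symm.trans (h (Y i) (IntermediateField.subset_adjoin _ _ ⟨i, rfl⟩)))]
      rfl
  have hs : Function.Surjective ρ := by
    obtain ⟨s, hs⟩ := D.exists_neg
    obtain ⟨t, ht1, ht2, ht3⟩ : ∃ g : Ω ≃ₐ[F] Ω, g ω = ω ∧ g γ = γ ∧ g u ≠ u := by
      by_contra hcon
      push Not at hcon
      exact hH (D.descent h0 hα hu hcon)
    obtain ⟨a, ha⟩ := hρ2 s hs
    obtain ⟨b, hb, hb'⟩ := hρ1 t (D.tab1 t ht1 ht2)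
    have hss := perm_aff2 a _ ha
    have hts := perm_aff1 b _ hb
    have htne : ρ t ≠ 1 := by
      intro h
      apply ht3
      have hb0 : b = 0 := by
        have := hb 0
        rw [h] at this
        simpa using this.symm
      rw [hb' ht2, hb0]
      have := D.Wz
      erw [this, one_mul]
    intro π
    rcases perm_gen (ρ s) (ρ t) π hss hts htne with h | h | h | h | h | h
    · exact ⟨1, by rw [h, map_one]⟩
    · exact ⟨t, h.symm⟩
    · exact ⟨t ^ 2, by rw [h, map_pow]⟩
    · exact ⟨s, h.symm⟩
    · exact ⟨t * s, by rw [h, map_mul]⟩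
    · exact ⟨t ^ 2 * s, by rw [h, map_mul, map_pow]⟩
  have hS3 : IsS3 (IntermediateField.adjoin F (Set.range Y)) := by
    refine isS3_of_rho ?_ ?_ ρ hs hk
    · have : Finite (Set.range Y) := Set.finite_range Y
      exact IntermediateField.finiteDimensional_adjoin (fun x _ => Algebra.IsIntegral.isIntegral x)
    · intro g
      apply adjoin_stable
      rintro _ ⟨i, rfl⟩
      rw [hρ]
      exact IntermediateField.subset_adjoin _ _ ⟨_, rfl⟩
  refine ⟨IntermediateField.adjoin F (Set.range Y), hS3, ?_, ?_, ?_⟩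
  · apply mem_of_fixed
    intro g hg
    rcases D.gd g with hd | hd
    · exact hd
    · exfalso
      obtain ⟨a, ha⟩ := hρ2 g hd
      have := perm_aff2 a _ ha
      rw [(hk g).2 hg] at this
      revert this; decide
  · refine ⟨u, hu, ?_⟩
    intro g hg hw
    have h1 := (hk g).2 hg
    have hd : g δ = δ := by
      rcases D.gd g with hd | hd
      · exact hd
      · exfalso
        obtain ⟨a, ha⟩ := hρ2 g hd
        have := perm_aff2 a _ ha
        rw [h1] at this
        revert this; decide
    obtain ⟨b, hb, hb'⟩ := hρ1 g hd
    have hb0 : b = 0 := by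
      have := hb 0
      rw [h1] at this
      simpa using this.symm
    rw [hb' (D.tabd1 g hd hw), hb0]
    have := D.Wz
    erw [this, one_mul]
  · intro K hK hδK hL
    have hle : IntermediateField.adjoin F (Set.range Y) ≤ K := by
      rw [IntermediateField.adjoin_le_iff]
      rintro _ ⟨i, rfl⟩
      apply mem_of_fixed
      intro g hg
      obtain ⟨b, hb, -⟩ := hρ1 g (hg δ hδK)
      have hg2 : ∀ x ∈ K, (g * g) x = x := fun x hx => by
        change g (g x) = x
        rw [hg x hx, hg x hx]
      have hw2 : (g * g) ω = ω := by
        change g (g ω) = ω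
        rcases D.gw g with h | h
        · rw [h, h]
        · rw [h, map_pow, h, D.w4]
      have hu2 := D.InL_all hL hu (g * g) hg2 hw2
      have hv2 : (g * g) v = v := by
        apply mul_left_cancel₀ hu0
        nth_rw 1 [← hu2]
        rw [← map_mul, huv, AlgEquiv.commutes]
      have hX2 : (g * g) (Y 0) = Y 0 := by
        change (g * g) (X ω u v 0) = X ω u v 0
        unfold X
        rw [map_add, map_mul, map_mul, D.gW1 _ hw2, D.gW1 _ hw2, hu2, hv2]
      rw [hρ] at hX2
      have h3 := hinj hX2
      rw [map_mul, Equiv.Perm.mul_apply, hb, hb] at h3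
      have hb0 : b = 0 := fin3_dbl b h3
      rw [hρ, hb, hb0, add_zero]
    have := hK.1
    exact (IntermediateField.eq_of_le_of_finrank_eq hle (by rw [hS3.finrank, hK.finrank])).symm

end Dat
end galois_side4

section galois_side5
set_option linter.unusedSectionVars false
set_option linter.unusedVariables false
set_option linter.style.longLine false

variable {F Ω : Type*} [Field F] [Field Ω] [Algebra F Ω] [IsGalois F Ω] [CharZero F]

/-- a 3-cycle -/
def tau : Equiv.Perm (Fin 3) := finRotate 3 ^ 2

/-- a transposition subgroup -/
def Asub : Subgroup (Equiv.Perm (Fin 3)) := Subgroup.zpowers (Equiv.swap 0 1)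

lemma tau_act : ∀ π : Equiv.Perm (Fin 3), ∃ k : Fin 3,
    (Equiv.Perm.sign π = 1 → ∀ i : Fin 3, (tau ^ (i + k).val)⁻¹ * (π * tau ^ i.val) = 1 ∨
      (tau ^ (i + k).val)⁻¹ * (π * tau ^ i.val) = Equiv.swap 0 1) ∧
    (Equiv.Perm.sign π = -1 → ∀ i : Fin 3, (tau ^ (-i + k).val)⁻¹ * (π * tau ^ i.val) = 1 ∨
      (tau ^ (-i + k).val)⁻¹ * (π * tau ^ i.val) = Equiv.swap 0 1) := by
  decide +kernel

lemma tau_sign : Equiv.Perm.sign tau = 1 := by decide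
lemma tau_ne : tau ≠ 1 := by decide
lemma tau_not_mem : tau ∉ Asub := by
  unfold Asub
  intro h
  have h1 : ∀ x ∈ Subgroup.zpowers (Equiv.swap (0 : Fin 3) 1), x ^ 2 = 1 := by
    rintro _ ⟨n, rfl⟩
    change (Equiv.swap (0 : Fin 3) 1 ^ n) ^ 2 = 1
    rw [← zpow_natCast, ← zpow_mul, mul_comm, zpow_mul, zpow_natCast, sq, Equiv.swap_mul_self, one_zpow]
  have := h1 _ h
  revert this; decide

namespace Dat
variable {ω δ γ : Ω}

lemma gen (D : Dat F ω δ γ) {K : IntermediateField F Ω} (ρ : (Ω ≃ₐ[F] Ω) →* Equiv.Perm (Fin 3))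
    (hk : ∀ g, ρ g = 1 ↔ ∀ x ∈ K, g x = x) (hδK : δ ∈ K) (t : Ω ≃ₐ[F] Ω) (ht1 : t ω = ω) (ht2 : t γ = γ)
    (ht3 : ρ t ≠ 1) (x : Ω) (hx : t x = x) (hx2 : ∀ g : Ω ≃ₐ[F] Ω, (∀ y ∈ K, g y = y) → g ω = ω → g x = x)
    (g : Ω ≃ₐ[F] Ω) (hg1 : g ω = ω) (hg2 : g γ = γ) : g x = x := by
  have hsg : ∀ g, g ω = ω → g γ = γ → Equiv.Perm.sign (ρ g) = 1 := fun g h1 h2 =>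
    (sign_iff ρ hk δ D.hδ D.hδF hδK g).1 (D.tab1 g h1 h2)
  have key : ∀ s : Ω ≃ₐ[F] Ω, s ω = ω → s x = x → ρ g = ρ s → g x = x := by
    intro s h1 h2 h3
    have : (s⁻¹ * g) x = x := by
      apply hx2
      · rw [← hk, map_mul, map_inv, h3, inv_mul_cancel]
      · change s⁻¹ (g ω) = ω
        rw [hg1]; exact inv_app _ h1
    rw [fix_of_inv_mul g s this, h2]
  rcases perm_even (ρ t) (ρ g) (hsg t ht1 ht2) ht3 (hsg g hg1 hg2) with h | h | h
  · exact key 1 rfl rfl (by rw [h, map_one])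
  · exact key t ht1 hx h
  · refine key (t * t) ?_ ?_ (by rw [h, map_mul, sq])
    · change t (t ω) = ω
      rw [ht1, ht1]
    · change t (t x) = x
      rw [hx, hx]

lemma zmod3_cases : ∀ a b : ZMod 3, a ≠ 0 → b = 0 ∨ b = a ∨ b = -a := by decide

lemma FixE_div {α β : Ω} (h1 : FixE F γ α) (h2 : FixE F γ β) : FixE F γ (α / β) := fun g hg => by
  rw [map_div₀, h1 g hg, h2 g hg]
lemma FixE_mul {α β : Ω} (h1 : FixE F γ α) (h2 : FixE F γ β) : FixE F γ (α * β) := fun g hg => by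
  rw [map_mul, h1 g hg, h2 g hg]

lemma fiber [IsAlgClosed Ω] (D : Dat F ω δ γ) {K : IntermediateField F Ω} (hK : IsS3 K) (hδK : δ ∈ K) {α α' : Ω}
    (hP : InP F γ α) (hH : ¬ InH F γ α) (hL : InL ω K α)
    (hP' : InP F γ α') (hH' : ¬ InH F γ α') (hL' : InL ω K α') : InH F γ (α' / α) ∨ InH F γ (α' * α) := by
  obtain ⟨h0, hα, -⟩ := hP
  obtain ⟨h0', hα', -⟩ := hP'
  obtain ⟨ρ, hs, hk, -⟩ := hK.rho
  obtain ⟨u, hu, hfix⟩ := hL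
  obtain ⟨u', hu', hfix'⟩ := hL'
  have hu0 : u ≠ 0 := by rintro rfl; simp at hu; exact h0 hu.symm
  obtain ⟨t, ht1, ht2, ht3⟩ : ∃ g : Ω ≃ₐ[F] Ω, g ω = ω ∧ g γ = γ ∧ g u ≠ u := by
    by_contra hcon
    push Not at hcon
    exact hH (D.descent h0 hα hu hcon)
  have hρt : ρ t ≠ 1 := fun h => ht3 (hfix t ((hk t).1 h) ht1)
  have hgen := D.gen ρ hk hδK t ht1 ht2 hρt
  obtain ⟨a, ha⟩ := D.cube_eq (x := t u) (y := u) (by rw [← map_pow, hu, hα t ht2])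
  obtain ⟨b, hb⟩ := D.cube_eq (x := t u') (y := u') (by rw [← map_pow, hu', hα' t ht2])
  have ha0 : a ≠ 0 := by
    rintro rfl
    rw [D.Wz, one_mul] at ha
    exact ht3 ha
  rcases zmod3_cases a b ha0 with rfl | rfl | rfl
  · exfalso
    apply hH'
    refine D.descent h0' hα' hu' (hgen u' ?_ hfix')
    rw [hb, D.Wz, one_mul]
  · left
    refine D.descent (u := u' / u) (div_ne_zero h0' h0) (FixE_div hα' hα) (by rw [div_pow, hu, hu']) (hgen _ ?_ ?_)
    · rw [map_div₀, ha, hb, mul_div_mul_left _ _ (D.Wne b)]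
    · intro g h1 h2
      rw [map_div₀, hfix g h1 h2, hfix' g h1 h2]
  · right
    refine D.descent (u := u' * u) (mul_ne_zero h0' h0) (FixE_mul hα' hα) (by rw [mul_pow, hu, hu']) (hgen _ ?_ ?_)
    · rw [map_mul, ha, hb]
      linear_combination (u' * u) * D.Wneg a
    · intro g h1 h2
      rw [map_mul, hfix g h1 h2, hfix' g h1 h2]

lemma InL_inv {K : IntermediateField F Ω} {α : Ω} (h : InL ω K α) : InL ω K α⁻¹ := by
  obtain ⟨u, hu, hf⟩ := h
  exact ⟨u⁻¹, by rw [inv_pow, hu], fun g h1 h2 => by rw [map_inv₀, hf g h1 h2]⟩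

lemma InL_mul (D : Dat F ω δ γ) {K : IntermediateField F Ω} (hδK : δ ∈ K) {α β : Ω} (h : InL ω K α)
    (hβ : InH F γ β) : InL ω K (α * β) := by
  obtain ⟨u, hu, hf⟩ := h
  obtain ⟨b, -, hb, hb3⟩ := hβ
  refine ⟨u * b, by rw [mul_pow, hu, hb3], fun g h1 h2 => ?_⟩
  rw [map_mul, hf g h1 h2, hb g (D.tabd1 g (h1 δ hδK) h2)]

/-- resolvent -/
def Sr (ω : Ω) (T : ZMod 3 → Ω) (e : ZMod 3) : Ω := ∑ i, Wp ω (e * i) * T i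

lemma Sr_act (D : Dat F ω δ γ) (T : ZMod 3 → Ω) (g : Ω ≃ₐ[F] Ω) (k : ZMod 3)
    (h1 : g δ = δ → ∀ i, g (T i) = T (i + k)) (h2 : g δ = -δ → ∀ i, g (T i) = T (-i + k)) (e : ZMod 3) :
    (g γ = γ → g (Sr ω T e) = Wp ω (-(e * k)) * Sr ω T e) ∧
    (g γ = -γ → g (Sr ω T e) = Wp ω (e * k) * Sr ω T (-e)) := by
  have hA : ∀ (c d : ZMod 3), Wp ω d * ∑ i, Wp ω (c * i) * T i = ∑ i, Wp ω (c * (i + k) + d) * T (i + k) := by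
    intro c d
    rw [Finset.mul_sum, ← Equiv.sum_comp (Equiv.addRight k)]
    refine Finset.sum_congr rfl fun i _ => ?_
    simp only [Equiv.coe_addRight]
    rw [D.Wadd]; ring
  have hB : ∀ (c d : ZMod 3), Wp ω d * ∑ i, Wp ω (c * i) * T i = ∑ i, Wp ω (c * (-i + k) + d) * T (-i + k) := by
    intro c d
    rw [hA, ← Equiv.sum_comp (Equiv.neg (ZMod 3))]
    rfl
  unfold Sr
  constructor
  · intro hg
    rw [map_sum]
    rcases D.gw g with hw | hw
    · rw [hA]
      refine Finset.sum_congr rfl fun i _ => ?_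
      rw [map_mul, D.gW1 g hw, h1 (D.tab1 g hw hg)]
      congr 2; ring
    · rw [hB]
      refine Finset.sum_congr rfl fun i _ => ?_
      rw [map_mul, D.gW2 g hw, h2 (D.tab3 g hw hg)]
      congr 2; ring
  · intro hg
    rw [map_sum]
    rcases D.gw g with hw | hw
    · rw [hB]
      refine Finset.sum_congr rfl fun i _ => ?_
      rw [map_mul, D.gW1 g hw, h2 (D.tab2 g hw hg)]
      congr 2; ring
    · rw [hA]
      refine Finset.sum_congr rfl fun i _ => ?_
      rw [map_mul, D.gW2 g hw, h1 (D.tab4 g hw hg)]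
      congr 2; ring

lemma exists_alpha (D : Dat F ω δ γ) {K : IntermediateField F Ω} (hK : IsS3 K) (hδK : δ ∈ K) :
    ∃ α : Ω, InP F γ α ∧ ¬ InH F γ α ∧ InL ω K α := by
  have := D.chz
  obtain ⟨ρ, hs, hk, hy⟩ := hK.rho
  have hsg := sign_iff ρ hk δ D.hδ D.hδF hδK
  obtain ⟨g0, hg0⟩ := hs (finRotate 3)
  obtain ⟨t, ht⟩ : ∃ t, t = g0 ^ 2 := ⟨_, rfl⟩
  have hρt : ρ t = tau := by rw [ht, map_pow, hg0]; rfl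
  have htw : t ω = ω := by
    rw [ht]
    change g0 (g0 ω) = ω
    rcases D.gw g0 with h | h
    · rw [h, h]
    · rw [h, map_pow, h, D.w4]
  have htd : t δ = δ := (hsg t).2 (by rw [hρt]; exact tau_sign)
  have htg : t γ = γ := D.tabd1 t htd htw
  obtain ⟨θ, hθK, hθ, hθt⟩ := hy Asub t (by rw [hρt]; exact tau_not_mem)
  obtain ⟨T, hT⟩ : ∃ T : ZMod 3 → Ω, T = fun i => (t ^ i.val) θ := ⟨_, rfl⟩
  have hT0 : T 0 = θ := by rw [hT]; rfl
  have hact : ∀ g : Ω ≃ₐ[F] Ω, ∃ k : ZMod 3, (g δ = δ → ∀ i, g (T i) = T (i + k)) ∧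
      (g δ = -δ → ∀ i, g (T i) = T (-i + k)) := by
    intro g
    obtain ⟨k, hk1, hk2⟩ := tau_act (ρ g)
    have aux : ∀ i j : ZMod 3, ((tau ^ j.val)⁻¹ * (ρ g * tau ^ i.val) = 1 ∨
      (tau ^ j.val)⁻¹ * (ρ g * tau ^ i.val) = Equiv.swap 0 1) → g (T i) = T j := by
      intro i j h
      have h2 : ((t ^ j.val)⁻¹ * (g * t ^ i.val)) θ = θ := by
        apply hθ
        simp only [map_mul, map_inv, map_pow, hρt]
        rcases h with h | h
        · rw [h]; exact one_mem _
        · rw [h]; exact Subgroup.mem_zpowers _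
      rw [hT]
      exact fix_of_inv_mul _ _ h2
    refine ⟨k, fun h i => aux i _ (hk1 ((hsg g).1 h) i), fun h i => aux i _ (hk2 ?_ i)⟩
    refine (Int.units_eq_one_or _).resolve_left fun h3 => ?_
    exact D.dne (((hsg g).2 h3).symm.trans h)
  have hfixT : ∀ g : Ω ≃ₐ[F] Ω, (∀ x ∈ K, g x = x) → ∀ i, g (T i) = T i := by
    intro g hg i
    have h2 : ((t ^ i.val)⁻¹ * (g * t ^ i.val)) θ = θ := by
      apply hθ
      rw [map_mul, map_mul, (hk g).2 hg, one_mul, ← map_mul, inv_mul_cancel, map_one]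
      exact one_mem _
    rw [hT]
    exact fix_of_inv_mul (g * t ^ i.val) _ h2
  obtain ⟨kt, hkt, -⟩ := hact t
  have hkt0 : kt ≠ 0 := by
    rintro rfl
    have := hkt htd 0
    rw [add_zero, hT0] at this
    exact hθt this
  have hS : ∀ (g : Ω ≃ₐ[F] Ω), ∃ k, ∀ e, (g γ = γ → g (Sr ω T e) = Wp ω (-(e * k)) * Sr ω T e) ∧
    (g γ = -γ → g (Sr ω T e) = Wp ω (e * k) * Sr ω T (-e)) := by
    intro g
    obtain ⟨k, hk1, hk2⟩ := hact g
    exact ⟨k, D.Sr_act T g k hk1 hk2⟩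
  have htS := fun e => (D.Sr_act T t kt hkt (fun h => absurd (htd.symm.trans h) D.dne) e).1 htg
  obtain ⟨e, he0, he⟩ : ∃ e : ZMod 3, e ≠ 0 ∧ Sr ω T e ≠ 0 := by
    by_contra hcon
    push Not at hcon
    have h1 := hcon 1 (by decide)
    have h2 := hcon 2 (by decide)
    have h3 : Sr ω T 0 + Sr ω T 1 + Sr ω T 2 = 3 * θ := by
      have e1 : Wp ω 2 = ω ^ 2 := by rw [← D.Wneg1]; rfl
      have e2 : Wp ω (2 * 2) = ω := (show Wp ω (2 * 2) = Wp ω 1 from rfl).trans D.W1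
      have exp : ∀ f : ZMod 3 → Ω, ∑ i, f i = f 0 + f 1 + f 2 := fun f => Fin.sum_univ_three f
      unfold Sr
      simp only [exp]
      simp only [zero_mul, mul_zero, one_mul, mul_one, D.Wz, D.W1, e1, e2, hT0]
      linear_combination (T 1 + T 2) * D.hω
    rw [h1, h2, add_zero, add_zero] at h3
    have h4 := htS 0
    rw [h3, zero_mul, neg_zero, D.Wz, one_mul, map_mul, map_ofNat] at h4
    apply hθt
    exact mul_left_cancel₀ (by norm_num) h4
  have hne : t (Sr ω T e) ≠ Sr ω T e := by
    rw [htS]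
    intro h
    have h2 : Wp ω (-(e * kt)) = 1 := by
      apply mul_right_cancel₀ he
      rw [h, one_mul]
    have := D.Winj (h2.trans D.Wz.symm)
    have h3 : ∀ a b : ZMod 3, a ≠ 0 → b ≠ 0 → -(a * b) ≠ 0 := by decide
    exact h3 e kt he0 hkt0 this
  refine ⟨Sr ω T e ^ 3, ⟨pow_ne_zero _ he, ?_, ?_⟩, ?_, ?_⟩
  · intro g hg
    obtain ⟨k, hk1⟩ := hS g
    rw [map_pow, (hk1 e).1 hg, mul_pow, D.W3, one_mul]
  · have hmem : ∀ g : Ω ≃ₐ[F] Ω, g (Sr ω T e * Sr ω T (-e)) = Sr ω T e * Sr ω T (-e) := by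
      intro g
      obtain ⟨k, hk1⟩ := hS g
      have hW := D.Wneg (e * k)
      rcases D.gg g with hg | hg
      · rw [map_mul, (hk1 e).1 hg, (hk1 (-e)).1 hg, neg_mul, neg_neg]
        linear_combination (Sr ω T e * Sr ω T (-e)) * hW
      · rw [map_mul, (hk1 e).2 hg, (hk1 (-e)).2 hg, neg_mul, neg_neg]
        linear_combination (Sr ω T e * Sr ω T (-e)) * hW
    obtain ⟨p, hp⟩ := mem_range_of_fixed _ hmem
    have hN : ∀ g : Ω ≃ₐ[F] Ω, g γ = -γ → Sr ω T e ^ 3 * g (Sr ω T e ^ 3) = algebraMap F Ω p ^ 3 := by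
      intro g hg
      obtain ⟨k, hk1⟩ := hS g
      rw [map_pow, (hk1 e).2 hg, mul_pow, D.W3, hp]; ring
    by_cases hp0 : p = 0
    · refine ⟨1, one_ne_zero, fun g hg => ?_⟩
      exfalso
      have := hN g hg
      rw [hp0, map_zero, zero_pow (by norm_num)] at this
      rcases mul_eq_zero.1 this with h | h
      · exact pow_ne_zero _ he h
      · exact pow_ne_zero 3 he (by simpa using h)
    · exact ⟨p, hp0, hN⟩
  · rintro ⟨β, hβ0, hβ, hβ3⟩
    obtain ⟨i, hi⟩ := D.cube_eq hβ3.symm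
    apply hne
    rw [hi, map_mul, D.gW1 t htw, hβ t htg]
  · refine ⟨Sr ω T e, rfl, fun g h1 h2 => ?_⟩
    unfold Sr
    rw [map_sum]
    refine Finset.sum_congr rfl fun i _ => ?_
    rw [map_mul, D.gW1 g h2, hfixT g h1]

end Dat
end galois_side5

section galois_side6
set_option linter.unusedSectionVars false
set_option linter.unusedVariables false
set_option linter.style.longLine false

lemma count_abs {Q S : Type*} [CommGroup Q] [Finite Q] (h3 : ∀ q : Q, q ^ 3 = 1) (R : Q → S → Prop)
    (hex : ∀ q, q ≠ 1 → ∃ s, R q s ∧ ∀ s', R q s' → s' = s)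
    (hs : ∀ s, ∃ q, q ≠ 1 ∧ ∀ q', q' ≠ 1 → (R q' s ↔ q' = q ∨ q' = q⁻¹)) :
    Nat.card S * 2 + 1 = Nat.card Q := by
  classical
  choose f hf1 hf2 using hex
  let f' : {q : Q // q ≠ 1} → S := fun q => f q.1 q.2
  have hfib : ∀ s, Nat.card {q : {q : Q // q ≠ 1} // f' q = s} = 2 := by
    intro s
    obtain ⟨q, hq, hq2⟩ := hs s
    have hqi : q⁻¹ ≠ 1 := inv_ne_one.2 hq
    have hne : q ≠ q⁻¹ := by
      intro h
      apply hq
      have h1 : q * q = 1 := by nth_rw 2 [h]; exact mul_inv_cancel q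
      have h2 := h3 q
      rw [pow_succ, sq, h1, one_mul] at h2
      exact h2
    have key : {x : {q : Q // q ≠ 1} | f' x = s} = {⟨q, hq⟩, ⟨q⁻¹, hqi⟩} := by
      ext ⟨x, hx⟩
      simp only [Set.mem_ofPred_eq, Set.mem_insert_iff, Set.mem_singleton_iff, Subtype.mk.injEq, f']
      rw [← hq2 x hx]
      constructor
      · intro h; rw [← h]; exact hf1 x hx
      · intro h; exact (hf2 x hx s h).symm
    change Nat.card {x : {q : Q // q ≠ 1} | f' x = s} = 2
    rw [key, Nat.card_coe_set_eq, Set.ncard_pair]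
    simpa using hne
  have hsurj : Function.Surjective f' := by
    intro s
    have : Nonempty {q : {q : Q // q ≠ 1} // f' q = s} := by
      by_contra h
      rw [not_nonempty_iff] at h
      have := hfib s
      rw [Nat.card_of_isEmpty] at this
      omega
    obtain ⟨⟨q, hq⟩⟩ := this
    exact ⟨q, hq⟩
  have : Finite S := Finite.of_surjective f' hsurj
  have := Fintype.ofFinite S
  have := Fintype.ofFinite Q
  have h1 : Nat.card {q : Q // q ≠ 1} = Nat.card S * 2 := by
    rw [← Nat.card_congr (Equiv.sigmaFiberEquiv f'), Nat.card_sigma]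
    simp only [hfib]
    simp [Nat.card_eq_fintype_card]
  rw [← h1, Nat.card_eq_fintype_card, Nat.card_eq_fintype_card, Fintype.card_subtype_compl, Fintype.card_subtype_eq]
  have : 0 < Fintype.card Q := Fintype.card_pos
  omega

variable {F Ω : Type*} [Field F] [Field Ω] [Algebra F Ω] [IsGalois F Ω] [CharZero F]

/-- the group `P` -/
def PG (F : Type*) {Ω : Type*} [Field F] [Field Ω] [Algebra F Ω] (γ : Ω) : Subgroup Ωˣ where
  carrier := {a | InP F γ (a : Ω)}
  one_mem' := ⟨by simp, fun g _ => by simp, 1, one_ne_zero, fun g _ => by simp⟩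
  mul_mem' := by
    rintro a b ⟨h0, h1, p, hp0, hp⟩ ⟨h0', h1', p', hp0', hp'⟩
    refine ⟨by simp, fun g hg => by simp [h1 g hg, h1' g hg], p * p', mul_ne_zero hp0 hp0', fun g hg => ?_⟩
    rw [Units.val_mul, map_mul, map_mul, mul_pow, ← hp g hg, ← hp' g hg]; ring
  inv_mem' := by
    rintro a ⟨h0, h1, p, hp0, hp⟩
    refine ⟨by simp, fun g hg => by simp [h1 g hg], p⁻¹, inv_ne_zero hp0, fun g hg => ?_⟩
    rw [Units.val_inv_eq_inv_val, map_inv₀, map_inv₀, inv_pow, ← hp g hg, mul_inv]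

/-- the group `H` -/
def HG (F : Type*) {Ω : Type*} [Field F] [Field Ω] [Algebra F Ω] (γ : Ω) : Subgroup Ωˣ where
  carrier := {a | InH F γ (a : Ω)}
  one_mem' := ⟨1, by simp, fun g _ => by simp, by simp⟩
  mul_mem' := by
    rintro a b ⟨p, hp0, h1, hp⟩ ⟨p', hp0', h1', hp'⟩
    exact ⟨p * p', mul_ne_zero hp0 hp0', fun g hg => by rw [map_mul, h1 g hg, h1' g hg], by
      rw [mul_pow, hp, hp', Units.val_mul]⟩
  inv_mem' := by
    rintro a ⟨p, hp0, h1, hp⟩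
    exact ⟨p⁻¹, inv_ne_zero hp0, fun g hg => by rw [map_inv₀, h1 g hg], by
      rw [inv_pow, hp, Units.val_inv_eq_inv_val]⟩

namespace Dat
variable {ω δ γ : Ω}

theorem count_S3 [IsAlgClosed Ω] (D : Dat F ω δ γ) (hfin : (HG F γ).relIndex (PG F γ) ≠ 0) :
    Nat.card {K : IntermediateField F Ω // IsS3 K ∧ δ ∈ K} * 2 + 1 = (HG F γ).relIndex (PG F γ) := by
  have hfinQ : Finite (PG F γ ⧸ (HG F γ).subgroupOf (PG F γ)) := Nat.finite_of_card_ne_zero hfin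
  have hout : ∀ a : PG F γ, ∃ h : PG F γ, InH F γ ((h : Ωˣ) : Ω) ∧
      (((a : PG F γ ⧸ (HG F γ).subgroupOf (PG F γ)).out : Ωˣ) : Ω) = ((a : Ωˣ) : Ω) * ((h : Ωˣ) : Ω) := by
    intro a
    obtain ⟨h, hh⟩ := QuotientGroup.mk_out_eq_mul ((HG F γ).subgroupOf (PG F γ)) a
    exact ⟨h, h.2, by rw [hh]; simp⟩
  have h1 : ∀ a : PG F γ, (a : PG F γ ⧸ (HG F γ).subgroupOf (PG F γ)) = 1 ↔ InH F γ ((a : Ωˣ) : Ω) := by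
    intro a
    rw [QuotientGroup.eq_one_iff]
    rfl
  have hL : ∀ (K : IntermediateField F Ω), δ ∈ K → ∀ a : PG F γ,
      InL ω K (((a : PG F γ ⧸ (HG F γ).subgroupOf (PG F γ)).out : Ωˣ) : Ω) ↔ InL ω K ((a : Ωˣ) : Ω) := by
    intro K hK a
    obtain ⟨h, hh, he⟩ := hout a
    rw [he]
    constructor
    · intro H
      have := D.InL_mul hK H ((HG F γ).inv_mem hh)
      rwa [← Units.val_mul, ← Units.val_mul, mul_inv_cancel_right] at this
    · intro H
      exact D.InL_mul hK H hh
  refine count_abs (Q := PG F γ ⧸ (HG F γ).subgroupOf (PG F γ)) ?_ (fun q K => InL ω K.1 ((q.out : Ωˣ) : Ω)) ?_ ?_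
  · intro q
    induction q using QuotientGroup.induction_on with | _ a =>
    rw [← QuotientGroup.mk_pow, h1]
    refine ⟨((a : Ωˣ) : Ω), by simp, a.2.2.1, by simp⟩
  · intro q hq
    have hq' : ¬ InH F γ ((q.out : Ωˣ) : Ω) := by rwa [← h1, QuotientGroup.out_eq']
    obtain ⟨K0, a1, a2, a3, a4⟩ := D.exists_S3 q.out.2 hq'
    exact ⟨⟨K0, a1, a2⟩, a3, fun K' hK' => Subtype.ext (a4 K'.1 K'.2.1 K'.2.2 hK')⟩
  · rintro ⟨K, hK, hδK⟩
    obtain ⟨α, hP, hH, hLα⟩ := D.exists_alpha hK hδK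
    obtain ⟨a, rfl⟩ : ∃ a : Ωˣ, (a : Ω) = α := ⟨Units.mk0 α hP.1, rfl⟩
    obtain ⟨b, rfl⟩ : ∃ b : PG F γ, (b : Ωˣ) = a := ⟨⟨a, hP⟩, rfl⟩
    refine ⟨b, fun h => hH ((h1 b).1 h), fun q => ?_⟩
    induction q using QuotientGroup.induction_on with | _ c =>
    intro hc
    change InL ω K _ ↔ _
    rw [hL K hδK c]
    rw [Ne, h1] at hc
    constructor
    · intro hLc
      rcases D.fiber hK hδK hP hH hLα c.2 hc hLc with h | h
      · left
        rw [← div_eq_one, ← QuotientGroup.mk_div, h1]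
        simpa using h
      · right
        rw [← mul_eq_one_iff_eq_inv, ← QuotientGroup.mk_mul, h1]
        simpa using h
    · rintro (h | h)
      · rw [← hL K hδK c, h, hL K hδK]; exact hLα
      · rw [← hL K hδK c, h, ← QuotientGroup.mk_inv, hL K hδK]
        have := InL_inv hLα
        simpa using this

end Dat
end galois_side6

section galois_side7
set_option linter.unusedSectionVars false
set_option linter.unusedVariables false
set_option linter.style.longLine false

variable {F Ω : Type*} [Field F] [Field Ω] [Algebra F Ω] [IsGalois F Ω] [CharZero F]
  [Algebra ℚ_[3] F] [FiniteDimensional ℚ_[3] F]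

namespace Dat
variable {ω δ γ : Ω}

theorem relIndex_split (D : Dat F ω δ γ) (hμ : ∀ x : F, x ^ 3 = 1 → x = 1)
    (hγ : ∃ c : F, algebraMap F Ω c = γ) :
    (HG F γ).relIndex (PG F γ) = 3 ^ (Module.finrank ℚ_[3] F + 1) := by
  obtain ⟨c, hc⟩ := hγ
  have hg : ∀ g : Ω ≃ₐ[F] Ω, g γ = γ := fun g => by rw [← hc, AlgEquiv.commutes]
  have hfix : ∀ α, FixE F γ α ↔ ∃ a : F, algebraMap F Ω a = α := by
    intro α
    constructor
    · intro h
      exact mem_range_of_fixed α fun g => h g (hg g)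
    · rintro ⟨a, rfl⟩ g _
      exact AlgEquiv.commutes g a
  have hinj : Function.Injective (Units.map (algebraMap F Ω : F →* Ω)) :=
    Units.map_injective (algebraMap F Ω).injective
  have hP : PG F γ = (⊤ : Subgroup Fˣ).map (Units.map (algebraMap F Ω : F →* Ω)) := by
    ext a
    rw [Subgroup.mem_map]
    constructor
    · rintro ⟨h0, h1, -⟩
      obtain ⟨b, hb⟩ := (hfix _).1 h1
      have hb0 : b ≠ 0 := by rintro rfl; exact h0 (by rw [← hb, map_zero])
      exact ⟨Units.mk0 b hb0, trivial, Units.ext hb⟩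
    · rintro ⟨b, -, rfl⟩
      refine ⟨Units.ne_zero _, (hfix _).2 ⟨b, rfl⟩, 1, one_ne_zero, fun g h => ?_⟩
      exact absurd ((hg g).symm.trans h) D.gne
  have hH : HG F γ = (powMonoidHom 3 : Fˣ →* Fˣ).range.map (Units.map (algebraMap F Ω : F →* Ω)) := by
    ext a
    rw [Subgroup.mem_map]
    constructor
    · rintro ⟨β, h0, h1, h3⟩
      obtain ⟨b, hb⟩ := (hfix _).1 h1
      have hb0 : b ≠ 0 := by rintro rfl; exact h0 (by rw [← hb, map_zero])
      refine ⟨(Units.mk0 b hb0) ^ 3, ⟨_, rfl⟩, Units.ext ?_⟩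
      simp [hb, h3]
    · rintro ⟨_, ⟨b, rfl⟩, rfl⟩
      refine ⟨algebraMap F Ω b, by simp, (hfix _).2 ⟨b, rfl⟩, by simp⟩
  rw [hP, hH, Subgroup.relIndex_map_map_of_injective _ _ hinj, Subgroup.relIndex_top_right,
    cube_index F hμ]

theorem relIndex_nonsplit (D : Dat F ω δ γ) (hμ : ∀ x : F, x ^ 3 = 1 → x = 1)
    (hγ : ¬ ∃ c : F, algebraMap F Ω c = γ) :
    (HG F γ).relIndex (PG F γ) = 3 ^ (Module.finrank ℚ_[3] F) := by
  obtain ⟨h, hh⟩ : ∃ h : Ω ≃ₐ[F] Ω, h γ = -γ := by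
    by_contra hcon
    push Not at hcon
    exact hγ (mem_range_of_fixed γ fun g => (D.gg g).resolve_right (hcon g))
  have hωF : ¬ ∃ a : F, algebraMap F Ω a = ω := by
    rintro ⟨a, ha⟩
    have h1 : a ^ 3 = 1 := (algebraMap F Ω).injective (by rw [map_pow, ha, D.w3, map_one])
    exact D.w1 (by rw [← ha, hμ a h1, map_one])
  have hωE : ¬ FixE F γ ω := by
    intro hw
    have hall : ∀ g : Ω ≃ₐ[F] Ω, g γ = -γ → g ω = ω ^ 2 := by
      intro g hg
      refine (D.gw g).resolve_left fun h1 => hωF ?_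
      apply mem_range_of_fixed
      intro k
      rcases D.gg k with hk | hk
      · exact hw k hk
      · rw [(D.conj1 hw hg hk).1, h1]
    apply D.hδF
    apply mem_range_of_fixed
    intro g
    rcases D.gg g with hg | hg
    · exact D.tab1 g (hw g hg) hg
    · exact D.tab4 g (hall g hg) hg
  let E : IntermediateField F Ω := IntermediateField.adjoin F {γ}
  have hγE : γ ∈ E := IntermediateField.mem_adjoin_simple_self F γ
  have hfix : ∀ α, FixE F γ α ↔ α ∈ E := by
    intro α
    constructor
    · intro h1
      exact mem_of_fixed E α fun g hg => h1 g (hg γ hγE)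
    · intro hα g hg
      exact adjoin_fix {γ} g (by rintro x hx; rw [Set.mem_singleton_iff.1 hx, hg]) α hα
  have hdeg : Module.finrank F E = 2 := by
    obtain ⟨c, hc⟩ := D.gsq
    have hirr : Irreducible (Polynomial.X ^ 2 - Polynomial.C c : Polynomial F) := by
      apply X_pow_sub_C_irreducible_of_prime Nat.prime_two
      rintro b rfl
      have : γ ^ 2 = (algebraMap F Ω b) ^ 2 := by rw [← hc, map_pow]
      rcases sq_eq_sq_iff_eq_or_eq_neg.1 this with h1 | h1
      · exact hγ ⟨b, h1.symm⟩
      · exact hγ ⟨-b, by rw [map_neg, h1]⟩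
    have hmin := minpoly.eq_of_irreducible_of_monic hirr (x := γ) (by simp [hc]) (Polynomial.monic_X_pow_sub_C _ (by norm_num))
    rw [IntermediateField.adjoin.finrank (Algebra.IsIntegral.isIntegral γ), ← hmin, Polynomial.natDegree_X_pow_sub_C]
  have hEfin : FiniteDimensional F E := Module.finite_of_finrank_pos (by omega)
  let _ : Algebra ℚ_[3] E := ((algebraMap F E).comp (algebraMap ℚ_[3] F)).toAlgebra
  have : IsScalarTower ℚ_[3] F E := IsScalarTower.of_algebraMap_eq fun _ => rfl
  have : FiniteDimensional ℚ_[3] E := Module.Finite.trans F E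
  have hdeg2 : Module.finrank ℚ_[3] E = 2 * Module.finrank ℚ_[3] F := by
    rw [← Module.finrank_mul_finrank ℚ_[3] F E, hdeg, mul_comm]
  have hμE : ∀ x : E, x ^ 3 = 1 → x = 1 := by
    intro x hx
    have hx' : (x : Ω) ^ 3 = 1 ^ 3 := by rw [one_pow]; exact_mod_cast congrArg Subtype.val hx
    obtain ⟨i, hi⟩ := D.cube_eq hx'
    rw [mul_one] at hi
    have hi3 : i = 0 ∨ i = 1 ∨ i = -1 := by clear hi; revert i; decide
    rcases hi3 with rfl | rfl | rfl
    · apply Subtype.ext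
      rw [hi, D.Wz]; rfl
    · exfalso
      rw [D.W1] at hi
      exact hωE ((hfix ω).2 (hi ▸ x.2))
    · exfalso
      rw [D.Wneg1] at hi
      apply hωE
      rw [hfix, ← D.w4, ← hi]
      exact pow_mem x.2 2
  have hcE := cube_index E hμE
  have hcF := cube_index F hμ
  rw [hdeg2] at hcE
  have hinj : Function.Injective (Units.map (algebraMap E Ω : E →* Ω)) :=
    Units.map_injective (algebraMap E Ω).injective
  have hFinj : Function.Injective (algebraMap F Ω) := (algebraMap F Ω).injective
  have hN : ∀ x : Eˣ, ∃ p : Fˣ, ∀ g : Ω ≃ₐ[F] Ω, g γ = -γ → ((x : E) : Ω) * g ((x : E) : Ω) = algebraMap F Ω p := by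
    intro x
    obtain ⟨p, hp0, hp⟩ := D.norm_mem (β := ((x : E) : Ω)) ((hfix _).2 (x : E).2) (by simp)
    exact ⟨Units.mk0 p hp0, hp⟩
  choose n hn using hN
  let N : Eˣ →* Fˣ :=
    { toFun := n
      map_one' := Units.ext (hFinj (by rw [← hn 1 h hh]; simp))
      map_mul' := fun x y => Units.ext (hFinj (by
        rw [← hn (x * y) h hh, Units.val_mul (n x), map_mul, ← hn x h hh, ← hn y h hh]
        simp only [Units.val_mul, MulMemClass.coe_mul, map_mul]
        ring)) }
  let CF := (powMonoidHom 3 : Fˣ →* Fˣ).range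
  let CE := (powMonoidHom 3 : Eˣ →* Eˣ).range
  have hNF : ∀ a : Fˣ, N (Units.map (algebraMap F E : F →* E) a) = a ^ 2 := by
    intro a
    apply Units.ext
    apply hFinj
    change algebraMap F Ω (n _) = _
    rw [← hn _ h hh]
    have : ((Units.map (algebraMap F E : F →* E) a : E) : Ω) = algebraMap F Ω a := rfl
    rw [this, AlgEquiv.commutes]
    simp [sq]
  have hidx : (CF.comap N).index = 3 ^ (Module.finrank ℚ_[3] F + 1) := by
    rw [Subgroup.index_comap, ← hcF, ← Subgroup.relIndex_sup_right, ← Subgroup.relIndex_top_right]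
    congr 1
    rw [eq_top_iff]
    intro x _
    have : x = N (Units.map (algebraMap F E : F →* E) x⁻¹) * x ^ 3 := by
      rw [hNF]
      group
    rw [this]
    exact Subgroup.mul_mem_sup ⟨_, rfl⟩ ⟨x, rfl⟩
  have hle : CE ≤ CF.comap N := by
    rintro _ ⟨x, rfl⟩
    exact ⟨N x, by simp⟩
  have hrel := Subgroup.relIndex_mul_index hle
  rw [hidx, hcE] at hrel
  have hP : PG F γ = (CF.comap N).map (Units.map (algebraMap E Ω : E →* Ω)) := by
    ext a
    rw [Subgroup.mem_map]
    constructor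
    · rintro ⟨h0, h1, p, hp0, hp⟩
      have ha := (hfix _).1 h1
      have hb0 : (⟨a, ha⟩ : E) ≠ 0 := fun h2 => h0 (congrArg Subtype.val h2)
      refine ⟨Units.mk0 _ hb0, ⟨Units.mk0 p hp0, ?_⟩, Units.ext rfl⟩
      apply Units.ext
      apply hFinj
      change _ = algebraMap F Ω (n _)
      rw [← hn _ h hh]
      simp only [powMonoidHom_apply, Units.val_pow_eq_pow_val, Units.val_mk0, map_pow]
      exact (hp h hh).symm
    · rintro ⟨b, ⟨c, hc⟩, rfl⟩
      refine ⟨Units.ne_zero _, (hfix _).2 (b : E).2, c, c.ne_zero, fun g hg => ?_⟩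
      refine (hn b g hg).trans ?_
      have : n b = c ^ 3 := hc.symm
      rw [this, Units.val_pow_eq_pow_val, map_pow]
  have hH : HG F γ = CE.map (Units.map (algebraMap E Ω : E →* Ω)) := by
    ext a
    rw [Subgroup.mem_map]
    constructor
    · rintro ⟨β, h0, h1, h3⟩
      have hb := (hfix _).1 h1
      have hb0 : (⟨β, hb⟩ : E) ≠ 0 := fun h2 => h0 (congrArg Subtype.val h2)
      refine ⟨(Units.mk0 _ hb0) ^ 3, ⟨_, rfl⟩, Units.ext ?_⟩
      exact h3
    · rintro ⟨_, ⟨b, rfl⟩, rfl⟩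
      refine ⟨((b : E) : Ω), by simp, (hfix _).2 (b : E).2, rfl⟩
  rw [hP, hH, Subgroup.relIndex_map_map_of_injective _ _ hinj]
  have h3 : 3 ^ (2 * Module.finrank ℚ_[3] F + 1) = 3 ^ Module.finrank ℚ_[3] F * 3 ^ (Module.finrank ℚ_[3] F + 1) := by
    rw [← pow_add]; congr 1; ring
  rw [h3] at hrel
  exact Nat.eq_of_mul_eq_mul_right (by positivity) hrel

end Dat
end galois_side7

section galois_side8
set_option linter.unusedSectionVars false
set_option linter.unusedVariables false
set_option linter.style.longLine false

theorem count_final (F : Type*) {Ω : Type*} [Field F] [Field Ω] [Algebra F Ω] [IsGalois F Ω] [CharZero F]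
    [IsAlgClosed Ω] [Algebra ℚ_[3] F] [FiniteDimensional ℚ_[3] F] (hμ : ∀ x : F, x ^ 3 = 1 → x = 1) :
    2 * Nat.card {K : IntermediateField F Ω // IsS3 K} + 3 = 5 * 3 ^ Module.finrank ℚ_[3] F := by
  classical
  have hcz : CharZero Ω := charZero_of_injective_algebraMap (algebraMap F Ω).injective
  have hFinj : Function.Injective (algebraMap F Ω) := (algebraMap F Ω).injective
  have hm : 0 < Module.finrank ℚ_[3] F := Module.finrank_pos
  obtain ⟨m, hmm⟩ : ∃ m, m = Module.finrank ℚ_[3] F := ⟨_, rfl⟩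
  obtain ⟨Sq, hSq⟩ : ∃ Sq : Subgroup Fˣ, Sq = (powMonoidHom 2 : Fˣ →* Fˣ).range := ⟨_, rfl⟩
  have h4 : Nat.card (Fˣ ⧸ Sq) = 4 := by rw [hSq]; exact sq_index F
  have hfinQ : Finite (Fˣ ⧸ Sq) := Nat.finite_of_card_ne_zero (by omega)
  have : Fintype (Fˣ ⧸ Sq) := Fintype.ofFinite _
  have hone : ∀ a : Fˣ, (a : Fˣ ⧸ Sq) = 1 ↔ ∃ b : Fˣ, b ^ 2 = a := by
    intro a
    rw [QuotientGroup.eq_one_iff, hSq]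
    rfl
  have hsq1 : ∀ q : Fˣ ⧸ Sq, q * q = 1 := by
    intro q
    induction q using QuotientGroup.induction_on with | _ a =>
    rw [← QuotientGroup.mk_mul, hone]
    exact ⟨a, sq a⟩
  have hmuleq : ∀ q q' : Fˣ ⧸ Sq, q * q' = 1 → q = q' := fun q q' h =>
    (eq_inv_of_mul_eq_one_left h).trans (eq_inv_of_mul_eq_one_left (hsq1 q')).symm
  have hsex : ∀ q : Fˣ ⧸ Sq, ∃ s : Ω, s ^ 2 = algebraMap F Ω (q.out : Fˣ) := fun q =>
    IsAlgClosed.exists_pow_nat_eq _ (by norm_num)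
  choose s hs using hsex
  obtain ⟨ω, hω⟩ : ∃ ω : Ω, ω ^ 2 + ω + 1 = 0 := by
    obtain ⟨r, hr⟩ := IsAlgClosed.exists_pow_nat_eq (-3 : Ω) (n := 2) (by norm_num)
    refine ⟨(-1 + r) / 2, ?_⟩
    field_simp
    linear_combination hr
  -- a square root of a nontrivial class is not in `F`
  have hsF : ∀ q : Fˣ ⧸ Sq, q ≠ 1 → ¬ ∃ a : F, algebraMap F Ω a = s q := by
    rintro q hq ⟨a, ha⟩
    apply hq
    rw [← QuotientGroup.out_eq' q, hone]
    have h1 : a ^ 2 = (q.out : Fˣ) := hFinj (by rw [map_pow, ha, hs])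
    have ha0 : a ≠ 0 := by
      rintro rfl
      exact (q.out : Fˣ).ne_zero (by rw [← h1]; simp)
    exact ⟨Units.mk0 a ha0, Units.ext h1⟩
  have hD : ∀ q : Fˣ ⧸ Sq, q ≠ 1 → Dat F ω (s q) ((ω - ω ^ 2) * s q) := fun q hq =>
    ⟨hω, ⟨_, (hs q).symm⟩, hsF q hq, rfl⟩
  have h3F : (-3 : F) ≠ 0 := by norm_num
  let q0 : Fˣ ⧸ Sq := ((Units.mk0 (-3 : F) h3F : Fˣ) : Fˣ ⧸ Sq)
  have hq0 : q0 ≠ 1 := by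
    intro h
    obtain ⟨b, hb⟩ := (hone _).1 h
    have hb' : (b : F) ^ 2 = -3 := by
      have := congrArg Units.val hb
      simpa using this
    have h1 : ((-1 + (b : F)) / 2) ^ 3 = 1 := by
      field_simp
      linear_combination (b - 3 : F) * hb'
    have h2 := hμ _ h1
    have h5 : (b : F) = 3 := by
      field_simp at h2
      linear_combination h2
    rw [h5] at hb'
    norm_num at hb'
  have hcard : ∀ q : Fˣ ⧸ Sq, q ≠ 1 →
      Nat.card {K : IntermediateField F Ω // IsS3 K ∧ s q ∈ K} * 2 + 1 = 3 ^ m + if q = q0 then 2 * 3 ^ m else 0 := by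
    intro q hq
    have D := hD q hq
    have hγ2 : ((ω - ω ^ 2) * s q) ^ 2 = algebraMap F Ω (-3 * (q.out : Fˣ)) := by
      rw [map_mul, ← hs q]
      simp only [map_neg, map_ofNat]
      linear_combination (s q) ^ 2 * (ω ^ 2 - 3 * ω + 3) * hω
    have hiff : (∃ c : F, algebraMap F Ω c = (ω - ω ^ 2) * s q) ↔ q = q0 := by
      constructor
      · rintro ⟨c, hc⟩
        rw [← hc, ← map_pow] at hγ2
        have h1 := hFinj hγ2
        have hc0 : c ≠ 0 := by
          rintro rfl
          rw [zero_pow two_ne_zero] at h1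
          exact mul_ne_zero h3F (q.out : Fˣ).ne_zero h1.symm
        symm
        apply hmuleq
        nth_rw 1 [← QuotientGroup.out_eq' q]
        rw [← QuotientGroup.mk_mul, hone]
        exact ⟨Units.mk0 c hc0, Units.ext h1⟩
      · intro h
        have h1 : q0 * q = 1 := by rw [h]; exact hsq1 q0
        nth_rw 1 [← QuotientGroup.out_eq' q] at h1
        rw [← QuotientGroup.mk_mul, hone] at h1
        obtain ⟨b, hb⟩ := h1
        have hb' : (b : F) ^ 2 = -3 * (q.out : Fˣ) := congrArg Units.val hb
        rw [← hb', map_pow] at hγ2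
        rcases sq_eq_sq_iff_eq_or_eq_neg.1 hγ2 with h2 | h2
        · exact ⟨b, h2.symm⟩
        · exact ⟨-b, by rw [map_neg, h2]⟩
    by_cases hsp : ∃ c : F, algebraMap F Ω c = (ω - ω ^ 2) * s q
    · have hR := D.relIndex_split hμ hsp
      rw [D.count_S3 (by rw [hR]; positivity), hR, if_pos (hiff.1 hsp), ← hmm]
      ring
    · have hR := D.relIndex_nonsplit hμ hsp
      rw [D.count_S3 (by rw [hR]; positivity), hR, if_neg (fun h => hsp (hiff.2 h)), ← hmm]
      ring
  have hmap : ∀ K : {K : IntermediateField F Ω // IsS3 K}, ∃ q : {q : Fˣ ⧸ Sq // q ≠ 1},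
      ∀ q' : {q : Fˣ ⧸ Sq // q ≠ 1}, q = q' ↔ s q'.1 ∈ K.1 := by
    rintro ⟨K, hK⟩
    obtain ⟨δ, hδK, ⟨a, ha⟩, hδF⟩ := exists_quadratic hK
    have ha0 : a ≠ 0 := by
      rintro rfl
      rw [map_zero] at ha
      exact hδF ⟨0, by rw [map_zero]; exact (pow_eq_zero_iff two_ne_zero).1 ha.symm |>.symm⟩
    let q : Fˣ ⧸ Sq := ((Units.mk0 a ha0 : Fˣ) : Fˣ ⧸ Sq)
    have hq : q ≠ 1 := by
      intro h
      obtain ⟨b, hb⟩ := (hone _).1 h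
      have hb' : (b : F) ^ 2 = a := congrArg Units.val hb
      rw [← hb', map_pow] at ha
      rcases sq_eq_sq_iff_eq_or_eq_neg.1 ha with h2 | h2
      · exact hδF ⟨b, h2⟩
      · exact hδF ⟨-b, by rw [map_neg, h2, neg_neg]⟩
    have hqK : s q ∈ K := by
      obtain ⟨⟨x, hx⟩, hb⟩ := QuotientGroup.mk_out_eq_mul Sq (Units.mk0 a ha0)
      have hx2 := hx
      rw [hSq] at hx2
      obtain ⟨b, rfl⟩ := hx2
      have h1 : (s q) ^ 2 = (δ * algebraMap F Ω b) ^ 2 := by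
        rw [hs, hb, mul_pow, ← ha]
        simp
      have hmem : δ * algebraMap F Ω b ∈ K := mul_mem hδK (K.algebraMap_mem _)
      rcases sq_eq_sq_iff_eq_or_eq_neg.1 h1 with h2 | h2
      · rw [h2]; exact hmem
      · rw [h2]; exact neg_mem hmem
    refine ⟨⟨q, hq⟩, ?_⟩
    rintro ⟨q', hq'⟩
    constructor
    · intro h
      rw [← h]; exact hqK
    · intro hq'K
      change s q' ∈ K at hq'K
      obtain ⟨ρ, -, hk, -⟩ := hK.rho
      have e1 := sign_iff ρ hk (s q) (hD q hq).hδ (hsF q hq) hqK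
      have e2 := sign_iff ρ hk (s q') (hD q' hq').hδ (hsF q' hq') hq'K
      obtain ⟨c, hc⟩ := mem_range_of_fixed (F := F) (s q * s q') (by
        intro g
        rw [map_mul]
        by_cases hg : g (s q) = s q
        · rw [hg, (e2 g).2 ((e1 g).1 hg)]
        · have hg' : ¬ g (s q') = s q' := fun h => hg ((e1 g).2 ((e2 g).1 h))
          rw [((hD q hq).gd g).resolve_left hg, ((hD q' hq').gd g).resolve_left hg', neg_mul_neg])
      apply Subtype.ext
      apply hmuleq
      have h1 : c ^ 2 = (q.out : Fˣ) * (q'.out : Fˣ) := hFinj (by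
        rw [map_pow, hc, map_mul, ← hs, ← hs, mul_pow])
      have hc0 : c ≠ 0 := by
        rintro rfl
        rw [zero_pow two_ne_zero] at h1
        exact mul_ne_zero (q.out : Fˣ).ne_zero (q'.out : Fˣ).ne_zero h1.symm
      change q * q' = 1
      rw [← QuotientGroup.out_eq' q, ← QuotientGroup.out_eq' q', ← QuotientGroup.mk_mul, hone]
      exact ⟨Units.mk0 c hc0, Units.ext h1⟩
  choose f hf using hmap
  have hfib : ∀ q : {q : Fˣ ⧸ Sq // q ≠ 1}, Nat.card {K : {K : IntermediateField F Ω // IsS3 K} // f K = q} =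
      Nat.card {K : IntermediateField F Ω // IsS3 K ∧ s q.1 ∈ K} := by
    intro q
    refine Nat.card_congr ?_
    exact (Equiv.subtypeEquivRight fun K => hf K q).trans
      (Equiv.subtypeSubtypeEquivSubtypeInter (fun K : IntermediateField F Ω => IsS3 K) (fun K => s q.1 ∈ K))
  have hc3 : Fintype.card {q : Fˣ ⧸ Sq // q ≠ 1} = 3 := by
    rw [Fintype.card_subtype_compl, Fintype.card_subtype_eq, ← Nat.card_eq_fintype_card, h4]
  have hfinfib : ∀ q : {q : Fˣ ⧸ Sq // q ≠ 1}, Finite {K : {K : IntermediateField F Ω // IsS3 K} // f K = q} := by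
    intro q
    apply Nat.finite_of_card_ne_zero
    rw [hfib]
    intro h
    have h1 := hcard q.1 q.2
    rw [h] at h1
    have h2 : 3 ^ 1 ≤ 3 ^ m := Nat.pow_le_pow_right (by norm_num) (by omega)
    omega
  have hsum : Nat.card {K : IntermediateField F Ω // IsS3 K} =
      ∑ q : {q : Fˣ ⧸ Sq // q ≠ 1}, Nat.card {K : IntermediateField F Ω // IsS3 K ∧ s q.1 ∈ K} := by
    rw [← Nat.card_congr (Equiv.sigmaFiberEquiv f), Nat.card_sigma]
    exact Finset.sum_congr rfl fun q _ => hfib q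
  have hsum2 : ∑ q : {q : Fˣ ⧸ Sq // q ≠ 1},
      (Nat.card {K : IntermediateField F Ω // IsS3 K ∧ s q.1 ∈ K} * 2 + 1) = 3 * 3 ^ m + 2 * 3 ^ m := by
    have h1 : ∀ q : {q : Fˣ ⧸ Sq // q ≠ 1},
        Nat.card {K : IntermediateField F Ω // IsS3 K ∧ s q.1 ∈ K} * 2 + 1 =
          3 ^ m + if q = ⟨q0, hq0⟩ then 2 * 3 ^ m else 0 := by
      intro q
      rw [hcard q.1 q.2]
      simp only [Subtype.ext_iff]
    rw [Finset.sum_congr rfl fun q _ => h1 q, Finset.sum_add_distrib, Finset.sum_ite_eq']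
    simp [hc3]
  rw [Finset.sum_add_distrib, ← Finset.sum_mul, ← hsum] at hsum2
  simp only [Finset.sum_const, Finset.card_univ, hc3, smul_eq_mul] at hsum2
  rw [← hmm]
  omega

end galois_side8

theorem stmt3 (F : Type*) [Field F] [Algebra ℚ_[3] F] [FiniteDimensional ℚ_[3] F]
    (m : ℕ) (hm : Module.finrank ℚ_[3] F = m)
    (hμ3 : ¬ ∃ ζ : F, IsPrimitiveRoot ζ 3) :
    nu F (Equiv.Perm (Fin 3)) = (5 * 3 ^ m - 3) / 2 ∧
    nu F (Equiv.Perm (Fin 3)) = 3 ^ m + (3 ^ (m + 1) - 3) / 2 := by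
  have hcz : CharZero F := charZero_of_injective_algebraMap (algebraMap ℚ_[3] F).injective
  have hμ : ∀ x : F, x ^ 3 = 1 → x = 1 := by
    intro x hx
    by_contra hne
    exact hμ3 ⟨x, IsPrimitiveRoot.iff_orderOf.2 (orderOf_eq_prime (p := 3) hx hne)⟩
  have hG : IsGalois F (AlgebraicClosure F) := ⟨⟩
  have h := count_final F (Ω := AlgebraicClosure F) hμ
  have h2 : nu F (Equiv.Perm (Fin 3)) = Nat.card {K : IntermediateField F (AlgebraicClosure F) // IsS3 K} := rfl
  rw [← h2, hm] at h
  have h3 : 1 ≤ 3 ^ m := Nat.one_le_pow _ _ (by norm_num)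
  rw [pow_succ]
  omega
end

section
/- Let p be a prime with p ≥ 3 and let F be a finite extension of ℚ_p. Then there is no Galois extension of F with Galois group isomorphic to the symmetric group S₄ and no Galois extension of F with Galois group isomorphic to the alternating group A₄; that is, ν(F,S₄) = ν(F,A₄) = 0. -/
theorem isSquare_one_add {L : Type*} [NontriviallyNormedField L] [IsUltrametricDist L]
    [CompleteSpace L] (h2 : ‖(2 : L)‖ = 1) (x : L) (hx : ‖x‖ < 1) : IsSquare (1 + x) := by
  have h20 : (2 : L) ≠ 0 := by
    intro h; rw [h] at h2; simp at h2
  let s : Set L := Metric.closedBall 0 ‖x‖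
  let f : L → L := fun y => (x - y ^ 2) / 2
  have hs : IsComplete s := Metric.isClosed_closedBall.isComplete
  have hsf : Set.MapsTo f s s := by
    intro y hy
    simp only [s, mem_closedBall_zero_iff] at hy ⊢
    simp only [f, norm_div, h2, div_one]
    rw [sub_eq_add_neg]
    refine (IsUltrametricDist.norm_add_le_max _ _).trans (max_le le_rfl ?_)
    rw [norm_neg, norm_pow]
    nlinarith [norm_nonneg y]
  have hc : ContractingWith ‖x‖₊ (hsf.restrict f s s) := by
    refine ⟨by exact_mod_cast hx, LipschitzWith.of_dist_le_mul ?_⟩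
    rintro ⟨y, hy⟩ ⟨z, hz⟩
    simp only [s, mem_closedBall_zero_iff] at hy hz
    simp only [Subtype.dist_eq, Set.MapsTo.val_restrict_apply, dist_eq_norm, coe_nnnorm, f]
    have : (x - y ^ 2) / 2 - (x - z ^ 2) / 2 = - ((y + z) * (y - z)) / 2 := by ring
    rw [this, norm_div, h2, div_one, norm_neg, norm_mul]
    gcongr
    exact (IsUltrametricDist.norm_add_le_max _ _).trans (max_le hy hz)
  obtain ⟨y, hy, hy', -⟩ := hc.exists_fixedPoint' hs hsf (x := 0) (by simp [s]) (edist_ne_top _ _)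
  refine ⟨1 + y, ?_⟩
  have h3 : (x - y ^ 2) / 2 = y := hy'
  field_simp at h3
  linear_combination h3

set_option maxHeartbeats 1000000 in
open scoped NormedField Valued in
theorem local_squares {L : Type*} [NontriviallyNormedField L] [IsUltrametricDist L]
    [ProperSpace L] (h2 : ‖(2 : L)‖ = 1) :
    (∃ a : L, ¬ IsSquare a) ∧ ∃ w u : L, w ≠ 0 ∧ u ≠ 0 ∧ ∀ a : L, a ≠ 0 →
      IsSquare a ∨ IsSquare (a * u) ∨ IsSquare (a * w) ∨ IsSquare (a * w * u) := by
  have hcomp : CompactSpace 𝒪[L] := by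
    have h : (𝒪[L] : Set L) = Metric.closedBall 0 1 := by
      ext x; simp [Valued.integer.mem_iff]
    apply isCompact_iff_compactSpace.mp
    rw [h]
    exact isCompact_closedBall 0 1
  let : (Valued.v : Valuation L NNReal).RankOne :=
    inferInstanceAs (NormedField.valuation (K := L)).RankOne
  obtain ⟨-, hdvr, hfin⟩ := Valued.integer.compactSpace_iff_completeSpace_and_isDiscreteValuationRing_and_finite_residueField
    (K := L) |>.mp hcomp
  have : Fintype 𝓀[L] := Fintype.ofFinite _
  have h20 : (2 : L) ≠ 0 := by
    intro h; rw [h] at h2; simp at h2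
  have hu2 : IsUnit (2 : 𝒪[L]) := Valued.integer.isUnit_iff_norm_eq_one.mpr h2
  have hchar : ringChar 𝓀[L] ≠ 2 := by
    intro h
    have h0 : (2 : 𝓀[L]) = 0 := by
      have := ringChar.Nat.cast_ringChar (R := 𝓀[L])
      rw [h] at this; exact_mod_cast this
    have h1 := hu2.map (IsLocalRing.residue 𝒪[L])
    rw [map_ofNat, h0] at h1
    exact not_isUnit_zero h1
  obtain ⟨u', hu'⟩ := FiniteField.exists_nonsquare hchar
  obtain ⟨u, rfl⟩ := IsLocalRing.residue_surjective u'
  obtain ⟨w, hw⟩ := IsDiscreteValuationRing.exists_irreducible 𝒪[L]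
  have key : ∀ x : 𝒪[L], IsUnit x → IsSquare (IsLocalRing.residue 𝒪[L] x) → IsSquare (x : L) := by
    rintro x hx ⟨t, ht⟩
    obtain ⟨s, rfl⟩ := IsLocalRing.residue_surjective t
    have hs : IsUnit s := by
      rw [← IsLocalRing.residue_ne_zero_iff_isUnit] at hx ⊢
      intro h; rw [h] at ht; exact hx (by simpa using ht)
    have hs1 : ‖(s : L)‖ = 1 := Valued.integer.isUnit_iff_norm_eq_one.mp hs
    have hs0 : (s : L) ≠ 0 := by intro h; rw [h] at hs1; simp at hs1
    have h3 : ¬ IsUnit (x - s * s) := by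
      rw [← IsLocalRing.residue_ne_zero_iff_isUnit, map_sub, map_mul, ht]
      simp
    have h4 : ‖(x - s * s : L)‖ < 1 := by
      refine lt_of_le_of_ne (Valued.integer.norm_le_one (x - s * s)) ?_
      intro h; exact h3 (Valued.integer.isUnit_iff_norm_eq_one.mpr h)
    obtain ⟨r, hr⟩ := isSquare_one_add h2 ((x - s * s : L) / (s * s)) (by
      rw [norm_div, norm_mul, hs1]; simpa using h4)
    refine ⟨s * r, ?_⟩
    have : (x : L) = s * s * (1 + (x - s * s : L) / (s * s)) := by field_simp; ring
    rw [this, hr]; ring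
  have hur : IsLocalRing.residue 𝒪[L] u ≠ 0 := by
    intro h; rw [h] at hu'; simp at hu'
  have huu : IsUnit u := IsLocalRing.residue_ne_zero_iff_isUnit _ |>.mp hur
  have key2 : ∀ x : 𝒪[L], IsUnit x → IsSquare (x : L) ∨ IsSquare ((x * u : L)) := by
    intro x hx
    by_cases h : IsSquare (IsLocalRing.residue 𝒪[L] x)
    · exact Or.inl (key x hx h)
    · right
      refine key (x * u) (hx.mul huu) ?_
      have hx0 := (IsLocalRing.residue_ne_zero_iff_isUnit _).mpr hx
      classical
      rw [map_mul, ← quadraticChar_one_iff_isSquare (mul_ne_zero hx0 hur), map_mul,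
        quadraticChar_neg_one_iff_not_isSquare.mpr h,
        quadraticChar_neg_one_iff_not_isSquare.mpr hu']
      norm_num
  have hw0 : (w : L) ≠ 0 := by
    intro h; exact hw.ne_zero (Subtype.ext h)
  have key3 : ∀ x : 𝒪[L], x ≠ 0 → IsSquare (x : L) ∨ IsSquare (x * u : L) ∨
      IsSquare (x * w : L) ∨ IsSquare (x * w * u : L) := by
    intro x hx
    obtain ⟨n, v, rfl⟩ := IsDiscreteValuationRing.eq_unit_mul_pow_irreducible hx hw
    have hv := key2 v v.isUnit
    push_cast
    obtain ⟨m, rfl | rfl⟩ := Nat.even_or_odd' n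
    · rcases hv with ⟨r, hr⟩ | ⟨r, hr⟩
      · left; exact ⟨r * w ^ m, by rw [hr]; ring⟩
      · right; left; exact ⟨r * w ^ m, by linear_combination (w : L) ^ (2 * m) * hr⟩
    · rcases hv with ⟨r, hr⟩ | ⟨r, hr⟩
      · right; right; left; exact ⟨r * w ^ (m + 1), by rw [hr]; ring⟩
      · right; right; right
        exact ⟨r * w ^ (m + 1), by linear_combination (w : L) ^ (2 * m + 2) * hr⟩
  have hu0 : (u : L) ≠ 0 := by
    intro h; exact huu.ne_zero (Subtype.ext h)
  refine ⟨⟨w, ?_⟩, w, u, hw0, hu0, ?_⟩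
  · rintro ⟨r, hr⟩
    have hr1 : ‖r‖ ≤ 1 := by
      have := Valued.integer.norm_le_one w
      rw [show ‖w‖ = ‖(w : L)‖ from rfl, hr, norm_mul] at this
      nlinarith [norm_nonneg r]
    exact hw.not_isSquare ⟨⟨r, Valued.integer.mem_iff.mpr hr1⟩, Subtype.ext hr⟩
  · intro a ha
    rcases le_total ‖a‖ 1 with h | h
    · exact key3 ⟨a, Valued.integer.mem_iff.mpr h⟩ (by intro h; exact ha (congrArg Subtype.val h))
    · have h' : ‖a⁻¹‖ ≤ 1 := by rw [norm_inv]; exact inv_le_one_of_one_le₀ h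
      have := key3 ⟨a⁻¹, Valued.integer.mem_iff.mpr h'⟩
        (by intro h; exact inv_ne_zero ha (congrArg Subtype.val h))
      have e : ∀ y : L, IsSquare (a⁻¹ * y) → IsSquare (a * y) := by
        rintro y ⟨r, hr⟩
        exact ⟨a * r, by field_simp at hr; rw [hr]; ring⟩
      simp only at this
      have e1 := e 1
      simp only [mul_one] at e1
      rw [mul_assoc a]
      rw [mul_assoc a⁻¹] at this
      exact this.imp e1 (Or.imp (e _) (Or.imp (e _) (e _)))

theorem padic_squares (p : ℕ) [Fact p.Prime] (hp : 3 ≤ p) (L : Type*) [Field L] [Algebra ℚ_[p] L]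
    [FiniteDimensional ℚ_[p] L] :
    (∃ a : L, ¬ IsSquare a) ∧ ∃ w u : L, w ≠ 0 ∧ u ≠ 0 ∧ ∀ a : L, a ≠ 0 →
      IsSquare a ∨ IsSquare (a * u) ∨ IsSquare (a * w) ∨ IsSquare (a * w * u) := by
  let := spectralNorm.nontriviallyNormedField ℚ_[p] L
  let : NormedAlgebra ℚ_[p] L := spectralNorm.normedAlgebra ℚ_[p] L
  have : IsUltrametricDist L := IsUltrametricDist.isUltrametricDist_of_isNonarchimedean_norm
    (isNonarchimedean_spectralNorm (K := ℚ_[p]) (L := L))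
  have : ProperSpace L := FiniteDimensional.proper ℚ_[p] L
  apply local_squares
  have h : ‖(2 : ℚ_[p])‖ = 1 := by
    have := (Padic.norm_natCast_eq_one_iff (p := p) (n := 2)).mpr
      ((Nat.coprime_primes (Fact.out) Nat.prime_two).mpr (by omega))
    exact_mod_cast this
  have h3 := norm_algebraMap' L (2 : ℚ_[p])
  rw [map_ofNat] at h3
  rw [h3, h]

theorem isSquare_cancel {L : Type*} [Field L] {a b c : L} (hc : c ≠ 0)
    (h1 : IsSquare (a * c)) (h2 : IsSquare (b * c)) : IsSquare (a * b) := by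
  obtain ⟨r, hr⟩ := h1
  obtain ⟨s, hs⟩ := h2
  refine ⟨r * s / c, ?_⟩
  field_simp
  linear_combination (b * c) * hr + r * r * hs

/-- If the square class group is generated by two elements, then any `b, c` that are independent
modulo squares generate it. -/
theorem square_classes {L : Type*} [Field L] (w u : L) (hw : w ≠ 0) (hu : u ≠ 0)
    (H : ∀ a : L, a ≠ 0 →
      IsSquare a ∨ IsSquare (a * u) ∨ IsSquare (a * w) ∨ IsSquare (a * w * u))
    (a b c : L) (ha : a ≠ 0) (hb : ¬ IsSquare b) (hc : ¬ IsSquare c) (hbc : ¬ IsSquare (b * c)) :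
    IsSquare a ∨ IsSquare (a * b) ∨ IsSquare (a * c) ∨ IsSquare (a * (b * c)) := by
  have nz : ∀ x : L, ¬ IsSquare x → x ≠ 0 := by
    rintro x hx rfl; exact hx (by simp)
  have hb0 := nz b hb
  have hc0 := nz c hc
  by_contra! hcon
  obtain ⟨k1, k2, k3, k4⟩ := hcon
  -- `1, b, c, bc, a` are pairwise distinct square classes
  have H' : ∀ a : L, a ≠ 0 → ∃ i : Fin 4,
      IsSquare (a * ![1, u, w, w * u] i) := by
    intro a ha
    rcases H a ha with h | h | h | h
    · exact ⟨0, by simpa using h⟩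
    · exact ⟨1, by simpa using h⟩
    · exact ⟨2, by simpa using h⟩
    · exact ⟨3, by simpa [mul_assoc] using h⟩
  have hz : ∀ i : Fin 4, ![1, u, w, w * u] i ≠ 0 := by
    intro i; fin_cases i <;> simp [hw, hu]
  · choose f hf using H'
    have hy : ∀ j : Fin 5, ![1, b, c, b * c, a] j ≠ 0 := by
      intro j; fin_cases j <;> simp [ha, hb0, hc0]
    obtain ⟨i, j, hij, hfij⟩ := Fintype.exists_ne_map_eq_of_card_lt
      (fun j : Fin 5 => f _ (hy j)) (by simp)
    have h1 := hf _ (hy i)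
    have h2 := hf _ (hy j)
    rw [hfij] at h1
    have h3 := isSquare_cancel (hz _) h1 h2
    have hbbc : ¬ IsSquare (b * (b * c)) := by
      rintro ⟨r, hr⟩; exact hc ⟨r / b, by field_simp; linear_combination hr⟩
    have hcbc : ¬ IsSquare (c * (b * c)) := by
      rintro ⟨r, hr⟩; exact hb ⟨r / c, by field_simp; linear_combination hr⟩
    have hbbc' : ¬ IsSquare ((b * c) * b) := by rwa [mul_comm]
    have hcbc' : ¬ IsSquare ((b * c) * c) := by rwa [mul_comm]
    have k2' : ¬ IsSquare (b * a) := by rwa [mul_comm]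
    have k3' : ¬ IsSquare (c * a) := by rwa [mul_comm]
    have k4' : ¬ IsSquare (b * c * a) := by rwa [mul_comm]
    have hbc' : ¬ IsSquare (c * b) := by rwa [mul_comm]
    fin_cases i <;> fin_cases j <;> simp at hij h3 <;> contradiction

theorem no_A4 (p : ℕ) [Fact p.Prime] (hp : 3 ≤ p) (K : Type*) [Field K] [Algebra ℚ_[p] K]
    [FiniteDimensional ℚ_[p] K] (f : alternatingGroup (Fin 4) →* (K ≃ₐ[ℚ_[p]] K))
    (hf : Function.Injective f) : False := by
  have : CharZero K := charZero_of_injective_algebraMap (algebraMap ℚ_[p] K).injective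
  obtain ⟨s, t, hs, ht, hst, hs1, ht1, hst1⟩ : ∃ s t : alternatingGroup (Fin 4), s * s = 1 ∧
    t * t = 1 ∧ s * t = t * s ∧ s ≠ 1 ∧ t ≠ 1 ∧ s ≠ t := by decide
  have hgen : ∀ g : alternatingGroup (Fin 4), ∃ x y : alternatingGroup (Fin 4),
    x * x * x = 1 ∧ y * y * y = 1 ∧ x * y = g := by decide +kernel
  -- eigenvectors
  have hss : ∀ z, f s (f s z) = z := fun z => by
    rw [← AlgEquiv.mul_apply, ← map_mul, hs, map_one, AlgEquiv.one_apply]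
  have htt : ∀ z, f t (f t z) = z := fun z => by
    rw [← AlgEquiv.mul_apply, ← map_mul, ht, map_one, AlgEquiv.one_apply]
  have hts : ∀ z, f t (f s z) = f s (f t z) := fun z => by
    rw [← AlgEquiv.mul_apply, ← map_mul, ← hst, map_mul, AlgEquiv.mul_apply]
  have hlin : LinearIndependent K (fun g : alternatingGroup (Fin 4) => (f g : K → K)) := by
    have h1 := linearIndependent_monoidHom K K
    have : Function.Injective (fun g : alternatingGroup (Fin 4) =>
        (((f g : K ≃ₐ[ℚ_[p]] K) : K →* K))) := by
      intro g h hgh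
      apply hf
      ext z
      exact DFunLike.congr_fun hgh z
    exact h1.comp _ this
  have hlin4 : ∀ ε δ : K, ε ≠ 0 → ∃ z, z + ε * f s z + δ * f t z + ε * δ * f s (f t z) ≠ 0 := by
    intro ε δ _
    by_contra! hcon
    have inj : Function.Injective ![1, s, t, s * t] := by
      have a1 : s * t ≠ 1 := fun h => hst1 (by
        calc s = s * (t * t) := by rw [ht, mul_one]
          _ = t := by rw [← mul_assoc, h, one_mul])
      have a2 : s * t ≠ s := fun h => ht1 (by simpa using h)
      have a3 : s * t ≠ t := fun h => hs1 (by simpa using h)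
      intro i j hij
      fin_cases i <;> fin_cases j <;>
        simp [hs1, ht1, hst1, a1, a2, a3, hs1.symm, ht1.symm, hst1.symm, a1.symm, a2.symm, a3.symm,
          -mul_eq_left, -mul_eq_right, -left_eq_mul, -right_eq_mul] at hij ⊢
    have h2 := hlin.comp _ inj
    rw [Fintype.linearIndependent_iff] at h2
    have := h2 ![1, ε, δ, ε * δ] (by
      ext z
      simpa [Fin.sum_univ_four] using hcon z) 0
    simp at this
  obtain ⟨z, hz⟩ := hlin4 1 (-1) one_ne_zero
  obtain ⟨z', hz'⟩ := hlin4 (-1) 1 (by simp)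
  obtain ⟨β, hβ, hsβ, htβ⟩ : ∃ β : K, β ≠ 0 ∧ f s β = β ∧ f t β = -β :=
    ⟨_, hz, by simp [hss, htt, hts]; ring, by simp [hss, htt, hts]; ring⟩
  obtain ⟨γ, hγ, hsγ, htγ⟩ : ∃ β : K, β ≠ 0 ∧ f s β = -β ∧ f t β = β :=
    ⟨_, hz', by simp [hss, htt, hts]; ring, by simp [hss, htt, hts]; ring⟩
  clear hz hz' hlin4 hlin
  let F := IntermediateField.fixedField (F := ℚ_[p]) (E := K) f.range
  let L := IntermediateField.fixedField (F := ℚ_[p]) (E := K) (Subgroup.closure {f s, f t})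
  have memL : ∀ x : K, x ∈ L ↔ f s x = x ∧ f t x = x := by
    intro x
    rw [IntermediateField.mem_fixedField_iff]
    constructor
    · intro h
      exact ⟨h _ (Subgroup.subset_closure (by simp)), h _ (Subgroup.subset_closure (by simp))⟩
    · rintro ⟨h1, h2⟩ g hg
      induction hg using Subgroup.closure_induction with
      | mem y hy => rcases hy with rfl | rfl <;> assumption
      | one => rfl
      | mul y w _ _ h3 h4 => rw [AlgEquiv.mul_apply, h4, h3]
      | inv y _ h3 =>
        have : y⁻¹ (y x) = x := by rw [← AlgEquiv.mul_apply]; simp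
        rwa [h3] at this
  obtain ⟨⟨a, ha⟩, -⟩ := padic_squares p hp F
  obtain ⟨-, w, u, hw, hu, H⟩ := padic_squares p hp L
  have ha0 : a ≠ 0 := by rintro rfl; exact ha (by simp)
  have hafix : ∀ g, f g (a : K) = a := fun g =>
    (IntermediateField.mem_fixedField_iff _ _).mp a.2 _ ⟨g, rfl⟩
  have haK : ¬ IsSquare (a : K) := by
    rintro ⟨r, hr⟩
    have hr0 : r ≠ 0 := by
      rintro rfl; exact ha0 (Subtype.ext (by simpa using hr))
    have hpm : ∀ g, f g r = r ∨ f g r = -r := by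
      intro g
      have := hafix g
      rw [hr, map_mul] at this
      exact mul_self_eq_mul_self_iff.mp this
    have h3 : ∀ g, g * g * g = 1 → f g r = r := by
      intro g hg
      rcases hpm g with h | h
      · exact h
      · exfalso
        have h5 : f (g * g * g) r = r := by rw [hg]; simp
        rw [map_mul, map_mul, AlgEquiv.mul_apply, AlgEquiv.mul_apply, h, map_neg, h, neg_neg, h]
          at h5
        exact hr0 (self_eq_neg.mp h5.symm)
    have hrF : r ∈ F := by
      rw [IntermediateField.mem_fixedField_iff]
      rintro _ ⟨g, rfl⟩
      obtain ⟨x, y, hx, hy, rfl⟩ := hgen g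
      rw [map_mul, AlgEquiv.mul_apply, h3 y hy, h3 x hx]
    exact ha ⟨⟨r, hrF⟩, Subtype.ext hr⟩
  -- squares of eigenvectors lie in `L`
  let a' : L := ⟨a, (memL _).mpr ⟨hafix s, hafix t⟩⟩
  let b : L := ⟨β * β, (memL _).mpr (by simp [hsβ, htβ])⟩
  let c : L := ⟨γ * γ, (memL _).mpr (by simp [hsγ, htγ])⟩
  have nsq : ∀ x : L, ∀ y : K, y ≠ 0 → (x : K) = y * y → (f s y = -y ∨ f t y = -y) →
      ¬ IsSquare x := by
    rintro x y hy hxy h ⟨r, hr⟩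
    have h1 : y * y = r * r := by rw [← hxy, hr]; rfl
    have hyL : f s y = y ∧ f t y = y := by
      rw [← memL]
      rcases mul_self_eq_mul_self_iff.mp h1 with rfl | rfl
      · exact r.2
      · exact neg_mem r.2
    rw [hyL.1, hyL.2, or_self] at h
    exact hy (self_eq_neg.mp h)
  have key := square_classes w u hw hu H a' b c (by
      intro h; exact ha0 (Subtype.ext (congrArg (fun x : L => (x : K)) h)))
    (nsq b β hβ rfl (Or.inr htβ)) (nsq c γ hγ rfl (Or.inl hsγ))
    (nsq (b * c) (β * γ) (mul_ne_zero hβ hγ) (by simp [b, c]; ring) (Or.inl (by simp [hsβ, hsγ])))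
  have fin : ∀ y : K, y ≠ 0 → IsSquare ((a : K) * (y * y)) → False := by
    rintro y hy ⟨r, hr⟩
    exact haK ⟨r / y, by field_simp; linear_combination hr⟩
  rcases key with h | h | h | h
  · exact haK (h.map L.val)
  · exact fin β hβ (h.map L.val)
  · exact fin γ hγ (h.map L.val)
  · refine fin (β * γ) (mul_ne_zero hβ hγ) ?_
    rw [mul_mul_mul_comm]
    exact h.map L.val

theorem no_A4_rel (p : ℕ) [Fact p.Prime] (hp : 3 ≤ p)
    (F : Type*) [Field F] [Algebra ℚ_[p] F] [FiniteDimensional ℚ_[p] F] (G : Type*) [Group G]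
    (i : alternatingGroup (Fin 4) →* G) (hi : Function.Injective i)
    (K : Type*) [Field K] [Algebra F K] [FiniteDimensional F K] (e : (K ≃ₐ[F] K) ≃* G) :
    False := by
  let : Algebra ℚ_[p] K := ((algebraMap F K).comp (algebraMap ℚ_[p] F)).toAlgebra
  have : IsScalarTower ℚ_[p] F K := IsScalarTower.of_algebraMap_eq fun _ => rfl
  have : FiniteDimensional ℚ_[p] K := FiniteDimensional.trans ℚ_[p] F K
  refine no_A4 p hp K (((AlgEquiv.restrictScalarsHom ℚ_[p]).comp e.symm.toMonoidHom).comp i) ?_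
  intro x y hxy
  exact hi (e.symm.injective (AlgEquiv.restrictScalars_injective ℚ_[p] hxy))

theorem nu_eq_zero (p : ℕ) [Fact p.Prime] (hp : 3 ≤ p)
    (F : Type*) [Field F] [Algebra ℚ_[p] F] [FiniteDimensional ℚ_[p] F] (G : Type*) [Group G]
    (i : alternatingGroup (Fin 4) →* G) (hi : Function.Injective i) : nu F G = 0 := by
  unfold nu
  rw [Nat.card_eq_zero]
  left
  constructor
  rintro ⟨K, hfd, -, ⟨e⟩⟩
  exact no_A4_rel p hp F G i hi K e

theorem stmt4 (p : ℕ) [Fact p.Prime] (hp : 3 ≤ p)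
    (F : Type*) [Field F] [Algebra ℚ_[p] F] [FiniteDimensional ℚ_[p] F] :
    nu F (Equiv.Perm (Fin 4)) = 0 ∧ nu F (alternatingGroup (Fin 4)) = 0 :=
  ⟨nu_eq_zero p hp F _ (alternatingGroup (Fin 4)).subtype Subtype.val_injective,
    nu_eq_zero p hp F _ (MonoidHom.id _) Function.injective_id⟩
end
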